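/- Let X ⊂ P^N be a non-degenerate smooth projective variety of dimension n with dim SX ≤ 2n − 1. Then every hyperplane section of X is reduced. If moreover dim SX ≤ 2n − 2, then every hyperplane section of X is normal. -/

import Mathlib

/-!
Throughout, projective sets are handled through their affine cones and all dimensions through
chains of primes of polynomial rings. Let `η` be the linear form of the hyperplane, `I` the ideal
of the cone over `X`, of dimension `n + 1`, and `e` a bound for the dimension of the cone over
`SX`.

*Tangency bound* (`propT`). Let a conical subvariety `q` of the cone over `X` have dimension at
least `k`, and let `η` vanish on the tangent space at each of its non-zero points. Then
`k + n + 1 ≤ e`. The difference map `(y, x) ↦ x - y` on `q × cone X` lands in the cone over `SX`,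
and `η` does not vanish on its image, so the part of the closure of the image lying in `η = 0` has
dimension at most `e - 1` and is cut down to the origin by `e - 1` linear forms (`exists_sop`).
Choose `p` in the cone over `X` with `η p = 1`; adding multiples of `η` makes these forms vanish at
`p`. If `k + n + 1 > e`, Krull's height theorem (`exists_chain_over`) gives a conical subvariety `Q`
of the product, of dimension at least `2`, through `(0, p)`, on which the modified forms vanish at
`x - y`. By `core_le_of_section` the differences `x - y` on `Q` lie on the line of `p`, that is,
`x = y + η(x - y) p`. Cutting `Q` further with `η(x - y) = 0` leaves a non-zero point `(y, y)`, and a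
first-order Taylor expansion (`taylor_tangent`) shows that `p` is tangent to the cone at `y`,
against `η p = 1`.

*Smooth points.* Non-tangency is an open condition (`exists_det_poly`), so the hyperplane section is
smooth at some point of each subvariety of it that is large compared with `e`
(`exists_smooth_point`).

*Local algebra.* The local ring at a smooth point has a regular system of parameters
(`LocAt.exists_regSys`). Its initial forms live in a polynomial ring (`RegSys.quasiRegular`), which
makes it a domain that is integrally closed (`RegSys.isDomain`, `RegSys.aiNormal`), and it has depth
equal to the number of parameters (`RegSys.depthGE`). Hence, in the local ring of `X` at a point, an
annihilator modulo `η`, or modulo `η` and a non-zero-divisor `q`, lies in a prime defining a large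
subvariety (`RegSys.exists_prime_one`, `RegSys.exists_prime_two`).

*Conclusion.* This is Serre's criterion for reducedness (`R₀` and `S₁`) and for normality (`R₁` and
`S₂`), carried out by hand. If `c` is nilpotent on the section but not zero near `v`, the annihilator
of `c` lies in the prime of a large subvariety through `v`; at a smooth point of that subvariety the
class of `c` vanishes, so some element outside the prime annihilates it, a contradiction
(`satIdeal_isRadical`). The same argument for an integral fraction `p / q` and the annihilator of `p`
modulo `q` gives integral closedness in the total ring of fractions (`iNormal_section`). A reduced
local ring with this property is a domain (`INormal.isDomain`), and each prime not containing the
irrelevant ideal lies under the maximal ideal of a point other than the origin, so its local ring is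
a localization of a normal domain (`projNormal_section`).
-/

open MvPolynomial

noncomputable section

/-- Affine space `ℂ^{N+1}`. -/
abbrev Aff (N : ℕ) := Fin (N + 1) → ℂ

/-- Projective `N`-space over `ℂ`. -/
abbrev Proj (N : ℕ) := Projectivization ℂ (Aff N)

/-- Zariski-closed subsets of affine space: common zero loci of polynomials. -/
def zClosed {N : ℕ} (V : Set (Aff N)) : Prop :=
  ∃ S : Set (MvPolynomial (Fin (N + 1)) ℂ), V = {x | ∀ p ∈ S, eval x p = 0}

/-- Zariski closure in affine space. -/
def zClosure {N : ℕ} (V : Set (Aff N)) : Set (Aff N) :=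
  ⋂₀ {C | zClosed C ∧ V ⊆ C}

/-- Irreducibility of a subset of affine space w.r.t. the Zariski topology. -/
def zIrred {N : ℕ} (V : Set (Aff N)) : Prop :=
  V.Nonempty ∧ ∀ C₁ C₂ : Set (Aff N), zClosed C₁ → zClosed C₂ → V ⊆ C₁ ∪ C₂ →
    V ⊆ C₁ ∨ V ⊆ C₂

/-- Dimension of a subset of affine space: Krull dimension of the poset of
irreducible Zariski-closed subsets contained in it. -/
def adim {N : ℕ} (V : Set (Aff N)) : WithBot ℕ∞ :=
  Order.krullDim {W : Set (Aff N) // zClosed W ∧ zIrred W ∧ W ⊆ V}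

/-- The affine cone over a set of projective points. -/
def cone {N : ℕ} (X : Set (Proj N)) : Set (Aff N) :=
  {v | ∃ hv : v ≠ 0, Projectivization.mk ℂ v hv ∈ X} ∪ {0}

/-- A projectively closed set. -/
def pClosed {N : ℕ} (X : Set (Proj N)) : Prop := zClosed (cone X)

/-- Projective Zariski closure. -/
def pClosure {N : ℕ} (X : Set (Proj N)) : Set (Proj N) :=
  {z | z.rep ∈ zClosure (cone X)}

/-- The vanishing ideal (as a set of polynomials) of a subset of `ℂ^ι`. -/
def vanishSet {ι : Type} [Fintype ι] (V : Set (ι → ℂ)) : Set (MvPolynomial ι ℂ) :=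
  {p | ∀ v ∈ V, eval v p = 0}

/-- The differential of a polynomial at a point, as a linear form. -/
def polyDiff {ι : Type} [Fintype ι] (v : ι → ℂ) (p : MvPolynomial ι ℂ) :
    (ι → ℂ) →ₗ[ℂ] ℂ :=
  ∑ i, eval v (pderiv i p) • LinearMap.proj i

/-- The (embedded, affine) Zariski tangent space of `V` at `v`. -/
def tangentAt {ι : Type} [Fintype ι] (V : Set (ι → ℂ)) (v : ι → ℂ) :
    Submodule ℂ (ι → ℂ) :=
  ⨅ p ∈ vanishSet V, LinearMap.ker (polyDiff v p)

/-- The affine cone over the embedded projective tangent space of `X` at `x`. -/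
def projTangent {N : ℕ} (X : Set (Proj N)) (x : Proj N) : Submodule ℂ (Aff N) :=
  tangentAt (cone X) x.rep

/-- The embedded projective tangent space `T_x X ⊆ ℙ^N` as a set of points. -/
def tangentSet {N : ℕ} (X : Set (Proj N)) (x : Proj N) : Set (Proj N) :=
  {z | z.submodule ≤ projTangent X x}

/-- `X` is a closed irreducible smooth projective variety of dimension `n`
(the affine cone has dimension `n+1`, and every embedded tangent space has
linear dimension `n+1`). -/
def SmoothVariety {N : ℕ} (X : Set (Proj N)) (n : ℕ) : Prop :=
  pClosed X ∧ zIrred (cone X) ∧ adim (cone X) = ((n + 1 : ℕ) : WithBot ℕ∞) ∧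
    ∀ x ∈ X, Module.finrank ℂ (projTangent X x) = n + 1

/-- Non-degeneracy: `X` is contained in no hyperplane. -/
def Nondeg {N : ℕ} (X : Set (Proj N)) : Prop :=
  Submodule.span ℂ (cone X) = ⊤

/-- The projective line through two points (all of `ℙ^N` if they coincide... it
is the projectivization of the span of the two representatives). -/
def pline {N : ℕ} (x y : Proj N) : Set (Proj N) :=
  {z | z.submodule ≤ x.submodule ⊔ y.submodule}

/-- The relative secant (join) variety `S(Y,X)`: closure of the union of the
lines joining a point of `Y` to a distinct point of `X`. -/
def joinVar {N : ℕ} (Y X : Set (Proj N)) : Set (Proj N) :=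
  pClosure {z | ∃ y ∈ Y, ∃ x ∈ X, y ≠ x ∧ z ∈ pline y x}

/-- The secant variety `SX`. -/
def secantVar {N : ℕ} (X : Set (Proj N)) : Set (Proj N) := joinVar X X

/-- The relative tangent variety `T(Y,X) = ⋃_{y ∈ Y} T_y X`. -/
def relTangent {N : ℕ} (Y X : Set (Proj N)) : Set (Proj N) :=
  ⋃ y ∈ Y, tangentSet X y

/-- The hyperplane (as a linear subspace of `ℂ^{N+1}`) with coordinate vector `a`. -/
def hypSub {N : ℕ} (a : Aff N) : Submodule ℂ (Aff N) :=
  LinearMap.ker (∑ i, a i • (LinearMap.proj i : (Aff N) →ₗ[ℂ] ℂ))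

/-- The dual variety of `X`, identified with a subvariety of `ℙ^N` via
coordinates of hyperplanes: closure of the set of hyperplanes tangent to `X`
at some point. -/
def dualVar {N : ℕ} (X : Set (Proj N)) : Set (Proj N) :=
  pClosure {h | ∃ x ∈ X, projTangent X x ≤ hypSub h.rep}

/-- The entry locus `Σ_z` of a point `z` of the secant variety. -/
def entryLocus {N : ℕ} (X : Set (Proj N)) (z : Proj N) : Set (Proj N) :=
  pClosure {x | x ∈ X ∧ ∃ x' ∈ X, x ≠ x' ∧ z ∈ pline x x'}

/-- A scroll structure on `X ⊆ ℙ^N`: a smooth base variety `W` (of dimension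
`b`, embedded in some projective space) together with a family of disjoint
linearly embedded fibres of dimension `n - b` covering `X`. -/
structure ScrollOn (N : ℕ) (X : Set (Proj N)) (n b : ℕ) where
  M : ℕ
  W : Set (Proj M)
  baseSmooth : SmoothVariety W b
  fdim : ℕ
  dim_eq : n = b + fdim
  Fsub : Proj M → Submodule ℂ (Aff N)
  fib_rank : ∀ w ∈ W, Module.finrank ℂ (Fsub w) = fdim + 1
  cover : X = ⋃ w ∈ W, {z : Proj N | z.submodule ≤ Fsub w}
  disjoint : ∀ w ∈ W, ∀ w' ∈ W, w ≠ w' →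
    ∀ z : Proj N, z.submodule ≤ Fsub w → z.submodule ≤ Fsub w' → False

/-- The fibre of a scroll over a base point. -/
def ScrollOn.fib {N : ℕ} {X : Set (Proj N)} {n b : ℕ} (S : ScrollOn N X n b)
    (w : Proj S.M) : Set (Proj N) :=
  {z | z.submodule ≤ S.Fsub w}

/-- The coordinate vector of the Segre product of two vectors. -/
def segreVec (a b : ℕ) (y : Fin a → ℂ) (w : Fin b → ℂ) : Fin a × Fin b → ℂ :=
  fun p => y p.1 * w p.2

/-- `X` is (projectively equivalent to) the Segre embedding
`ℙ^{a-1} × ℙ^{b-1} ⊆ ℙ^{ab-1}`. -/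
def IsSegre {N : ℕ} (a b : ℕ) (X : Set (Proj N)) : Prop :=
  ∃ e : (Fin a × Fin b → ℂ) ≃ₗ[ℂ] (Aff N),
    X = {z | ∃ y : Fin a → ℂ, ∃ w : Fin b → ℂ,
      z.submodule = Submodule.span ℂ {e (segreVec a b y w)}}

/-- `X` is an isomorphic projection of the Segre embedding
`ℙ^{a-1} × ℙ^{b-1}`: the image of the Segre variety under a linear projection
which is injective on points and on embedded tangent spaces of the Segre. -/
def IsProjectedSegre {N : ℕ} (a b : ℕ) (X : Set (Proj N)) : Prop :=
  ∃ L : (Fin a × Fin b → ℂ) →ₗ[ℂ] (Aff N),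
    (∀ y w, segreVec a b y w ≠ 0 → L (segreVec a b y w) ≠ 0) ∧
    (∀ y w y' w', segreVec a b y w ≠ 0 → segreVec a b y' w' ≠ 0 →
      Submodule.span ℂ {L (segreVec a b y w)} =
        Submodule.span ℂ {L (segreVec a b y' w')} →
      Submodule.span ℂ {segreVec a b y w} =
        Submodule.span ℂ {segreVec a b y' w'}) ∧
    (∀ y w, segreVec a b y w ≠ 0 →
      Disjoint
        (tangentAt {v | ∃ y' w', v = segreVec a b y' w'} (segreVec a b y w))
        (LinearMap.ker L)) ∧
    X = {z | ∃ y w, segreVec a b y w ≠ 0 ∧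
      z.submodule = Submodule.span ℂ {L (segreVec a b y w)}}

end
noncomputable section

/-- The quadratic Veronese coordinates of a vector in `ℂ³`. -/
def veroQ (y : Fin 3 → ℂ) : Fin 6 → ℂ :=
  ![y 0 * y 0, y 0 * y 1, y 0 * y 2, y 1 * y 1, y 1 * y 2, y 2 * y 2]

/-- `X` is (projectively equivalent to) the Veronese surface in `ℙ⁵`. -/
def IsVeroneseSurface {N : ℕ} (X : Set (Proj N)) : Prop :=
  ∃ h : N + 1 = 6, ∃ g : (Aff N) ≃ₗ[ℂ] (Aff N),
    X = {z | ∃ y : Fin 3 → ℂ, y ≠ 0 ∧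
      z.submodule = Submodule.span ℂ {g fun i => veroQ y (Fin.cast h i)}}

/-- The coordinates of a pure spinor: `(1, x_{ij}, Pf_i(x))` for a skew matrix
with upper entries `x i j` (`i < j`); the affine parametrization of the
10-dimensional spinor variety `S₄ ⊆ ℙ^{15}`. -/
def spinVec (x : Fin 5 → Fin 5 → ℂ) : Fin 16 → ℂ :=
  ![1, x 0 1, x 0 2, x 0 3, x 0 4, x 1 2, x 1 3, x 1 4, x 2 3, x 2 4, x 3 4,
    x 1 2 * x 3 4 - x 1 3 * x 2 4 + x 1 4 * x 2 3,
    x 0 2 * x 3 4 - x 0 3 * x 2 4 + x 0 4 * x 2 3,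
    x 0 1 * x 3 4 - x 0 3 * x 1 4 + x 0 4 * x 1 3,
    x 0 1 * x 2 4 - x 0 2 * x 1 4 + x 0 4 * x 1 2,
    x 0 1 * x 2 3 - x 0 2 * x 1 3 + x 0 3 * x 1 2]

/-- `X` is (projectively equivalent to) the 10-dimensional spinor variety
`S₄ ⊆ ℙ^{15}`. -/
def IsSpinorVariety {N : ℕ} (X : Set (Proj N)) : Prop :=
  ∃ e : (Fin 16 → ℂ) ≃ₗ[ℂ] (Aff N),
    X = pClosure {z | ∃ x : Fin 5 → Fin 5 → ℂ,
      z.submodule = Submodule.span ℂ {e (spinVec x)}}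

/-- The vanishing ideal of a subset of affine space. -/
def vanishIdeal {N : ℕ} (V : Set (Aff N)) : Ideal (MvPolynomial (Fin (N + 1)) ℂ) where
  carrier := vanishSet V
  add_mem' := by intro a b ha hb v hv; simp [vanishSet] at *; simp [ha v hv, hb v hv]
  zero_mem' := by intro v hv; simp
  smul_mem' := by intro c a ha v hv; simp [vanishSet] at *; simp [ha v hv]

/-- Saturation of a homogeneous ideal with respect to the irrelevant ideal. -/
def satIdeal {N : ℕ} (J : Ideal (MvPolynomial (Fin (N + 1)) ℂ)) :
    Ideal (MvPolynomial (Fin (N + 1)) ℂ) where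
  carrier := {p | ∃ k : ℕ, ∀ i : Fin (N + 1), (X i) ^ k * p ∈ J}
  zero_mem' := ⟨0, fun i => by simp⟩
  add_mem' := by
    rintro a b ⟨k, hk⟩ ⟨l, hl⟩
    refine ⟨k + l, fun i => ?_⟩
    have h : (X i : MvPolynomial (Fin (N + 1)) ℂ) ^ (k + l) * (a + b) =
        (X i) ^ l * ((X i) ^ k * a) + (X i) ^ k * ((X i) ^ l * b) := by ring
    rw [h]
    exact J.add_mem (J.mul_mem_left _ (hk i)) (J.mul_mem_left _ (hl i))
  smul_mem' := by
    rintro c a ⟨k, hk⟩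
    refine ⟨k, fun i => ?_⟩
    have h : (X i : MvPolynomial (Fin (N + 1)) ℂ) ^ k * (c • a) =
        c * ((X i) ^ k * a) := by rw [smul_eq_mul]; ring
    rw [h]
    exact J.mul_mem_left _ (hk i)

/-- The projective scheme `Proj` of the quotient by `J` is normal: every
localization at a prime not containing the irrelevant ideal is a normal
domain. -/
def ProjNormal {N : ℕ} (J : Ideal (MvPolynomial (Fin (N + 1)) ℂ)) : Prop :=
  ∀ P : Ideal (MvPolynomial (Fin (N + 1)) ℂ ⧸ J), ∀ hP : P.IsPrime,
    ¬ (Ideal.map (Ideal.Quotient.mk J)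
        (Ideal.span (Set.range MvPolynomial.X)) ≤ P) →
      IsDomain (@Localization.AtPrime _ _ P hP) ∧
      IsIntegrallyClosed (@Localization.AtPrime _ _ P hP)

/-- Data describing an algebraic line bundle on `X ⊆ ℙ^N` by a covering of
`X` by complements of closed sets and degree-zero rational transition
functions satisfying the cocycle condition on `X`. -/
structure LineBundleData (N : ℕ) (X : Set (Proj N)) where
  ι : Type
  Z : ι → Set (Aff N)
  Zclosed : ∀ i, zClosed (Z i)
  covers : ∀ v ∈ cone X, v ≠ 0 → ∃ i, v ∉ Z i
  num : ι → ι → MvPolynomial (Fin (N + 1)) ℂ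
  den : ι → ι → MvPolynomial (Fin (N + 1)) ℂ
  deg : ι → ι → ℕ
  num_hom : ∀ i j, num i j ∈ homogeneousSubmodule (Fin (N + 1)) ℂ (deg i j)
  den_hom : ∀ i j, den i j ∈ homogeneousSubmodule (Fin (N + 1)) ℂ (deg i j)
  invertible : ∀ i j, ∀ v ∈ cone X, v ∉ Z i → v ∉ Z j →
    eval v (num i j) ≠ 0 ∧ eval v (den i j) ≠ 0
  cocycle : ∀ i j k, ∀ v ∈ cone X, v ∉ Z i → v ∉ Z j → v ∉ Z k →
    eval v (num i j) * eval v (num j k) * eval v (den i k) =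
      eval v (num i k) * eval v (den i j) * eval v (den j k)

/-- The line bundle `L` is isomorphic to the `k`-th tensor power of `G`:
on the common refinement of the two coverings, the transition functions of
`L` and the `k`-th power of those of `G` differ by a coboundary of invertible
degree-zero rational functions. -/
def PicPowerIso {N : ℕ} {X : Set (Proj N)} (L G : LineBundleData N X) (k : ℤ) : Prop :=
  ∃ a : L.ι × G.ι → MvPolynomial (Fin (N + 1)) ℂ,
  ∃ b : L.ι × G.ι → MvPolynomial (Fin (N + 1)) ℂ,
  ∃ d : L.ι × G.ι → ℕ,
    (∀ r, a r ∈ homogeneousSubmodule (Fin (N + 1)) ℂ (d r)) ∧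
    (∀ r, b r ∈ homogeneousSubmodule (Fin (N + 1)) ℂ (d r)) ∧
    (∀ i p, ∀ v ∈ cone X, v ∉ L.Z i → v ∉ G.Z p →
      eval v (a (i, p)) ≠ 0 ∧ eval v (b (i, p)) ≠ 0) ∧
    (∀ i j p q, ∀ v ∈ cone X, v ∉ L.Z i → v ∉ L.Z j → v ∉ G.Z p → v ∉ G.Z q →
      eval v (L.num i j) * eval v (b (i, p)) * eval v (a (j, q)) *
          eval v (G.den p q) ^ k.toNat * eval v (G.num p q) ^ (-k).toNat =
        eval v (L.den i j) * eval v (a (i, p)) * eval v (b (j, q)) *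
          eval v (G.num p q) ^ k.toNat * eval v (G.den p q) ^ (-k).toNat)

/-- The Picard group of `X` is cyclic: there is a line bundle of which every
line bundle is a tensor power, up to isomorphism. -/
def PicCyclic {N : ℕ} (X : Set (Proj N)) : Prop :=
  ∃ G : LineBundleData N X, ∀ L : LineBundleData N X, ∃ k : ℤ, PicPowerIso L G k

/-- `X` can be isomorphically projected into `ℙ^M`: there is a linear
projection which is injective on the points of `X` and on its embedded
tangent spaces. -/
def IsoProjectableTo {N : ℕ} (X : Set (Proj N)) (M : ℕ) : Prop :=
  ∃ π : (Aff N) →ₗ[ℂ] (Aff M),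
    (∀ v ∈ cone X, v ≠ 0 → π v ≠ 0) ∧
    (∀ v ∈ cone X, ∀ w ∈ cone X, v ≠ 0 → w ≠ 0 →
      Submodule.span ℂ {π v} = Submodule.span ℂ {π w} →
      Submodule.span ℂ {v} = Submodule.span ℂ {w}) ∧
    (∀ x ∈ X, projTangent X x ⊓ LinearMap.ker π = ⊥)

end

set_option linter.all false

/-! ### Points of affine space and dimension -/

namespace HypSec

/-- The maximal ideal of a point of affine space. -/
noncomputable def ptIdeal {ι : Type} (a : ι → ℂ) : Ideal (MvPolynomial ι ℂ) := RingHom.ker (MvPolynomial.eval a)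

theorem mem_ptIdeal {ι : Type} {a : ι → ℂ} {p : MvPolynomial ι ℂ} :
    p ∈ ptIdeal a ↔ eval a p = 0 := Iff.rfl

instance ptIdeal_isMaximal {ι : Type} (a : ι → ℂ) : (ptIdeal a).IsMaximal :=
  RingHom.ker_isMaximal_of_surjective _ (fun c => ⟨C c, by simp⟩)

theorem eq_ptIdeal_of_isMaximal {ι : Type} [Finite ι] {I : Ideal (MvPolynomial ι ℂ)}
    (hI : I.IsMaximal) : ∃ a, I = ptIdeal a := by
  obtain ⟨a, ha⟩ := MvPolynomial.isMaximal_iff_eq_vanishingIdeal_singleton.1 hI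
  refine ⟨a, ?_⟩
  rw [ha]
  ext p
  rw [mem_vanishingIdeal_singleton_iff, mem_ptIdeal, ← coe_aeval_eq_eval]
  rfl

/-- Translation by `a` on the polynomial ring. -/
noncomputable def shiftEquiv {ι : Type} (a : ι → ℂ) : MvPolynomial ι ℂ ≃+* MvPolynomial ι ℂ :=
  (AlgEquiv.ofAlgHom
    (aeval (R := ℂ) (fun i => (X i + C (a i) : MvPolynomial ι ℂ)))
    (aeval (R := ℂ) (fun i => (X i - C (a i) : MvPolynomial ι ℂ)))
    (by ext i; simp [MvPolynomial.algebraMap_eq])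
    (by ext i; simp [MvPolynomial.algebraMap_eq])).toRingEquiv

theorem height_ptIdeal_eq {ι : Type} [Finite ι] (a b : ι → ℂ) :
    (ptIdeal a).height = (ptIdeal b).height := by
  rw [← RingEquiv.height_comap (shiftEquiv (b - a)) (ptIdeal a)]
  congr 1
  ext p
  have : (eval a).comp (shiftEquiv (b - a)).toRingHom = eval b := by
    ext i <;> simp [shiftEquiv]
  have : eval a (shiftEquiv (b - a) p) = eval b p := RingHom.congr_fun this p
  change eval a (shiftEquiv (b - a) p) = 0 ↔ _
  rw [this]; rfl

theorem height_ptIdeal {ι : Type} [Finite ι] (a : ι → ℂ) :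
    (ptIdeal a).height = (Nat.card ι : ℕ∞) := by
  have hd : ringKrullDim (MvPolynomial ι ℂ) = (Nat.card ι : WithBot ℕ∞) := by
    rw [ringKrullDim_of_isNoetherianRing, ringKrullDim_eq_zero_of_field, zero_add]
  haveI : FiniteRingKrullDim (MvPolynomial ι ℂ) := by
    rw [finiteRingKrullDim_iff_ne_bot_and_top, hd]
    exact ⟨by simp, by exact ne_of_lt (WithBot.coe_lt_coe.2 (ENat.coe_lt_top _))⟩
  obtain ⟨p, hp, hpe⟩ := Ideal.exists_isMaximal_height (R := MvPolynomial ι ℂ)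
  obtain ⟨b, rfl⟩ := eq_ptIdeal_of_isMaximal hp
  rw [height_ptIdeal_eq a b]
  rw [hd] at hpe
  exact WithBot.coe_injective hpe

theorem ringKrullDim_le_of_integral {A B : Type} [CommRing A] [CommRing B] [Algebra A B]
    [Algebra.IsIntegral A B] : ringKrullDim B ≤ ringKrullDim A := by
  refine Order.krullDim_le_of_strictMono (fun P => PrimeSpectrum.comap (algebraMap A B) P) ?_
  intro P Q h
  obtain ⟨x, hxQ, hxP⟩ := SetLike.exists_of_lt (show P.asIdeal < Q.asIdeal from h)
  exact Ideal.comap_lt_comap_of_integral_mem_sdiff h.le ⟨hxQ, hxP⟩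
    (Algebra.IsIntegral.isIntegral x)

/-- Every maximal ideal of an affine domain has height equal to the dimension: Noether normalization
and going down. -/
theorem height_maximal_eq_dim {R : Type} [CommRing R] [IsDomain R] [Algebra ℂ R]
    [Algebra.FiniteType ℂ R] (m : Ideal R) [hm : m.IsMaximal] :
    (m.height : WithBot ℕ∞) = ringKrullDim R := by
  refine le_antisymm (Ideal.height_le_ringKrullDim_of_ne_top hm.ne_top) ?_
  obtain ⟨s, g, hg, hfin⟩ := exists_finite_inj_algHom_of_fg ℂ R
  letI : Algebra (MvPolynomial (Fin s) ℂ) R := g.toRingHom.toAlgebra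
  haveI : Module.Finite (MvPolynomial (Fin s) ℂ) R := hfin
  haveI : Algebra.IsIntegral (MvPolynomial (Fin s) ℂ) R := inferInstance
  haveI : FaithfulSMul (MvPolynomial (Fin s) ℂ) R :=
    (faithfulSMul_iff_algebraMap_injective _ _).2 hg
  haveI : IsNoetherianRing R := Algebra.FiniteType.isNoetherianRing ℂ R
  refine (ringKrullDim_le_of_integral (A := MvPolynomial (Fin s) ℂ)).trans ?_
  have hn := Ideal.isMaximal_comap_of_isIntegral_of_isMaximal (R := MvPolynomial (Fin s) ℂ) m
  obtain ⟨a, ha⟩ := eq_ptIdeal_of_isMaximal hn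
  haveI : m.LiesOver (ptIdeal a) := ⟨ha.symm⟩
  rw [Ideal.height_eq_height_add_of_liesOver_of_hasGoingDown (ptIdeal a) m, height_ptIdeal,
    ringKrullDim_of_isNoetherianRing, ringKrullDim_eq_zero_of_field, zero_add]
  norm_cast
  exact le_self_add

end HypSec

/-! ### Zero loci, vanishing ideals and `adim` -/

namespace HypSec

/-- Zero set of an ideal. -/
def Zs {ι : Type} (J : Ideal (MvPolynomial ι ℂ)) : Set (ι → ℂ) := {x | ∀ p ∈ J, eval x p = 0}

theorem Zs_anti {ι : Type} {J K : Ideal (MvPolynomial ι ℂ)} (h : J ≤ K) : Zs K ⊆ Zs J :=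
  fun _ hx p hp => hx p (h hp)

theorem mem_Zs_iff_le {ι : Type} {J : Ideal (MvPolynomial ι ℂ)} {x : ι → ℂ} :
    x ∈ Zs J ↔ J ≤ ptIdeal x := Iff.rfl

theorem mem_radical_of_vanish {ι : Type} [Finite ι] {J : Ideal (MvPolynomial ι ℂ)}
    {p : MvPolynomial ι ℂ} (h : ∀ x ∈ Zs J, eval x p = 0) : p ∈ J.radical := by
  rw [← vanishingIdeal_zeroLocus_eq_radical (K := ℂ)]
  intro x hx
  exact h x (fun q hq => hx q hq)

theorem mem_prime_of_vanish {ι : Type} [Finite ι] {J : Ideal (MvPolynomial ι ℂ)} [hJ : J.IsPrime]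
    {p : MvPolynomial ι ℂ} (h : ∀ x ∈ Zs J, eval x p = 0) : p ∈ J := by
  have := mem_radical_of_vanish h
  rwa [hJ.radical] at this

theorem exists_mem_Zs_of_notMem {ι : Type} [Finite ι] {J : Ideal (MvPolynomial ι ℂ)}
    [hJ : J.IsPrime] {p : MvPolynomial ι ℂ} (h : p ∉ J) : ∃ x ∈ Zs J, eval x p ≠ 0 := by
  by_contra! hc
  exact h (mem_prime_of_vanish hc)

theorem Zs_nonempty {ι : Type} [Finite ι] {J : Ideal (MvPolynomial ι ℂ)} (hJ : J ≠ ⊤) :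
    ∃ x, x ∈ Zs J := by
  obtain ⟨m, hm, hle⟩ := Ideal.exists_le_maximal J hJ
  obtain ⟨a, rfl⟩ := eq_ptIdeal_of_isMaximal hm
  exact ⟨a, hle⟩

theorem zClosed_Zs {N : ℕ} (J : Ideal (MvPolynomial (Fin (N+1)) ℂ)) : zClosed (Zs J) :=
  ⟨J, rfl⟩

theorem mem_vanishIdeal {N : ℕ} {V : Set (Aff N)} {p : MvPolynomial (Fin (N+1)) ℂ} :
    p ∈ vanishIdeal V ↔ ∀ v ∈ V, eval v p = 0 := Iff.rfl

theorem Zs_vanishIdeal {N : ℕ} {V : Set (Aff N)} (hV : zClosed V) : Zs (vanishIdeal V) = V := by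
  obtain ⟨T, rfl⟩ := hV
  ext x
  exact ⟨fun h p hp => h p (fun v hv => hv p hp), fun h p hp => hp x h⟩

theorem vanishIdeal_Zs {N : ℕ} {P : Ideal (MvPolynomial (Fin (N+1)) ℂ)} [P.IsPrime] :
    vanishIdeal (Zs P) = P :=
  le_antisymm (fun _ hp => mem_prime_of_vanish hp) (fun p hp x hx => hx p hp)

theorem zIrred_Zs {N : ℕ} {P : Ideal (MvPolynomial (Fin (N+1)) ℂ)} [hP : P.IsPrime] :
    zIrred (Zs P) := by
  refine ⟨Zs_nonempty hP.ne_top, ?_⟩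
  rintro C₁ C₂ h1 h2 h
  by_contra! hc
  rw [← Zs_vanishIdeal h1, ← Zs_vanishIdeal h2] at *
  obtain ⟨⟨x, hx, hx1⟩, y, hy, hy1⟩ := And.imp Set.not_subset.1 Set.not_subset.1 hc
  simp only [Zs, Set.mem_setOf_eq, not_forall] at hx1 hy1
  obtain ⟨p, hp, hpx⟩ := hx1
  obtain ⟨q, hq, hqy⟩ := hy1
  have : p * q ∈ P := mem_prime_of_vanish (fun z hz => by
    rcases h hz with hz | hz
    · simp [hz p hp]
    · simp [hz q hq])
  rcases hP.mem_or_mem this with h | h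
  · exact hpx (hx _ h)
  · exact hqy (hy _ h)

theorem vanishIdeal_isPrime {N : ℕ} {V : Set (Aff N)} (hV : zIrred V) :
    (vanishIdeal V).IsPrime := by
  refine Ideal.isPrime_iff.2 ⟨?_, ?_⟩
  · obtain ⟨x, hx⟩ := hV.1
    intro h
    have : (1 : MvPolynomial (Fin (N+1)) ℂ) ∈ vanishIdeal V := h ▸ trivial
    simpa using this x hx
  · intro p q hpq
    have := hV.2 (Zs (Ideal.span {p})) (Zs (Ideal.span {q})) (zClosed_Zs _) (zClosed_Zs _) ?_
    · exact this.imp (fun h v hv => h hv p (Ideal.mem_span_singleton_self p))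
        (fun h v hv => h hv q (Ideal.mem_span_singleton_self q))
    · intro v hv
      have h0 := hpq v hv
      rw [map_mul, mul_eq_zero] at h0
      refine h0.imp (fun h r hr => ?_) (fun h r hr => ?_)
      all_goals
        obtain ⟨s, rfl⟩ := Ideal.mem_span_singleton'.1 hr
        simp [h]

/-- The zero loci of the primes above `J` are irreducible closed subsets of `V`. -/
theorem dim_quot_le_adim {N : ℕ} {J : Ideal (MvPolynomial (Fin (N+1)) ℂ)} {V : Set (Aff N)}
    (h : Zs J ⊆ V) : ringKrullDim (MvPolynomial (Fin (N+1)) ℂ ⧸ J) ≤ adim V := by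
  rw [ringKrullDim_quotient, ← Order.krullDim_orderDual]
  refine Order.krullDim_le_of_strictMono (fun P =>
    ⟨Zs (OrderDual.ofDual P).1.asIdeal, zClosed_Zs _, zIrred_Zs,
      (Zs_anti (OrderDual.ofDual P).2).trans h⟩) ?_
  intro P Q hPQ
  have hlt : (OrderDual.ofDual Q).1.asIdeal < (OrderDual.ofDual P).1.asIdeal := hPQ
  refine Subtype.mk_lt_mk.2 (lt_of_le_of_ne (Zs_anti hlt.le) ?_)
  intro he
  have := congrArg vanishIdeal he
  rw [vanishIdeal_Zs, vanishIdeal_Zs] at this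
  exact hlt.ne this.symm

/-- By the Nullstellensatz, the topological dimension of a closed set is the Krull dimension of its
coordinate ring. -/
theorem dim_quot_eq_adim {N : ℕ} {V : Set (Aff N)} (hV : zClosed V) :
    ringKrullDim (MvPolynomial (Fin (N+1)) ℂ ⧸ vanishIdeal V) = adim V := by
  refine le_antisymm (dim_quot_le_adim (Zs_vanishIdeal hV).le) ?_
  rw [ringKrullDim_quotient]
  unfold adim
  rw [← Order.krullDim_orderDual]
  refine Order.krullDim_le_of_strictMono (fun W =>
    ⟨⟨vanishIdeal (OrderDual.ofDual W).1, vanishIdeal_isPrime (OrderDual.ofDual W).2.2.1⟩,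
      fun p hp v hv => hp v ((OrderDual.ofDual W).2.2.2 hv)⟩) ?_
  intro W W' hlt
  have hlt : (OrderDual.ofDual W').1 < (OrderDual.ofDual W).1 := hlt
  change vanishIdeal (OrderDual.ofDual W).1 < vanishIdeal (OrderDual.ofDual W').1
  refine lt_of_le_of_ne (fun p hp v hv => hp v (hlt.le hv)) ?_
  intro he
  have := congrArg Zs he
  rw [Zs_vanishIdeal (OrderDual.ofDual W).2.1, Zs_vanishIdeal (OrderDual.ofDual W').2.1] at this
  exact hlt.ne this.symm

/-- The point `v` of the variety of `P` has height in the coordinate ring equal to the dimension of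
that ring. -/
theorem height_pt_quot {ι : Type} [Finite ι] (P : Ideal (MvPolynomial ι ℂ)) [P.IsPrime]
    {v : ι → ℂ} (hv : v ∈ Zs P) :
    (((ptIdeal v).map (Ideal.Quotient.mk P)).height : WithBot ℕ∞) =
      ringKrullDim (MvPolynomial ι ℂ ⧸ P) := by
  haveI : ((ptIdeal v).map (Ideal.Quotient.mk P)).IsMaximal := by
    refine Ideal.IsMaximal.map_of_surjective_of_ker_le Ideal.Quotient.mk_surjective ?_
    rw [Ideal.mk_ker]; exact hv
  haveI : Algebra.FiniteType ℂ (MvPolynomial ι ℂ ⧸ P) := inferInstance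
  exact height_maximal_eq_dim _

end HypSec

/-! ### Regular systems of parameters -/

namespace HypSec

open IsLocalRing

theorem aeval_smul_of_isHomogeneous {ι A : Type} [CommRing A] [Algebra ℂ A] {F : MvPolynomial ι ℂ}
    {k : ℕ} (hF : F.IsHomogeneous k) (t : A) (x : ι → A) :
    aeval (fun i => t * x i) F = t ^ k * aeval x F := by
  rw [aeval_def, aeval_def, eval₂_eq, eval₂_eq, Finset.mul_sum]
  refine Finset.sum_congr rfl fun s hs => ?_
  have h : ∑ i ∈ s.support, s i = k := by
    have := hF (mem_support_iff.1 hs)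
    simpa [Finsupp.weight_apply, Finsupp.sum] using this
  simp only [mul_pow, Finset.prod_mul_distrib, Finset.prod_pow_eq_pow_sum, h]
  ring

theorem sup_pow_le' {A : Type} [CommRing A] (J T : Ideal A) (n : ℕ) :
    (J ⊔ T) ^ n ≤ J ⊔ T ^ n := by
  induction n with
  | zero => simp
  | succ n ih =>
    rw [pow_succ, pow_succ]
    refine (mul_le_mul_left ih (J ⊔ T)).trans ?_
    rw [Ideal.sup_mul, Ideal.mul_sup (T ^ n)]
    exact sup_le (le_sup_of_le_left Ideal.mul_le_left)
      (sup_le (le_sup_of_le_left Ideal.mul_le_right) le_sup_right)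

/-- A regular system of parameters of a local `ℂ`-algebra: the residue field is `ℂ` (`res`), the `u
i` generate the maximal ideal (`gen`), and there are at most as many of them as the height of the
maximal ideal (`dim`). -/
structure RegSys (R : Type) [CommRing R] [IsLocalRing R] [Algebra ℂ R] {ι : Type} [Fintype ι]
    (u : ι → R) : Prop where
  res : ∀ r : R, ∃ c : ℂ, r - algebraMap ℂ R c ∈ maximalIdeal R
  gen : Ideal.span (Set.range u) = maximalIdeal R
  dim : (Fintype.card ι : ℕ∞) ≤ (maximalIdeal R).height

variable {R : Type} [CommRing R] [IsLocalRing R] [IsNoetherianRing R] [Algebra ℂ R]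
  {ι : Type} [Fintype ι] {u : ι → R}

theorem RegSys.mem (hu : RegSys R u) (i : ι) : u i ∈ maximalIdeal R := by
  rw [← hu.gen]; exact Ideal.subset_span ⟨i, rfl⟩

theorem algebraMap_notMem {c : ℂ} (hc : c ≠ 0) : algebraMap ℂ R c ∉ maximalIdeal R := by
  rw [mem_maximalIdeal, mem_nonunits_iff, not_not]
  exact (isUnit_iff_ne_zero.2 hc).map _

/-- A regular system of parameters is quasi-regular. If `F b ≠ 0` for some `b` with `b i0 = 1`, then
`u i0` is nilpotent modulo the ideal generated by the `u i - b i * u i0` with `i ≠ i0`, so the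
maximal ideal is minimal over an ideal with fewer generators than the height of the maximal ideal,
against Krull's height theorem. -/
theorem RegSys.quasiRegular (hu : RegSys R u) {F : MvPolynomial ι ℂ} {k : ℕ}
    (hF : F.IsHomogeneous k) (h : aeval u F ∈ maximalIdeal R ^ (k + 1)) : F = 0 := by
  classical
  by_contra hF0
  obtain ⟨a, ha⟩ : ∃ a, eval a F ≠ 0 := by
    by_contra! hc
    exact hF0 (MvPolynomial.funext (fun x => by simpa using hc x))
  obtain ⟨b, hb, i0, hb1⟩ | hk : (∃ b, eval b F ≠ 0 ∧ ∃ i0, b i0 = 1) ∨ k = 0 := by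
    by_cases ha0 : a = 0
    · right
      by_contra hk
      apply ha
      have := aeval_smul_of_isHomogeneous (A := ℂ) hF 0 (0 : ι → ℂ)
      simpa [ha0, zero_pow hk, aeval_eq_eval] using this
    · left
      obtain ⟨i0, hi0⟩ := Function.ne_iff.1 ha0
      refine ⟨fun i => (a i0)⁻¹ * a i, ?_, i0, inv_mul_cancel₀ hi0⟩
      have := aeval_smul_of_isHomogeneous (A := ℂ) hF (a i0)⁻¹ a
      change aeval (fun i => (a i0)⁻¹ * a i) F ≠ 0
      rw [this]
      exact mul_ne_zero (pow_ne_zero _ (inv_ne_zero hi0)) ha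
  · set t := u i0 with ht
    set J := Ideal.span ((fun i => u i - algebraMap ℂ R (b i) * t) '' {i | i ≠ i0}) with hJ
    have hJm : J ≤ maximalIdeal R := by
      rw [hJ, Ideal.span_le]
      rintro _ ⟨i, -, rfl⟩
      exact sub_mem (hu.mem i) (Ideal.mul_mem_left _ _ (hu.mem i0))
    have hJu : ∀ i, u i - algebraMap ℂ R (b i) * t ∈ J := by
      intro i
      by_cases hi : i = i0
      · subst hi; simp [hb1, ht]
      · exact Ideal.subset_span ⟨i, hi, rfl⟩
    have hmJ : maximalIdeal R = J ⊔ Ideal.span {t} := by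
      refine le_antisymm ?_ (sup_le hJm (by
        rw [Ideal.span_singleton_le_iff_mem]; exact hu.mem i0))
      rw [← hu.gen, Ideal.span_le]
      rintro _ ⟨i, rfl⟩
      rw [← sub_add_cancel (u i) (algebraMap ℂ R (b i) * t)]
      exact Ideal.add_mem _ (Ideal.mem_sup_left (hJu i))
        (Ideal.mem_sup_right (Ideal.mul_mem_left _ _ (Ideal.mem_span_singleton_self t)))
    have hval : aeval u F - t ^ k * algebraMap ℂ R (eval b F) ∈ J := by
      rw [← Ideal.Quotient.eq]
      have h1 : Ideal.Quotient.mkₐ ℂ J (aeval u F) =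
          aeval (fun i => Ideal.Quotient.mk J t * algebraMap ℂ (R ⧸ J) (b i)) F := by
        rw [← AlgHom.comp_apply, comp_aeval]
        congr 2
        funext i
        rw [mul_comm]
        exact Ideal.Quotient.eq.2 (hJu i)
      rw [aeval_smul_of_isHomogeneous hF] at h1
      have h2 : aeval (fun i => algebraMap ℂ (R ⧸ J) (b i)) F =
          algebraMap ℂ (R ⧸ J) (eval b F) := by
        rw [← coe_aeval_eq_eval, RingHom.coe_coe, ← aeval_algebraMap_apply]
        rfl
      rw [h2] at h1
      rw [map_mul, map_pow]
      exact h1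
    have hpow : maximalIdeal R ^ (k + 1) ≤ J ⊔ Ideal.span {t ^ (k + 1)} := by
      rw [hmJ, ← Ideal.span_singleton_pow]
      exact sup_pow_le' _ _ _
    obtain ⟨j, hj, r', hr', hjr⟩ := Submodule.mem_sup.1 (hpow h)
    obtain ⟨r, rfl⟩ := Ideal.mem_span_singleton'.1 hr'
    have hunit : IsUnit (algebraMap ℂ R (eval b F) - r * t) := by
      by_contra hn
      refine algebraMap_notMem (R := R) hb ?_
      rw [← sub_add_cancel (algebraMap ℂ R (eval b F)) (r * t)]
      exact Ideal.add_mem _ hn (Ideal.mul_mem_left _ _ (hu.mem i0))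
    have htk : t ^ k ∈ J := by
      have : t ^ k * (algebraMap ℂ R (eval b F) - r * t) ∈ J := by
        have e : t ^ k * (algebraMap ℂ R (eval b F) - r * t) =
          j - (aeval u F - t ^ k * algebraMap ℂ R (eval b F)) := by
          rw [← hjr]; ring
        rw [e]; exact sub_mem hj hval
      exact (Ideal.mul_unit_mem_iff_mem J hunit).1 this
    have hmin : maximalIdeal R ∈ J.minimalPrimes := by
      refine ⟨⟨inferInstance, hJm⟩, ?_⟩
      rintro P ⟨hP, hJP⟩ -
      rw [hmJ]
      refine sup_le hJP ?_
      rw [Ideal.span_singleton_le_iff_mem]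
      exact hP.mem_of_pow_mem _ (hJP htk)
    have hJ' : J = Ideal.span ((Finset.univ.erase i0).image
        (fun i => u i - algebraMap ℂ R (b i) * t) : Finset R) := by
      rw [hJ]; congr 1; ext; simp
    rw [hJ'] at hmin
    have h1 := Ideal.height_le_card_of_mem_minimalPrimes_span_finset hmin
    have h2 := hu.dim.trans h1
    have h3 := Finset.card_image_le (s := Finset.univ.erase i0)
      (f := fun i => u i - algebraMap ℂ R (b i) * t)
    rw [Finset.card_erase_of_mem (Finset.mem_univ _), Finset.card_univ] at h3
    have h4 : Fintype.card ι ≤ Fintype.card ι - 1 := by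
      exact (ENat.coe_le_coe.1 h2).trans h3
    have h5 : 0 < Fintype.card ι := Fintype.card_pos_iff.2 ⟨i0⟩
    omega
  · subst hk
    obtain ⟨c, rfl⟩ : ∃ c, F = C c :=
      ⟨_, totalDegree_eq_zero_iff_eq_C.1 (hF.totalDegree hF0)⟩
    simp at ha h
    exact ha h

end HypSec

/-! ### Initial forms: regular local rings are normal domains -/

namespace HypSec

open IsLocalRing

/-- Complete integral closedness of a ring in its total ring of fractions, without fractions: if `p
/ q` is almost integral, that is, `c * (p / q) ^ i` lies in `B` for all `i` and some
non-zero-divisor `c`, then `p / q` lies in `B`. -/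
def AINormal (B : Type) [CommRing B] : Prop :=
  ∀ c p q : B, c ∈ nonZeroDivisors B → q ∈ nonZeroDivisors B → (∀ i : ℕ, q ^ i ∣ c * p ^ i) → q ∣ p

theorem AINormal.of_isIntegrallyClosed {B : Type} [CommRing B] [IsDomain B] [IsNoetherianRing B]
    [IsIntegrallyClosed B] : AINormal B := by
  intro c p q hc hq h
  have hq0 : algebraMap B (FractionRing B) q ≠ 0 := by
    simpa using nonZeroDivisors.ne_zero hq
  have hx : IsAlmostIntegral B (algebraMap B (FractionRing B) p / algebraMap B _ q) := by
    refine ⟨c, hc, fun n => ?_⟩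
    obtain ⟨b, hb⟩ := h n
    refine ⟨b, ?_⟩
    rw [Algebra.smul_def, div_pow, ← mul_div_assoc, eq_div_iff (pow_ne_zero _ hq0), ← map_pow,
      ← map_pow, ← map_mul, ← map_mul, hb, mul_comm]
  obtain ⟨y, hy⟩ := IsIntegrallyClosed.isIntegral_iff.1 hx.isIntegral
  refine ⟨y, ?_⟩
  rw [eq_div_iff hq0, ← map_mul] at hy
  rw [← IsFractionRing.injective B (FractionRing B) hy, mul_comm]

theorem AINormal.isIntegrallyClosed {B : Type} [CommRing B] [IsDomain B]
    (h : AINormal B) : IsIntegrallyClosed B := by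
  rw [isIntegrallyClosed_iff (FractionRing B)]
  intro x hx
  obtain ⟨c, hc, hcx⟩ := hx.isAlmostIntegral
  obtain ⟨p, q, hq, rfl⟩ := IsFractionRing.div_surjective (A := B) x
  have hq0 : algebraMap B (FractionRing B) q ≠ 0 := by
    simpa using nonZeroDivisors.ne_zero hq
  obtain ⟨y, rfl⟩ := h c p q hc hq (fun i => by
    obtain ⟨b, hb⟩ := hcx i
    refine ⟨b, IsFractionRing.injective B (FractionRing B) ?_⟩
    rw [Algebra.smul_def, div_pow, ← mul_div_assoc] at hb
    rw [eq_div_iff (pow_ne_zero _ hq0)] at hb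
    rw [map_mul, map_mul, map_pow, map_pow, mul_comm _ (algebraMap B (FractionRing B) b)]
    exact hb.symm)
  exact ⟨y, by rw [map_mul, mul_div_cancel_left₀ _ hq0]⟩

variable {R : Type} [CommRing R] [IsLocalRing R] [IsNoetherianRing R] [Algebra ℂ R]
  {ι : Type} [Fintype ι] {u : ι → R}

/-- `F` is homogeneous of degree `k` and represents `r` modulo the `(k + 1)`-st power of the maximal
ideal. The value `F = 0` is allowed; the initial form of `r` is the case `F ≠ 0`. -/
def InForm (u : ι → R) (r : R) (k : ℕ) (F : MvPolynomial ι ℂ) : Prop :=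
  F.IsHomogeneous k ∧ r - aeval u F ∈ maximalIdeal R ^ (k + 1)

theorem RegSys.aeval_mem (hu : RegSys R u) {F : MvPolynomial ι ℂ} {k : ℕ}
    (hF : F.IsHomogeneous k) : aeval u F ∈ maximalIdeal R ^ k := by
  rw [← hu.gen, Ideal.mem_span_pow_iff_exists_isHomogeneous]
  exact ⟨map (algebraMap ℂ R) F, hF.map _, by rw [eval_map, aeval_def]⟩

theorem RegSys.exists_form (hu : RegSys R u) (k : ℕ) :
    ∀ r ∈ maximalIdeal R ^ k, ∃ F, InForm u r k F := by
  have hadd : ∀ k x y, (∃ F, InForm u x k F) → (∃ F, InForm u y k F) →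
      ∃ F, InForm u (x + y) k F := by
    rintro k x y ⟨F, hF, hF'⟩ ⟨G, hG, hG'⟩
    refine ⟨F + G, hF.add hG, ?_⟩
    rw [map_add, add_sub_add_comm]
    exact add_mem hF' hG'
  induction k with
  | zero =>
    intro r _
    obtain ⟨c, hc⟩ := hu.res r
    exact ⟨C c, isHomogeneous_C _ _, by simpa using hc⟩
  | succ k ih =>
    intro r hr
    rw [pow_succ] at hr
    induction hr using Submodule.mul_induction_on' with
    | add x hx y hy hx' hy' => exact hadd _ _ _ hx' hy'
    | mem_mul_mem a ha b hb =>
      rw [← hu.gen] at hb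
      induction hb using Submodule.span_induction generalizing a with
      | mem x hx =>
        obtain ⟨i, rfl⟩ := hx
        obtain ⟨F, hF, hF'⟩ := ih a ha
        refine ⟨F * X i, hF.mul (isHomogeneous_X _ _), ?_⟩
        rw [map_mul, aeval_X, ← sub_mul, pow_succ]
        exact Ideal.mul_mem_mul hF' (hu.mem i)
      | zero => exact ⟨0, isHomogeneous_zero _ _ _, by simp⟩
      | add x y _ _ hx hy => rw [mul_add]; exact hadd _ _ _ (hx a ha) (hy a ha)
      | smul c x _ hx =>
        rw [smul_eq_mul, mul_left_comm, ← mul_assoc]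
        exact hx _ (Ideal.mul_mem_left _ _ ha)

/-- By Krull's intersection theorem a non-zero element has a non-zero initial form. -/
theorem RegSys.exists_initial (hu : RegSys R u) {r : R} (hr : r ≠ 0) :
    ∃ k F, InForm u r k F ∧ F ≠ 0 ∧ r ∈ maximalIdeal R ^ k := by
  classical
  have hex : ∃ k, r ∉ maximalIdeal R ^ k := by
    by_contra! h
    have := Ideal.iInf_pow_eq_bot_of_isLocalRing (maximalIdeal R) (Ideal.IsPrime.ne_top inferInstance)
    apply hr
    rw [← Ideal.mem_bot, ← this, Ideal.mem_iInf]
    exact h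
  have hpos : Nat.find hex ≠ 0 := by
    intro h0
    have := Nat.find_spec hex
    rw [h0] at this
    simp at this
  obtain ⟨k, hk⟩ := Nat.exists_eq_succ_of_ne_zero hpos
  have hmem : r ∈ maximalIdeal R ^ k := by
    by_contra h
    have := Nat.find_min' hex h
    omega
  obtain ⟨F, hF⟩ := hu.exists_form k r hmem
  refine ⟨k, F, hF, ?_, hmem⟩
  rintro rfl
  have h1 := Nat.find_spec hex
  rw [hk] at h1
  exact h1 (by simpa using hF.2)

theorem InForm.mem (hu : RegSys R u) {r : R} {k F} (h : InForm u r k F) :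
    r ∈ maximalIdeal R ^ k := by
  rw [← sub_add_cancel r (aeval u F)]
  exact add_mem (Ideal.pow_le_pow_right (Nat.le_succ k) h.2) (hu.aeval_mem h.1)

theorem InForm.mul (hu : RegSys R u) {r s : R} {k l F G} (h : InForm u r k F)
    (h' : InForm u s l G) : InForm u (r * s) (k + l) (F * G) := by
  refine ⟨h.1.mul h'.1, ?_⟩
  rw [map_mul, show r * s - aeval u F * aeval u G = (r - aeval u F) * s +
    aeval u F * (s - aeval u G) by ring]
  refine add_mem ?_ ?_
  · rw [add_right_comm, pow_add]
    exact Ideal.mul_mem_mul h.2 (h'.mem hu)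
  · rw [add_assoc, pow_add]
    exact Ideal.mul_mem_mul (hu.aeval_mem h.1) h'.2

theorem InForm.pow (hu : RegSys R u) {r : R} {k F} (h : InForm u r k F) (i : ℕ) :
    InForm u (r ^ i) (i * k) (F ^ i) := by
  induction i with
  | zero => simpa [InForm] using isHomogeneous_one ι ℂ
  | succ i ih =>
    rw [pow_succ, pow_succ, Nat.succ_mul]
    exact ih.mul hu h

theorem InForm.eq_zero (hu : RegSys R u) {r : R} {k F} (h : InForm u r k F)
    (hr : r ∈ maximalIdeal R ^ (k + 1)) : F = 0 := by
  refine hu.quasiRegular h.1 ?_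
  rw [← sub_sub_cancel r (aeval u F)]
  exact sub_mem hr h.2

theorem InForm.unique (hu : RegSys R u) {r : R} {k l F G} (h : InForm u r k F)
    (h' : InForm u r l G) (hF : F ≠ 0) (hG : G ≠ 0) : k = l ∧ F = G := by
  have hkl : k = l := by
    by_contra hne
    rcases lt_or_gt_of_ne hne with hlt | hlt
    · exact hF (h.eq_zero hu (Ideal.pow_le_pow_right hlt (h'.mem hu)))
    · exact hG (h'.eq_zero hu (Ideal.pow_le_pow_right hlt (h.mem hu)))
  subst hkl
  refine ⟨rfl, sub_eq_zero.1 (hu.quasiRegular (h.1.sub h'.1) ?_)⟩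
  rw [map_sub, show aeval u F - aeval u G = (r - aeval u G) - (r - aeval u F) by ring]
  exact sub_mem h'.2 h.2

theorem InForm.ne_zero (hu : RegSys R u) {r : R} {k F} (h : InForm u r k F) (hF : F ≠ 0) :
    r ≠ 0 := by
  rintro rfl
  exact hF (h.eq_zero hu (zero_mem _))

/-- A regular local ring is a domain, since the product of two non-zero initial forms is non-zero.
-/
theorem RegSys.isDomain (hu : RegSys R u) : IsDomain R := by
  haveI : NoZeroDivisors R := ⟨by
    intro r s hrs
    by_contra! hc
    obtain ⟨k, F, hF, hF0, -⟩ := hu.exists_initial hc.1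
    obtain ⟨l, G, hG, hG0, -⟩ := hu.exists_initial hc.2
    exact (hF.mul hu hG).ne_zero hu (mul_ne_zero hF0 hG0) hrs⟩
  exact NoZeroDivisors.to_isDomain R

/-- The quotient of two homogeneous polynomials can be taken to be homogeneous. -/
theorem dvd_of_dvd_homog {G B E : MvPolynomial ι ℂ} {e k : ℕ} (hG : G.IsHomogeneous e)
    (hB : B.IsHomogeneous k) (hB0 : B ≠ 0) (h : B = G * E) :
    ∃ l E', E'.IsHomogeneous l ∧ e + l = k ∧ B = G * E' := by
  have hsum : B = ∑ i ∈ Finset.range (E.totalDegree + 1), if e + i = k then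
      G * homogeneousComponent i E else 0 := by
    conv_lhs => rw [← homogeneousComponent_of_mem (m := k) (n := k) hB |>.trans (if_pos rfl), h,
      ← sum_homogeneousComponent E, Finset.mul_sum, map_sum]
    refine Finset.sum_congr rfl fun i _ => ?_
    rw [homogeneousComponent_of_mem (hG.mul (homogeneousComponent_isHomogeneous i E))]
    simp only [eq_comm]
  have hek : e ≤ k := by
    by_contra hlt
    apply hB0
    rw [hsum]
    exact Finset.sum_eq_zero fun i _ => if_neg (by omega)
  refine ⟨k - e, if k - e ∈ Finset.range (E.totalDegree + 1) then
    homogeneousComponent (k - e) E else 0, ?_, by omega, ?_⟩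
  · split_ifs
    · exact homogeneousComponent_isHomogeneous _ _
    · exact isHomogeneous_zero _ _ _
  · rw [hsum]
    have : ∀ i, (e + i = k) ↔ (k - e = i) := fun i => by omega
    simp only [this, Finset.sum_ite_eq, mul_ite, mul_zero]

/-- A regular local ring is completely integrally closed. The element `p` is approximated by
multiples of `q` modulo growing powers of the maximal ideal: the remainder `b` satisfies the same
divisibilities as `p`, so its initial form is divisible by that of `q` because a polynomial ring is
normal. Krull's intersection theorem in `R / q` concludes. -/
theorem RegSys.aiNormal (hu : RegSys R u) : AINormal R := by
  haveI := hu.isDomain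
  intro c p q hc hq h
  have hc0 := nonZeroDivisors.ne_zero hc
  have hq0 := nonZeroDivisors.ne_zero hq
  obtain ⟨f, Cf, hCf, hCf0, -⟩ := hu.exists_initial hc0
  obtain ⟨e, G, hG, hG0, -⟩ := hu.exists_initial hq0
  have key : ∀ j : ℕ, ∃ a b, p = q * a + b ∧ b ∈ maximalIdeal R ^ j := by
    intro j
    induction j with
    | zero => exact ⟨0, p, by simp, by simp⟩
    | succ j ih =>
      obtain ⟨a, b, hpab, hb⟩ := ih
      by_cases hb0 : b = 0
      · exact ⟨a, b, hpab, by simp [hb0]⟩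
      have hdiv : ∀ i : ℕ, q ^ i ∣ c * b ^ i := by
        intro i
        have hbe : b = p + (-(q * a)) := by rw [hpab]; ring
        rw [hbe, add_pow, Finset.mul_sum]
        refine Finset.dvd_sum fun l hl => ?_
        obtain ⟨y, hy⟩ := h l
        have hl' : l ≤ i := Nat.lt_succ_iff.1 (Finset.mem_range.1 hl)
        have : q ^ i = q ^ l * q ^ (i - l) := by rw [← pow_add, Nat.add_sub_cancel' hl']
        rw [this]
        refine ⟨y * ((-a) ^ (i - l) * (i.choose l)), ?_⟩
        rw [← mul_assoc, ← mul_assoc, hy, show -(q * a) = q * (-a) by ring, mul_pow]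
        ring
      obtain ⟨k, B, hB, hB0, hbk⟩ := hu.exists_initial hb0
      have hGB : G ∣ B := by
        refine AINormal.of_isIntegrallyClosed Cf B G (mem_nonZeroDivisors_of_ne_zero hCf0)
          (mem_nonZeroDivisors_of_ne_zero hG0) (fun i => ?_)
        obtain ⟨y, hy⟩ := hdiv i
        have hcb := hCf.mul hu (hB.pow hu i)
        have hcb0 : Cf * B ^ i ≠ 0 := mul_ne_zero hCf0 (pow_ne_zero _ hB0)
        have hy0 : y ≠ 0 := by
          rintro rfl
          rw [mul_zero] at hy
          exact hcb.ne_zero hu hcb0 hy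
        obtain ⟨l, Y, hY, hY0, -⟩ := hu.exists_initial hy0
        have := (hG.pow hu i).mul hu hY
        rw [← hy] at this
        exact ⟨Y, (hcb.unique hu this hcb0 (mul_ne_zero (pow_ne_zero _ hG0) hY0)).2⟩
      obtain ⟨E, hE⟩ := hGB
      obtain ⟨l, E', hE', hel, hBE⟩ := dvd_of_dvd_homog hG.1 hB.1 hB0 hE
      have hkj : j ≤ k := by
        by_contra hlt
        exact hB0 (hB.eq_zero hu (Ideal.pow_le_pow_right (by omega) hb))
      refine ⟨a + aeval u E', b - q * aeval u E', by rw [hpab]; ring, ?_⟩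
      have hEI : InForm u (aeval u E') l E' := ⟨hE', by simp⟩
      have h1 := hG.mul hu hEI
      rw [hel, ← hBE] at h1
      rw [show b - q * aeval u E' = (b - aeval u B) - (q * aeval u E' - aeval u B) by ring]
      exact Ideal.pow_le_pow_right (Nat.succ_le_succ hkj) (sub_mem hB.2 h1.2)
  have hqm : q ∈ maximalIdeal R ∨ IsUnit q := by
    by_cases h : IsUnit q
    · exact Or.inr h
    · exact Or.inl h
  rcases hqm with hqm | hqm
  swap
  · exact hqm.dvd
  have := Ideal.iInf_pow_smul_eq_bot_of_isLocalRing (M := R ⧸ Ideal.span {q}) (maximalIdeal R)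
    (Ideal.IsPrime.ne_top inferInstance)
  rw [← Ideal.mem_span_singleton, ← Ideal.Quotient.eq_zero_iff_mem]
  change (Submodule.Quotient.mk p : R ⧸ Ideal.span {q}) = 0
  rw [← Submodule.mem_bot R, ← this, Submodule.mem_iInf]
  intro j
  obtain ⟨a, b, hpab, hb⟩ := key j
  have : (Submodule.Quotient.mk p : R ⧸ Ideal.span {q}) = b • Submodule.Quotient.mk 1 := by
    rw [← Submodule.Quotient.mk_smul, Submodule.Quotient.eq, hpab, smul_eq_mul, mul_one,
      add_sub_cancel_right]
    exact Ideal.mul_mem_right _ _ (Ideal.mem_span_singleton_self q)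
  rw [this]
  exact Submodule.smul_mem_smul hb trivial

end HypSec

/-! ### Depth and associated primes -/

namespace HypSec

open scoped Pointwise
open IsLocalRing CategoryTheory Abelian Limits RingTheory.Sequence

variable {R : Type} [CommRing R] [IsLocalRing R] [IsNoetherianRing R]

/-- Depth at least `t`, in terms of vanishing of `Ext` from the residue field. -/
def DepthGE (R : Type) [CommRing R] [IsLocalRing R] (t : ℕ) (M : Type) [AddCommGroup M]
    [Module R M] : Prop :=
  ∀ i < t, Subsingleton (Ext (ModuleCat.of R (R ⧸ maximalIdeal R)) (ModuleCat.of R M) i)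

/-- The depth drops by at most one modulo a regular element `x`: long exact sequence of `Ext` for
multiplication by `x`. -/
theorem DepthGE.quot {t : ℕ} {M : Type} [AddCommGroup M] [Module R M]
    (h : DepthGE R (t + 1) M) {x : R} (hx : IsSMulRegular M x) :
    DepthGE R t (QuotSMulTop x M) := by
  intro i hi
  have zero1 := AddCommGrpCat.isZero_of_iff_subsingleton.mpr (h i (by omega))
  have zero2 := AddCommGrpCat.isZero_of_iff_subsingleton.mpr (h (i + 1) (by omega))
  have hx' : IsSMulRegular (ModuleCat.of R M) x := hx
  exact AddCommGrpCat.subsingleton_of_isZero <| ShortComplex.Exact.isZero_of_both_zeros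
    ((Ext.covariant_sequence_exact₃' (ModuleCat.of R (R ⧸ maximalIdeal R))
      hx'.smulShortComplex_shortExact) i (i + 1) rfl)
    (zero1.eq_zero_of_src _) (zero2.eq_zero_of_tgt _)

theorem DepthGE.exists_regular {t : ℕ} {M : Type} [AddCommGroup M] [Module R M]
    [Module.Finite R M] (h : DepthGE R (t + 1) M) : ∃ x ∈ maximalIdeal R, IsSMulRegular M x := by
  have : Subsingleton (ModuleCat.of R (R ⧸ maximalIdeal R) ⟶ ModuleCat.of R M) :=
    Ext.addEquiv₀.subsingleton_congr.mp (h 0 t.zero_lt_succ)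
  have : Subsingleton ((R ⧸ maximalIdeal R) →ₗ[R] M) :=
    (ModuleCat.homAddEquiv (M := ModuleCat.of R (R ⧸ maximalIdeal R))
      (N := ModuleCat.of R M)).symm.toEquiv.subsingleton
  obtain ⟨x, mem_ann, hx⟩ := IsSMulRegular.subsingleton_linearMap_iff.mp this
  rw [Ideal.annihilator_quotient] at mem_ann
  exact ⟨x, mem_ann, hx⟩

/-- Associated primes of a module of depth at least `t` have coheight at least `t`. -/
theorem DepthGE.exists_chain (t : ℕ) : ∀ (M : Type) [AddCommGroup M] [Module R M]
    [Module.Finite R M], DepthGE R t M → ∀ Q : PrimeSpectrum R,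
    Q.asIdeal ∈ associatedPrimes R M →
    ∃ p : LTSeries (PrimeSpectrum R), p.length = t ∧ p.head = Q := by
  induction t with
  | zero =>
    intro M _ _ _ _ Q _
    exact ⟨RelSeries.singleton _ Q, rfl, rfl⟩
  | succ t ih =>
    intro M _ _ _ h Q hQ
    obtain ⟨x, hxm, hx⟩ := h.exists_regular
    obtain ⟨y0, hy0⟩ := (isAssociatedPrime_iff.mp (show IsAssociatedPrime _ _ from hQ)).2
    have hy0' : y0 ≠ 0 := by
      rintro rfl
      apply Q.isPrime.ne_top
      rw [Ideal.eq_top_iff_one, hy0, Submodule.mem_colon_singleton]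
      simp
    have hxQ : x ∉ Q.asIdeal := by
      intro hmem
      rw [hy0, Submodule.mem_colon_singleton, Submodule.mem_bot] at hmem
      exact hy0' (hx (by simpa using hmem))
    let K : Submodule R M :=
      { carrier := {y | ∀ q ∈ Q.asIdeal, q • y = 0}
        zero_mem' := by intro q _; simp
        add_mem' := by intro a b ha hb q hq; rw [smul_add, ha q hq, hb q hq, add_zero]
        smul_mem' := by intro c a ha q hq; rw [smul_comm, ha q hq, smul_zero] }
    have hK : ∀ y, y ∈ K ↔ ∀ q ∈ Q.asIdeal, q • y = 0 := fun y => Iff.rfl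
    have hy0K : y0 ∈ K := by
      intro q hq
      rw [hy0, Submodule.mem_colon_singleton, Submodule.mem_bot] at hq
      exact hq
    -- by Nakayama's lemma, the elements killed by `Q` do not all lie in `x M`
    obtain ⟨y, hyK, hyx⟩ : ∃ y ∈ K, y ∉ x • (⊤ : Submodule R M) := by
      by_contra! hcon
      have hle : K ≤ maximalIdeal R • K := by
        intro y hy
        obtain ⟨z, -, hz⟩ := (Submodule.mem_smul_pointwise_iff_exists _ _ _).mp (hcon y hy)
        rw [← hz]
        refine Submodule.smul_mem_smul hxm ?_
        intro q hq
        have := hy q hq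
        rw [← hz, smul_comm] at this
        exact hx (by simpa using this)
      have := Submodule.eq_bot_of_le_smul_of_le_jacobson_bot (maximalIdeal R) K
        (IsNoetherian.noetherian K) hle (IsLocalRing.maximalIdeal_le_jacobson _)
      rw [this] at hy0K
      exact hy0' (by simpa using hy0K)
    have hz : (Submodule.Quotient.mk y : QuotSMulTop x M) ≠ 0 := by
      intro h0
      exact hyx ((Submodule.Quotient.mk_eq_zero _).mp h0)
    obtain ⟨P, hP, hle⟩ := exists_le_isAssociatedPrime_of_isNoetherianRing R
      (Submodule.Quotient.mk y : QuotSMulTop x M) hz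
    obtain ⟨p, hp, hp0⟩ := ih (QuotSMulTop x M) (h.quot hx) ⟨P, hP.isPrime⟩ hP
    have hlt : Q < ⟨P, hP.isPrime⟩ := by
      refine lt_of_le_of_ne ?_ ?_
      · intro q hq
        apply hle
        rw [Submodule.mem_colon_singleton, ← Submodule.Quotient.mk_smul, hyK q hq]
        simp
      · intro he
        apply hxQ
        rw [he]
        apply hle
        rw [Submodule.mem_colon_singleton, ← Submodule.Quotient.mk_smul, Submodule.mem_bot,
          Submodule.Quotient.mk_eq_zero]
        exact Submodule.smul_mem_pointwise_smul _ _ _ trivial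
    refine ⟨p.cons Q ?_, ?_, ?_⟩
    · rw [hp0]; exact hlt
    · simp [hp]
    · simp

/-- A ring with a regular system of `d` parameters has a regular sequence of length `d`, by
induction on `d`: the quotient by the first parameter again has a regular system of parameters. -/
theorem RegSys.exists_isRegular (d : ℕ) : ∀ (R : Type) [CommRing R] [IsLocalRing R]
    [IsNoetherianRing R] [Algebra ℂ R] (u : Fin d → R), RegSys R u →
    ∃ rs : List R, rs.length = d ∧ (∀ r ∈ rs, r ∈ maximalIdeal R) ∧ IsRegular R rs := by
  induction d with
  | zero =>
    intro R _ _ _ _ u hu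
    exact ⟨[], rfl, by simp, IsRegular.nil R R⟩
  | succ d ih =>
    intro R _ _ _ _ u hu
    haveI := hu.isDomain
    have hm0 : u 0 ∈ maximalIdeal R := hu.mem 0
    set J : Ideal R := Ideal.span {u 0} with hJ
    have hJm : J ≤ maximalIdeal R := by
      rw [hJ, Ideal.span_le]; simpa using hm0
    haveI : Nontrivial (R ⧸ J) :=
      Ideal.Quotient.nontrivial_iff.mpr (fun h => (Ideal.IsPrime.ne_top
        (I := maximalIdeal R) inferInstance) (top_le_iff.mp (h ▸ hJm)))
    have hsurj := Ideal.Quotient.mk_surjective (I := J)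
    haveI : IsLocalRing (R ⧸ J) := IsLocalRing.of_surjective' (Ideal.Quotient.mk J) hsurj
    have hcomap : (maximalIdeal (R ⧸ J)).comap (Ideal.Quotient.mk J) = maximalIdeal R := by
      haveI := Ideal.comap_isMaximal_of_surjective (Ideal.Quotient.mk J) hsurj
        (K := maximalIdeal (R ⧸ J))
      exact IsLocalRing.eq_maximalIdeal this
    have hmap : (maximalIdeal R).map (Ideal.Quotient.mk J) = maximalIdeal (R ⧸ J) := by
      rw [← hcomap, Ideal.map_comap_of_surjective _ hsurj]
    have hgen : Ideal.span (Set.range fun i : Fin d => Ideal.Quotient.mk J (u i.succ)) =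
        maximalIdeal (R ⧸ J) := by
      rw [← hmap, ← hu.gen, Ideal.map_span]
      apply le_antisymm
      · rw [Ideal.span_le]
        rintro _ ⟨i, rfl⟩
        exact Ideal.subset_span ⟨_, ⟨_, rfl⟩, rfl⟩
      · rw [Ideal.span_le]
        rintro _ ⟨_, ⟨i, rfl⟩, rfl⟩
        refine Fin.cases ?_ (fun i => ?_) i
        · have : Ideal.Quotient.mk J (u 0) = 0 :=
            Ideal.Quotient.eq_zero_iff_mem.mpr (Ideal.subset_span rfl)
          rw [this]; exact zero_mem _
        · exact Ideal.subset_span ⟨i, rfl⟩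
    have hreg : RegSys (R ⧸ J) (fun i : Fin d => Ideal.Quotient.mk J (u i.succ)) := by
      refine ⟨?_, hgen, ?_⟩
      · intro r
        obtain ⟨r, rfl⟩ := hsurj r
        obtain ⟨c, hc⟩ := hu.res r
        refine ⟨c, ?_⟩
        rw [← hmap]
        exact Ideal.mem_map_of_mem (Ideal.Quotient.mk J) hc
      · have h1 := Ideal.height_le_height_add_one_of_mem hm0
        rw [hmap] at h1
        have h2 := hu.dim.trans h1
        simp only [Fintype.card_fin] at h2 ⊢
        rw [Nat.cast_add, Nat.cast_one] at h2
        exact (ENat.add_le_add_iff_right ENat.one_ne_top).mp h2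
    obtain ⟨ts, hl, hmem, ht⟩ := ih (R ⧸ J) _ hreg
    obtain ⟨rs, rfl⟩ := List.map_surjective_iff.mpr hsurj ts
    have hu0 : u 0 ≠ 0 := by
      intro h0
      -- otherwise the maximal ideal would have `d` generators but height at least `d + 1`
      have h3 : maximalIdeal R = Ideal.span (Set.range fun i : Fin d => u i.succ) := by
        rw [← hu.gen]
        apply le_antisymm
        · rw [Ideal.span_le]
          rintro _ ⟨i, rfl⟩
          refine Fin.cases ?_ (fun i => ?_) i
          · rw [h0]; exact zero_mem _
          · exact Ideal.subset_span ⟨i, rfl⟩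
        · exact Ideal.span_mono (by rintro _ ⟨i, rfl⟩; exact ⟨_, rfl⟩)
      have h4 := hu.dim
      have h5 : (maximalIdeal R).height ≤ d := by
        rw [h3]
        classical
        have h6 : (Ideal.span (Set.range fun i : Fin d => u i.succ)).spanFinrank ≤ d := by
          have := Submodule.spanFinrank_span_le_ncard_of_finite (R := R)
            (Set.finite_range fun i : Fin d => u i.succ)
          refine this.trans ?_
          rw [← Nat.card_coe_set_eq]
          exact (Finite.card_range_le _).trans (by simp)
        refine (Ideal.height_le_spanFinrank _ ?_).trans (by exact_mod_cast h6)
        rw [← h3]; exact Ideal.IsPrime.ne_top inferInstance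
      have h7 := h4.trans h5
      simp only [Fintype.card_fin] at h7
      have : d + 1 ≤ d := by exact_mod_cast h7
      omega
    have hall : ∀ r ∈ u 0 :: rs, r ∈ maximalIdeal R := by
      intro r hr
      rcases List.mem_cons.mp hr with rfl | hr
      · exact hm0
      · rw [← hcomap]
        exact hmem _ (List.mem_map_of_mem hr)
    refine ⟨u 0 :: rs, by simpa using hl, hall, ?_⟩
    refine IsRegular.of_isWeaklyRegular_of_mem_maximalIdeal _ hall ?_
    rw [isWeaklyRegular_cons_iff]
    refine ⟨?_, ?_⟩
    · intro a b hab
      exact mul_left_cancel₀ hu0 hab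
    · have h1 := ht.toIsWeaklyRegular
      have h2 : IsWeaklyRegular (R ⧸ J) rs :=
        (isWeaklyRegular_map_algebraMap_iff (R := R) (S := R ⧸ J) (M := R ⧸ J) rs).mp h1
      refine (LinearEquiv.isWeaklyRegular_congr (Submodule.quotEquivOfEq _ _ ?_) rs).mpr h2
      ext z
      rw [hJ, Ideal.mem_span_singleton', Submodule.mem_smul_pointwise_iff_exists]
      constructor
      · rintro ⟨b, -, rfl⟩; exact ⟨b, mul_comm _ _⟩
      · rintro ⟨b, rfl⟩; exact ⟨b, trivial, mul_comm _ _⟩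

theorem RegSys.depthGE {d : ℕ} [Algebra ℂ R] {u : Fin d → R} (hu : RegSys R u) :
    DepthGE R d R := by
  obtain ⟨rs, hlen, hmem, hreg⟩ := RegSys.exists_isRegular d R u hu
  rw [← hlen]
  refine ModuleCat.subsingleton_ext_of_exists_isRegular (maximalIdeal R)
    (ModuleCat.of R (R ⧸ maximalIdeal R)) ?_ (ModuleCat.of R R) ?_ rs hmem hreg
  · rw [Module.support_eq_zeroLocus]
    change PrimeSpectrum.zeroLocus
      ((Module.annihilator R (R ⧸ maximalIdeal R) : Ideal R) : Set R) ⊆ _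
    rw [Ideal.annihilator_quotient]
  · change maximalIdeal R • (⊤ : Submodule R R) < ⊤
    rw [smul_eq_mul, Ideal.mul_top, lt_top_iff_ne_top]
    exact Ideal.IsPrime.ne_top inferInstance

/-- The annihilator of a non-zero element is contained in an associated prime, which has coheight at
least `t`. -/
theorem DepthGE.exists_prime {t : ℕ} {M : Type} [AddCommGroup M] [Module R M]
    [Module.Finite R M] (h : DepthGE R t M) {y : M} (hy : y ≠ 0) :
    ∃ p : LTSeries (PrimeSpectrum R), p.length = t ∧ ∀ r : R, r • y = 0 → r ∈ p.head.asIdeal := by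
  obtain ⟨P, hP, hle⟩ := exists_le_isAssociatedPrime_of_isNoetherianRing R y hy
  obtain ⟨p, hp, hp0⟩ := h.exists_chain t M ⟨P, hP.isPrime⟩ hP
  refine ⟨p, hp, fun r hr => ?_⟩
  rw [hp0]
  apply hle
  rw [Submodule.mem_colon_singleton, hr]
  exact zero_mem _

/-- The annihilator of a non-zero class modulo `h` is contained in a prime of coheight at least one
less than the number of parameters. -/
theorem RegSys.exists_prime_one {t : ℕ} [Algebra ℂ R] {u : Fin (t + 1) → R} (hu : RegSys R u)
    {h c : R} (hh : h ≠ 0) (hc : c ∉ Ideal.span {h}) :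
    ∃ p : LTSeries (PrimeSpectrum R), p.length = t ∧
      ∀ r : R, r * c ∈ Ideal.span {h} → r ∈ p.head.asIdeal := by
  haveI := hu.isDomain
  have hreg : IsSMulRegular R h := fun a b hab => mul_left_cancel₀ hh hab
  have hmem : ∀ z : R, z ∈ h • (⊤ : Submodule R R) ↔ z ∈ Ideal.span {h} := by
    intro z
    rw [Ideal.mem_span_singleton', Submodule.mem_smul_pointwise_iff_exists]
    constructor
    · rintro ⟨b, -, rfl⟩; exact ⟨b, mul_comm _ _⟩
    · rintro ⟨b, rfl⟩; exact ⟨b, trivial, mul_comm _ _⟩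
  have hy : (Submodule.Quotient.mk c : QuotSMulTop h R) ≠ 0 := by
    intro h0
    exact hc ((hmem c).mp ((Submodule.Quotient.mk_eq_zero _).mp h0))
  obtain ⟨p, hp, hpr⟩ := (hu.depthGE.quot hreg).exists_prime hy
  refine ⟨p, hp, fun r hr => hpr r ?_⟩
  rw [← Submodule.Quotient.mk_smul, Submodule.Quotient.mk_eq_zero, hmem]
  exact hr

/-- If `q` is a non-zero-divisor modulo `h`, the annihilator of a non-zero class modulo `(h, q)` is
contained in a prime of coheight at least two less than the number of parameters. -/
theorem RegSys.exists_prime_two {t : ℕ} [Algebra ℂ R] {u : Fin (t + 2) → R} (hu : RegSys R u)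
    {h q c : R} (hh : h ≠ 0) (hq : ∀ a, q * a ∈ Ideal.span {h} → a ∈ Ideal.span {h})
    (hc : c ∉ Ideal.span {h, q}) :
    ∃ p : LTSeries (PrimeSpectrum R), p.length = t ∧
      ∀ r : R, r * c ∈ Ideal.span {h, q} → r ∈ p.head.asIdeal := by
  haveI := hu.isDomain
  have hreg : IsSMulRegular R h := fun a b hab => mul_left_cancel₀ hh hab
  have hmem : ∀ z : R, z ∈ h • (⊤ : Submodule R R) ↔ z ∈ Ideal.span {h} := by
    intro z
    rw [Ideal.mem_span_singleton', Submodule.mem_smul_pointwise_iff_exists]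
    constructor
    · rintro ⟨b, -, rfl⟩; exact ⟨b, mul_comm _ _⟩
    · rintro ⟨b, rfl⟩; exact ⟨b, trivial, mul_comm _ _⟩
  have hmk : ∀ z : R, (Submodule.Quotient.mk z : QuotSMulTop h R) = 0 ↔ z ∈ Ideal.span {h} :=
    fun z => (Submodule.Quotient.mk_eq_zero _).trans (hmem z)
  have hreg2 : IsSMulRegular (QuotSMulTop h R) q := by
    rw [isSMulRegular_iff_right_eq_zero_of_smul]
    intro y hy
    obtain ⟨a, rfl⟩ := Submodule.Quotient.mk_surjective _ y
    rw [← Submodule.Quotient.mk_smul, hmk] at hy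
    exact (hmk a).mpr (hq a hy)
  have hmem2 : ∀ z : R, (Submodule.Quotient.mk (Submodule.Quotient.mk z : QuotSMulTop h R) :
      QuotSMulTop q (QuotSMulTop h R)) = 0 ↔ z ∈ Ideal.span {h, q} := by
    intro z
    rw [Submodule.Quotient.mk_eq_zero, Submodule.mem_smul_pointwise_iff_exists,
      Ideal.mem_span_pair]
    constructor
    · rintro ⟨b, -, hb⟩
      obtain ⟨b, rfl⟩ := Submodule.Quotient.mk_surjective _ b
      rw [← Submodule.Quotient.mk_smul, ← sub_eq_zero, ← Submodule.Quotient.mk_sub, hmk,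
        Ideal.mem_span_singleton'] at hb
      obtain ⟨a, ha⟩ := hb
      refine ⟨-a, b, ?_⟩
      rw [smul_eq_mul] at ha
      linear_combination -ha
    · rintro ⟨a, b, rfl⟩
      refine ⟨Submodule.Quotient.mk b, trivial, ?_⟩
      rw [← Submodule.Quotient.mk_smul, ← sub_eq_zero, ← Submodule.Quotient.mk_sub, hmk,
        Ideal.mem_span_singleton']
      exact ⟨-a, by rw [smul_eq_mul]; ring⟩
  have hy : (Submodule.Quotient.mk (Submodule.Quotient.mk c : QuotSMulTop h R) :
      QuotSMulTop q (QuotSMulTop h R)) ≠ 0 := fun h0 => hc ((hmem2 c).mp h0)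
  obtain ⟨p, hp, hpr⟩ := ((hu.depthGE.quot hreg).quot hreg2).exists_prime hy
  refine ⟨p, hp, fun r hr => hpr r ?_⟩
  rw [← Submodule.Quotient.mk_smul, ← Submodule.Quotient.mk_smul, hmem2]
  exact hr

end HypSec

/-! ### Local rings at points and differentials -/

namespace HypSec
open IsLocalRing

/-- `φ` presents `B` as the localization of `ℂ[X] / K` at the point `w` of the zero set of `K`. -/
structure LocAt {ι : Type} (K : Ideal (MvPolynomial ι ℂ)) (w : ι → ℂ) {B : Type} [CommRing B]
    [Algebra ℂ B] (φ : MvPolynomial ι ℂ →ₐ[ℂ] B) : Prop where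
  pt : w ∈ Zs K
  unit : ∀ a, eval w a ≠ 0 → IsUnit (φ a)
  surj : ∀ b, ∃ s a, eval w a ≠ 0 ∧ b * φ a = φ s
  ker : ∀ s, φ s = 0 ↔ ∃ a, eval w a ≠ 0 ∧ a * s ∈ K

section
variable {ι : Type} {K : Ideal (MvPolynomial ι ℂ)} {w : ι → ℂ} {B : Type} [CommRing B]
    [Algebra ℂ B] {φ : MvPolynomial ι ℂ →ₐ[ℂ] B}

theorem LocAt.nontrivial (hL : LocAt K w φ) : Nontrivial B := by
  refine ⟨⟨1, 0, fun h => ?_⟩⟩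
  rw [← map_one φ, hL.ker] at h
  obtain ⟨a, ha, haK⟩ := h
  rw [mul_one] at haK
  exact ha (hL.pt a haK)

theorem LocAt.isLocalRing (hL : LocAt K w φ) : IsLocalRing B := by
  haveI := hL.nontrivial
  refine IsLocalRing.of_isUnit_or_isUnit_one_sub_self fun b => ?_
  obtain ⟨s, a, ha, hb⟩ := hL.surj b
  by_cases hs : eval w s = 0
  · right
    have h1 : (1 - b) * φ a = φ (a - s) := by rw [map_sub, ← hb]; ring
    have h2 : IsUnit (φ (a - s)) := hL.unit _ (by rw [map_sub, hs, sub_zero]; exact ha)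
    rw [← h1] at h2
    exact isUnit_of_mul_isUnit_left h2
  · left
    have h2 := hL.unit s hs
    rw [← hb] at h2
    exact isUnit_of_mul_isUnit_left h2

theorem LocAt.isUnit_iff (hL : LocAt K w φ) {s : MvPolynomial ι ℂ} :
    IsUnit (φ s) ↔ eval w s ≠ 0 := by
  refine ⟨fun h hs => ?_, hL.unit s⟩
  obtain ⟨b, hb⟩ := h.exists_right_inv
  obtain ⟨t, a, ha, hab⟩ := hL.surj b
  have : φ (s * t - a) = 0 := by
    rw [map_sub, map_mul, ← hab, ← mul_assoc, hb, one_mul, sub_self]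
  obtain ⟨c, hc, hcK⟩ := (hL.ker _).mp this
  have := hL.pt _ hcK
  simp [hs, hc, ha] at this

theorem LocAt.map_mem_iff (hL : LocAt K w φ) [IsLocalRing B] {s : MvPolynomial ι ℂ} :
    φ s ∈ maximalIdeal B ↔ eval w s = 0 := by
  rw [mem_maximalIdeal, mem_nonunits_iff, hL.isUnit_iff, not_not]

theorem LocAt.mem_of_mul (hL : LocAt K w φ) {J : Ideal B} {b : B} {a : MvPolynomial ι ℂ}
    (ha : eval w a ≠ 0) (h : b * φ a ∈ J) : b ∈ J :=
  (Ideal.mul_unit_mem_iff_mem J (hL.unit a ha)).mp h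

theorem LocAt.map_comap (hL : LocAt K w φ) (J : Ideal B) : (J.comap φ).map φ = J := by
  refine le_antisymm Ideal.map_comap_le fun b hb => ?_
  obtain ⟨s, a, ha, hab⟩ := hL.surj b
  refine hL.mem_of_mul ha ?_
  rw [hab]
  refine Ideal.mem_map_of_mem φ ?_
  rw [Ideal.mem_comap, ← hab]
  exact J.mul_mem_right _ hb

theorem LocAt.isNoetherianRing [Finite ι] (hL : LocAt K w φ) : IsNoetherianRing B := by
  rw [isNoetherianRing_iff_ideal_fg]
  intro J
  rw [← hL.map_comap J]
  exact Ideal.FG.map (IsNoetherian.noetherian _) _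

/-- Membership in an extended ideal is tested by clearing a denominator that does not vanish at `w`.
-/
theorem LocAt.mem_map_iff (hL : LocAt K w φ) {J : Ideal (MvPolynomial ι ℂ)}
    {s : MvPolynomial ι ℂ} :
    φ s ∈ J.map φ ↔ ∃ a, eval w a ≠ 0 ∧ a * s ∈ J ⊔ K := by
  constructor
  · intro h
    have key : ∀ b ∈ J.map φ, ∃ t ∈ J, ∃ a, eval w a ≠ 0 ∧ b * φ a = φ t := by
      intro b hb
      refine Submodule.span_induction (p := fun b _ => ∃ t ∈ J, ∃ a, eval w a ≠ 0 ∧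
        b * φ a = φ t) ?_ ?_ ?_ ?_ hb
      · rintro _ ⟨t, ht, rfl⟩
        exact ⟨t, ht, 1, by simp, by simp⟩
      · exact ⟨0, zero_mem _, 1, by simp, by simp⟩
      · rintro b b' - - ⟨t, ht, a, ha, h1⟩ ⟨t', ht', a', ha', h2⟩
        refine ⟨t * a' + t' * a, J.add_mem (J.mul_mem_right _ ht) (J.mul_mem_right _ ht'),
          a * a', by simp [ha, ha'], ?_⟩
        rw [map_add, map_mul, map_mul, map_mul, ← h1, ← h2]; ring
      · rintro c b - ⟨t, ht, a, ha, h1⟩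
        obtain ⟨s, a', ha', h2⟩ := hL.surj c
        refine ⟨s * t, J.mul_mem_left _ ht, a' * a, by simp [ha, ha'], ?_⟩
        rw [map_mul, map_mul, ← h1, ← h2, smul_eq_mul]; ring
    obtain ⟨t, ht, a, ha, h1⟩ := key _ h
    have h2 : φ (a * s - t) = 0 := by rw [map_sub, map_mul, ← h1]; ring
    obtain ⟨c, hc, hcK⟩ := (hL.ker _).mp h2
    refine ⟨c * a, by simp [hc, ha], ?_⟩
    have : c * a * s = c * t + c * (a * s - t) := by ring
    rw [this]
    exact Ideal.add_mem _ (Ideal.mem_sup_left (J.mul_mem_left _ ht)) (Ideal.mem_sup_right hcK)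
  · rintro ⟨a, ha, h⟩
    refine hL.mem_of_mul ha ?_
    rw [← map_mul, mul_comm s]
    obtain ⟨x, hx, y, hy, hxy⟩ := Submodule.mem_sup.mp h
    rw [← hxy, map_add, (hL.ker y).mpr ⟨1, by simp, by simpa using hy⟩, add_zero]
    exact Ideal.mem_map_of_mem _ hx

/-- The pull back of a proper ideal of the local ring at `w` is contained in the ideal of `w`. -/
theorem LocAt.comap_le (hL : LocAt K w φ) {P : Ideal B} (hP : P ≠ ⊤) : P.comap φ ≤ ptIdeal w := by
  intro s hs
  by_contra hne
  exact hP (Ideal.eq_top_of_isUnit_mem _ hs (hL.unit s hne))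

theorem LocAt.le_comap (hL : LocAt K w φ) (P : Ideal B) : K ≤ P.comap φ := by
  intro s hs
  rw [Ideal.mem_comap, (hL.ker s).mpr ⟨1, by simp, by simpa using hs⟩]
  exact zero_mem _

/-- A chain of primes in the local ring bounds the dimension of the pull back of its head. -/
theorem LocAt.length_le (hL : LocAt K w φ) (p : LTSeries (PrimeSpectrum B)) :
    (p.length : WithBot ℕ∞) ≤ ringKrullDim (MvPolynomial ι ℂ ⧸ p.head.asIdeal.comap φ) := by
  rw [ringKrullDim_quotient]
  let f : PrimeSpectrum B → PrimeSpectrum (MvPolynomial ι ℂ) :=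
    PrimeSpectrum.comap (φ : MvPolynomial ι ℂ →+* B)
  have hf : StrictMono f := by
    intro P Q h
    refine lt_of_le_of_ne (Ideal.comap_mono h.le) fun he => h.ne ?_
    have he' : P.asIdeal.comap φ = Q.asIdeal.comap φ := congrArg PrimeSpectrum.asIdeal he
    ext1
    rw [← hL.map_comap P.asIdeal, ← hL.map_comap Q.asIdeal, he']
  let q : LTSeries (PrimeSpectrum.zeroLocus
      (p.head.asIdeal.comap φ : Set (MvPolynomial ι ℂ))) :=
    LTSeries.mk p.length (fun i => ⟨f (p i), by
      have : p.head ≤ p i := p.strictMono.monotone (Fin.zero_le i)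
      exact Ideal.comap_mono (f := φ) this⟩) (fun i j hij => hf (p.strictMono hij))
  exact Order.LTSeries.length_le_krullDim q

end

section
variable {ι : Type} [Fintype ι]

/-- The differential at `w` of a polynomial, linearly in the polynomial. -/
noncomputable def Dl (w : ι → ℂ) : MvPolynomial ι ℂ →ₗ[ℂ] Module.Dual ℂ (ι → ℂ) where
  toFun := polyDiff w
  map_add' p q := by
    ext t
    simp [polyDiff, add_mul, Finset.sum_add_distrib]
  map_smul' c p := by
    ext t
    simp [polyDiff, Finset.mul_sum, mul_assoc]

theorem Dl_apply (w : ι → ℂ) (p : MvPolynomial ι ℂ) (t : ι → ℂ) :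
    Dl w p t = ∑ i, eval w (pderiv i p) * t i := by
  simp [Dl, polyDiff]

theorem Dl_single [DecidableEq ι] (w : ι → ℂ) (p : MvPolynomial ι ℂ) (i : ι) :
    Dl w p (Pi.single i 1) = eval w (pderiv i p) := by
  rw [Dl_apply]
  simp [Pi.single_apply]

theorem Dl_mul (w : ι → ℂ) (p q : MvPolynomial ι ℂ) :
    Dl w (p * q) = eval w p • Dl w q + eval w q • Dl w p := by
  ext t
  simp [Dl_apply, Finset.sum_add_distrib, Finset.mul_sum, mul_assoc, add_mul]

/-- The affine linear polynomial vanishing at `w` with differential `l`. -/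
noncomputable def affForm (w : ι → ℂ) (l : Module.Dual ℂ (ι → ℂ)) : MvPolynomial ι ℂ :=
  by classical exact ∑ i, C (l (Pi.single i 1)) * (X i - C (w i))

theorem eval_affForm (w : ι → ℂ) (l) : eval w (affForm w l) = 0 := by
  simp [affForm]

theorem Dl_affForm (w : ι → ℂ) (l) : Dl w (affForm w l) = l := by
  classical
  apply LinearMap.pi_ext'
  intro j
  ext
  simp only [LinearMap.comp_apply, LinearMap.single_apply]
  rw [Dl_single]
  simp [affForm, pderiv_X, Pi.single_apply]

theorem ptIdeal_eq_span (w : ι → ℂ) :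
    ptIdeal w = Ideal.span (Set.range fun i => (X i - C (w i) : MvPolynomial ι ℂ)) := by
  apply le_antisymm
  · intro p hp
    set J := Ideal.span (Set.range fun i => (X i - C (w i) : MvPolynomial ι ℂ)) with hJ
    have h : (Ideal.Quotient.mkₐ ℂ J) =
        (Algebra.ofId ℂ (MvPolynomial ι ℂ ⧸ J)).comp (aeval w : MvPolynomial ι ℂ →ₐ[ℂ] ℂ) := by
      apply MvPolynomial.algHom_ext
      intro i
      have : Ideal.Quotient.mk J (X i - C (w i)) = 0 :=
        Ideal.Quotient.eq_zero_iff_mem.mpr (Ideal.subset_span ⟨i, rfl⟩)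
      rw [map_sub, sub_eq_zero] at this
      simp only [Ideal.Quotient.mkₐ_eq_mk, AlgHom.comp_apply, aeval_X]
      exact this
    have h2 := DFunLike.congr_fun h p
    rw [mem_ptIdeal] at hp
    rw [AlgHom.comp_apply, aeval_eq_eval, hp, map_zero] at h2
    exact Ideal.Quotient.eq_zero_iff_mem.mp h2
  · rw [Ideal.span_le]
    rintro _ ⟨i, rfl⟩
    simp [mem_ptIdeal]

/-- A polynomial vanishing to second order at `w` lies in the square of the ideal of `w`. -/
theorem mem_sq_of_Dl_eq_zero {w : ι → ℂ} {g : MvPolynomial ι ℂ} (h0 : eval w g = 0)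
    (h1 : Dl w g = 0) : g ∈ ptIdeal w ^ 2 := by
  classical
  have hg : g ∈ ptIdeal w := h0
  rw [ptIdeal_eq_span] at hg
  obtain ⟨c, hc⟩ := (Submodule.mem_span_range_iff_exists_fun _).mp hg
  rw [← hc, pow_two]
  refine Ideal.sum_mem _ fun i _ => Ideal.mul_mem_mul ?_ (by simp [mem_ptIdeal])
  rw [mem_ptIdeal]
  have h2 : Dl w g (Pi.single i 1) = 0 := by rw [h1]; rfl
  rw [Dl_single, ← hc] at h2
  simpa [pderiv_X, Pi.single_apply, Derivation.leibniz, Finset.sum_add_distrib] using h2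

/-- A local ring whose embedded Zariski tangent space has dimension at most its height is regular:
linear forms restricting to a basis of the dual of the tangent space give a regular system of
parameters. -/
theorem LocAt.exists_regSys {K : Ideal (MvPolynomial ι ℂ)} {w : ι → ℂ} {B : Type} [CommRing B]
    [Algebra ℂ B] {φ : MvPolynomial ι ℂ →ₐ[ℂ] B} (hL : LocAt K w φ) [IsLocalRing B]
    (T : Submodule ℂ (ι → ℂ)) (hT : ∀ t, (∀ f ∈ K, Dl w f t = 0) → t ∈ T) {d : ℕ}
    (hd : Module.finrank ℂ T = d) (hdim : (d : ℕ∞) ≤ (maximalIdeal B).height) :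
    ∃ u : Fin d → B, RegSys B u := by
  haveI := hL.isNoetherianRing
  let b : Module.Basis (Fin d) ℂ T := Module.finBasisOfFinrankEq ℂ T hd
  choose l hl using fun j => LinearMap.exists_extend (b.coord j)
  refine ⟨fun j => φ (affForm w (l j)), ?_, ?_, by simpa using hdim⟩
  · intro r
    obtain ⟨s, a, ha, hr⟩ := hL.surj r
    refine ⟨eval w s / eval w a, ?_⟩
    refine hL.mem_of_mul ha ?_
    have : (r - algebraMap ℂ B (eval w s / eval w a)) * φ a =
        φ (s - C (eval w s / eval w a) * a) := by
      rw [sub_mul, hr, map_sub, map_mul]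
      congr 2
      exact (φ.commutes _).symm
    rw [this, hL.map_mem_iff]
    simp [ha]
  · set U : Ideal B := Ideal.span (Set.range fun j => φ (affForm w (l j))) with hU
    apply le_antisymm
    · rw [hU, Ideal.span_le]
      rintro _ ⟨j, rfl⟩
      exact hL.map_mem_iff.mpr (eval_affForm _ _)
    · refine Submodule.le_of_le_smul_of_le_jacobson_bot (I := maximalIdeal B)
        (IsNoetherian.noetherian _) (IsLocalRing.maximalIdeal_le_jacobson _) ?_
      intro r hr
      obtain ⟨s, a, ha, hra⟩ := hL.surj r
      refine hL.mem_of_mul ha ?_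
      rw [hra]
      have hs : eval w s = 0 := by
        rw [← hL.map_mem_iff, ← hra]; exact Ideal.mul_mem_right _ _ hr
      -- subtract a combination of the chosen forms so that the differential vanishes on `T`
      let g : MvPolynomial ι ℂ := s - ∑ j, C (Dl w s (b j)) * affForm w (l j)
      have hDg : Dl w g = Dl w s - ∑ j, Dl w s (b j) • l j := by
        simp only [g, map_sub, map_sum, Dl_mul, eval_affForm, eval_C, zero_smul, add_zero,
          Dl_affForm]
      have hg0 : eval w g = 0 := by simp [g, hs, eval_affForm]
      have hgT : ∀ t ∈ T, Dl w g t = 0 := by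
        have : (Dl w g) ∘ₗ T.subtype = 0 := by
          refine b.ext fun i => ?_
          have hli : ∀ j, l j (b i : ι → ℂ) = if i = j then 1 else 0 := by
            intro j
            have := DFunLike.congr_fun (hl j) (b i)
            simpa [Module.Basis.coord_apply, Finsupp.single_apply] using this
          rw [LinearMap.comp_apply, hDg]
          simp [hli]
        intro t ht
        exact DFunLike.congr_fun this ⟨t, ht⟩
      let W : Submodule ℂ (Module.Dual ℂ (ι → ℂ)) := (K.restrictScalars ℂ).map (Dl w)
      have hW : Dl w g ∈ W := by
        rw [← Subspace.dualCoannihilator_dualAnnihilator_eq (W := W),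
          Submodule.mem_dualAnnihilator]
        intro t ht
        refine hgT t (hT t fun f hf => ?_)
        rw [Submodule.mem_dualCoannihilator] at ht
        exact ht _ ⟨f, hf, rfl⟩
      obtain ⟨f, hf, hfg⟩ := hW
      have hsq : g - f ∈ ptIdeal w ^ 2 := by
        refine mem_sq_of_Dl_eq_zero ?_ ?_
        · rw [map_sub, hg0, hL.pt f hf, sub_zero]
        · rw [map_sub, hfg, sub_self]
      have hφf : φ f = 0 := (hL.ker f).mpr ⟨1, by simp, by simpa using hf⟩
      have hsplit : φ s = (∑ j, φ (C (Dl w s (b j))) * φ (affForm w (l j))) + φ (g - f) := by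
        rw [map_sub, hφf, sub_zero]
        simp only [g, map_sub, map_sum, map_mul]
        ring
      rw [hsplit]
      refine Submodule.add_mem_sup (Ideal.sum_mem _ fun j _ => Ideal.mul_mem_left _ _
        (Ideal.subset_span ⟨j, rfl⟩)) ?_
      rw [smul_eq_mul, ← pow_two]
      have hle : (ptIdeal w).map φ ≤ maximalIdeal B := by
        rw [Ideal.map_le_iff_le_comap]
        intro p hp
        exact hL.map_mem_iff.mpr hp
      refine Ideal.pow_right_mono hle 2 ?_
      rw [← Ideal.map_pow]
      exact Ideal.mem_map_of_mem _ hsq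
end

end HypSec

/-! ### Regularity of a variety and of its hyperplane sections at points -/

namespace HypSec
open IsLocalRing

/-- The localization of `ℂ[X] / J` at the point `v` is also the local ring of `K` at `v`, provided
that `J` and `K` agree locally at `v`. -/
theorem locAt_localization {ι : Type} {J K : Ideal (MvPolynomial ι ℂ)} {v : ι → ℂ} (hKJ : K ≤ J)
    (hJv : J ≤ ptIdeal v)
    (hJK : ∀ s ∈ J, ∃ a, eval v a ≠ 0 ∧ a * s ∈ K) (P : Ideal (MvPolynomial ι ℂ ⧸ J)) [P.IsPrime]
    (hP : P.comap (Ideal.Quotient.mk J) = ptIdeal v) :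
    LocAt (B := Localization.AtPrime P) K v ((IsScalarTower.toAlgHom ℂ (MvPolynomial ι ℂ ⧸ J) (Localization.AtPrime P)).comp
      (Ideal.Quotient.mkₐ ℂ J)) := by
  have hmem : ∀ a : MvPolynomial ι ℂ, Ideal.Quotient.mk J a ∈ P ↔ eval v a = 0 := by
    intro a
    rw [← Ideal.mem_comap, hP, mem_ptIdeal]
  refine ⟨fun s hs => hJv (hKJ hs), ?_, ?_, ?_⟩
  · intro a ha
    exact IsLocalization.map_units (Localization.AtPrime P)
      (⟨Ideal.Quotient.mk J a, fun h => ha ((hmem a).mp h)⟩ : P.primeCompl)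
  · intro b
    obtain ⟨⟨x, y⟩, hxy⟩ := IsLocalization.surj P.primeCompl b
    obtain ⟨s, rfl⟩ := Ideal.Quotient.mk_surjective x
    obtain ⟨y, hy⟩ := y
    obtain ⟨a, rfl⟩ := Ideal.Quotient.mk_surjective y
    exact ⟨s, a, fun h => hy ((hmem a).mpr h), hxy⟩
  · intro s
    have h1 : ((IsScalarTower.toAlgHom ℂ (MvPolynomial ι ℂ ⧸ J) (Localization.AtPrime P)).comp
      (Ideal.Quotient.mkₐ ℂ J)) s = algebraMap _ (Localization.AtPrime P)
        (Ideal.Quotient.mk J s) := rfl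
    rw [h1, IsLocalization.map_eq_zero_iff P.primeCompl]
    constructor
    · rintro ⟨⟨y, hy⟩, hs⟩
      obtain ⟨a, rfl⟩ := Ideal.Quotient.mk_surjective y
      have : a * s ∈ J := by
        rw [← Ideal.Quotient.eq_zero_iff_mem, map_mul]; exact hs
      obtain ⟨c, hc, hcK⟩ := hJK _ this
      refine ⟨c * a, ?_, by rwa [mul_assoc]⟩
      rw [map_mul]
      exact mul_ne_zero hc fun h => hy ((hmem a).mpr h)
    · rintro ⟨a, ha, haK⟩
      refine ⟨⟨Ideal.Quotient.mk J a, fun h => ha ((hmem a).mp h)⟩, ?_⟩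
      rw [← map_mul]
      exact Ideal.Quotient.eq_zero_iff_mem.mpr (hKJ haK)

section
variable {ι : Type} {K : Ideal (MvPolynomial ι ℂ)} {w : ι → ℂ} {B : Type} [CommRing B]
    [Algebra ℂ B] {φ : MvPolynomial ι ℂ →ₐ[ℂ] B}

theorem LocAt.quot (hL : LocAt K w φ) {h : MvPolynomial ι ℂ} (hw : eval w h = 0) :
    LocAt (K ⊔ Ideal.span {h}) w ((Ideal.Quotient.mkₐ ℂ (Ideal.span {φ h})).comp φ) := by
  refine ⟨?_, ?_, ?_, ?_⟩
  · rw [mem_Zs_iff_le, sup_le_iff]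
    refine ⟨hL.pt, ?_⟩
    rw [Ideal.span_le]
    rintro _ rfl
    exact hw
  · intro a ha
    exact (hL.unit a ha).map (Ideal.Quotient.mk (Ideal.span {φ h}))
  · intro b
    obtain ⟨b, rfl⟩ := Ideal.Quotient.mk_surjective b
    obtain ⟨s, a, ha, hb⟩ := hL.surj b
    refine ⟨s, a, ha, ?_⟩
    have := congrArg (Ideal.Quotient.mk (Ideal.span {φ h})) hb
    rwa [map_mul] at this
  · intro s
    have h1 : ((Ideal.Quotient.mkₐ ℂ (Ideal.span {φ h})).comp φ) s =
      Ideal.Quotient.mk (Ideal.span {φ h}) (φ s) := rfl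
    have h2 : Ideal.span {φ h} = (Ideal.span {h}).map φ := by rw [Ideal.map_span]; simp
    rw [h1, Ideal.Quotient.eq_zero_iff_mem, h2, hL.mem_map_iff, sup_comm]

theorem LocAt.height_quot [Finite ι] (hL : LocAt K w φ) [IsLocalRing B] {h : MvPolynomial ι ℂ}
    (hw : eval w h = 0) [IsLocalRing (B ⧸ Ideal.span {φ h})] :
    (maximalIdeal B).height ≤ (maximalIdeal (B ⧸ Ideal.span {φ h})).height + 1 := by
  haveI := hL.isNoetherianRing
  have h1 := Ideal.height_le_height_add_one_of_mem (hL.map_mem_iff.mpr hw)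
  have hsurj := Ideal.Quotient.mk_surjective (I := Ideal.span {φ h})
  have hcomap : (maximalIdeal (B ⧸ Ideal.span {φ h})).comap (Ideal.Quotient.mk _) =
      maximalIdeal B := by
    haveI := Ideal.comap_isMaximal_of_surjective (Ideal.Quotient.mk (Ideal.span {φ h})) hsurj
      (K := maximalIdeal (B ⧸ Ideal.span {φ h}))
    exact IsLocalRing.eq_maximalIdeal this
  have hmap : (maximalIdeal B).map (Ideal.Quotient.mk (Ideal.span {φ h})) =
      maximalIdeal (B ⧸ Ideal.span {φ h}) := by
    rw [← hcomap, Ideal.map_comap_of_surjective _ hsurj]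
  rwa [hmap] at h1
end

section
variable {ι : Type} [Fintype ι]

/-- The embedded Zariski tangent space of the scheme defined by `K` at `w`. -/
noncomputable def tanSp (K : Ideal (MvPolynomial ι ℂ)) (w : ι → ℂ) : Submodule ℂ (ι → ℂ) :=
  ⨅ p ∈ K, LinearMap.ker (Dl w p)

theorem mem_tanSp {K : Ideal (MvPolynomial ι ℂ)} {w t : ι → ℂ} :
    t ∈ tanSp K w ↔ ∀ f ∈ K, Dl w f t = 0 := by
  simp [tanSp]

/-- The local ring of a variety at a smooth point, with a regular system of parameters. -/
theorem exists_regular_local (I : Ideal (MvPolynomial ι ℂ)) [I.IsPrime] {v : ι → ℂ}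
    (hv : v ∈ Zs I) {d : ℕ} (hdim : ringKrullDim (MvPolynomial ι ℂ ⧸ I) = (d : ℕ∞))
    (hT : Module.finrank ℂ (tanSp I v) = d) :
    ∃ (B : Type) (_ : CommRing B) (_ : Algebra ℂ B) (_ : IsLocalRing B)
      (φ : MvPolynomial ι ℂ →ₐ[ℂ] B) (u : Fin d → B), LocAt I v φ ∧ RegSys B u ∧
      (d : ℕ∞) ≤ (maximalIdeal B).height := by
  let P := (ptIdeal v).map (Ideal.Quotient.mk I)
  have hP : P.comap (Ideal.Quotient.mk I) = ptIdeal v := by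
    rw [Ideal.comap_map_of_surjective _ Ideal.Quotient.mk_surjective, ← RingHom.ker_eq_comap_bot,
      Ideal.mk_ker]
    exact sup_eq_left.mpr hv
  haveI : P.IsPrime := by
    refine Ideal.map_isPrime_of_surjective Ideal.Quotient.mk_surjective ?_
    rw [Ideal.mk_ker]; exact hv
  have hL := locAt_localization (J := I) (K := I) le_rfl hv
    (fun s hs => ⟨1, by simp, by simpa using hs⟩) P hP
  have hh : (d : ℕ∞) ≤ Ideal.height (R := Localization.AtPrime P) (maximalIdeal (Localization.AtPrime P)) := by
    have h1 := height_pt_quot I hv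
    have h2 := IsLocalization.AtPrime.ringKrullDim_eq_height P (Localization.AtPrime P)
    rw [← IsLocalRing.maximalIdeal_height_eq_ringKrullDim] at h2
    have h3 : (Ideal.height (R := Localization.AtPrime P) (maximalIdeal (Localization.AtPrime P)) : WithBot ℕ∞) = (d : ℕ∞) := by
      rw [h2, ← hdim, ← h1]
    exact (WithBot.coe_inj.mp h3).ge
  obtain ⟨u, hu⟩ := hL.exists_regSys (tanSp I v) (fun t ht => mem_tanSp.mpr ht) hT hh
  exact ⟨_, _, _, _, _, u, hL, hu, hh⟩

theorem finrank_inf_ker {V : Type} [AddCommGroup V] [Module ℂ V] [FiniteDimensional ℂ V]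
    (T : Submodule ℂ V) (l : Module.Dual ℂ V) (h : ¬ T ≤ LinearMap.ker l) {d : ℕ}
    (hT : Module.finrank ℂ T = d + 1) :
    Module.finrank ℂ (T ⊓ LinearMap.ker l : Submodule ℂ V) = d := by
  have h0 : l ∘ₗ T.subtype ≠ 0 := by
    intro h0
    exact h fun t ht => LinearMap.mem_ker.mpr (DFunLike.congr_fun h0 ⟨t, ht⟩)
  have h1 := Module.Dual.finrank_ker_add_one_of_ne_zero h0
  have h2 : (LinearMap.ker (l ∘ₗ T.subtype)).map T.subtype = T ⊓ LinearMap.ker l := by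
    ext t
    simp [and_comm]
  rw [← h2, Submodule.finrank_map_subtype_eq]
  omega

/-- The local ring of a hyperplane section at a point where the hyperplane is not tangent. -/
theorem exists_regular_local_section (I : Ideal (MvPolynomial ι ℂ)) [I.IsPrime] {w : ι → ℂ}
    (hw : w ∈ Zs I) {d : ℕ} (hdim : ringKrullDim (MvPolynomial ι ℂ ⧸ I) = ((d + 1 : ℕ) : ℕ∞))
    (hT : Module.finrank ℂ (tanSp I w) = d + 1) {h : MvPolynomial ι ℂ} (hwh : eval w h = 0)
    (htan : ¬ tanSp I w ≤ LinearMap.ker (Dl w h)) :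
    ∃ (B : Type) (_ : CommRing B) (_ : Algebra ℂ B) (_ : IsLocalRing B)
      (φ : MvPolynomial ι ℂ →ₐ[ℂ] B) (u : Fin d → B), LocAt (I ⊔ Ideal.span {h}) w φ ∧
      RegSys B u := by
  obtain ⟨B, _, _, _, φ, u, hL, hu, hh⟩ := exists_regular_local I hw hdim hT
  have hL' := hL.quot hwh
  haveI := hL'.isLocalRing
  have h1 := hL.height_quot hwh
  have h2 := hh.trans h1
  rw [Nat.cast_add, Nat.cast_one] at h2
  have h3 := (ENat.add_le_add_iff_right ENat.one_ne_top).mp h2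
  obtain ⟨u', hu'⟩ := hL'.exists_regSys (tanSp I w ⊓ LinearMap.ker (Dl w h)) (fun t ht => by
    refine ⟨mem_tanSp.mpr fun f hf => ht f (Ideal.mem_sup_left hf), ?_⟩
    exact ht h (Ideal.mem_sup_right (Ideal.subset_span rfl))) (finrank_inf_ker _ _ htan hT) h3
  exact ⟨_, _, _, _, _, u', hL', hu'⟩

end
end HypSec

/-! ### Homogeneous ideals and linear forms -/

namespace HypSec
attribute [local instance] MvPolynomial.gradedAlgebra

section Homog
variable {ι : Type}

/-- Homogeneity of an ideal for the standard grading. -/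
def HomI (I : Ideal (MvPolynomial ι ℂ)) : Prop := I.IsHomogeneous (homogeneousSubmodule ι ℂ)

/-- The largest homogeneous ideal contained in `I`. -/
noncomputable def core (I : Ideal (MvPolynomial ι ℂ)) : Ideal (MvPolynomial ι ℂ) :=
  (I.homogeneousCore (homogeneousSubmodule ι ℂ)).toIdeal

theorem homI_iff {I : Ideal (MvPolynomial ι ℂ)} :
    HomI I ↔ ∀ p ∈ I, ∀ k, homogeneousComponent k p ∈ I := by
  constructor
  · intro h p hp k
    have := h k hp
    rwa [show ((DirectSum.decompose (homogeneousSubmodule ι ℂ) p k : MvPolynomial ι ℂ)) =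
      homogeneousComponent k p from MvPolynomial.decomposition.decompose'_apply p k] at this
  · intro h k p hp
    rw [show ((DirectSum.decompose (homogeneousSubmodule ι ℂ) p k : MvPolynomial ι ℂ)) =
      homogeneousComponent k p from MvPolynomial.decomposition.decompose'_apply p k]
    exact h p hp k

theorem core_le (I : Ideal (MvPolynomial ι ℂ)) : core I ≤ I := Ideal.toIdeal_homogeneousCore_le _ _

theorem homI_core (I : Ideal (MvPolynomial ι ℂ)) : HomI (core I) :=
  (I.homogeneousCore (homogeneousSubmodule ι ℂ)).isHomogeneous

theorem core_isPrime (I : Ideal (MvPolynomial ι ℂ)) [h : I.IsPrime] : (core I).IsPrime :=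
  Ideal.IsPrime.homogeneousCore h

theorem mem_core_of_homog {I : Ideal (MvPolynomial ι ℂ)} {p : MvPolynomial ι ℂ} {k : ℕ}
    (hp : p.IsHomogeneous k) (h : p ∈ I) : p ∈ core I :=
  Ideal.mem_homogeneousCore_of_homogeneous_of_mem ⟨k, hp⟩ h

theorem le_core {I J : Ideal (MvPolynomial ι ℂ)} (hJ : HomI J) (h : J ≤ I) : J ≤ core I := by
  have := Ideal.homogeneousCore_mono (homogeneousSubmodule ι ℂ) h
  have h2 : (J.homogeneousCore (homogeneousSubmodule ι ℂ)).toIdeal = J :=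
    Ideal.IsHomogeneous.toIdeal_homogeneousCore_eq_self hJ
  rw [← h2]; exact this

theorem eval_smul_eq (p : MvPolynomial ι ℂ) (t : ℂ) (x : ι → ℂ) :
    eval (t • x) p = ∑ k ∈ Finset.range (p.totalDegree + 1),
      t ^ k * eval x (homogeneousComponent k p) := by
  conv_lhs => rw [← sum_homogeneousComponent p]
  rw [map_sum]
  refine Finset.sum_congr rfl fun k _ => ?_
  have := aeval_smul_of_isHomogeneous (homogeneousComponent_isHomogeneous k p) t x
  simpa [aeval_eq_eval, Pi.smul_def] using this

theorem Zs_smul {J : Ideal (MvPolynomial ι ℂ)} (hJ : HomI J) {x : ι → ℂ} (hx : x ∈ Zs J) (t : ℂ) :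
    t • x ∈ Zs J := by
  intro p hp
  rw [eval_smul_eq]
  refine Finset.sum_eq_zero fun k _ => ?_
  rw [hx _ (homI_iff.1 hJ p hp k), mul_zero]

/-- The ideal of polynomials vanishing on a subset of `ℂ^ι`. -/
def vI (V : Set (ι → ℂ)) : Ideal (MvPolynomial ι ℂ) where
  carrier := {p | ∀ v ∈ V, eval v p = 0}
  add_mem' := by intro a b ha hb v hv; simp [ha v hv, hb v hv]
  zero_mem' := by intro v hv; simp
  smul_mem' := by intro c a ha v hv; simp [ha v hv]

theorem mem_vI {V : Set (ι → ℂ)} {p : MvPolynomial ι ℂ} : p ∈ vI V ↔ ∀ v ∈ V, eval v p = 0 := Iff.rfl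

/-- The vanishing ideal of a set stable under non-zero scalars is homogeneous. -/
theorem homI_vI {V : Set (ι → ℂ)} (hV : ∀ v ∈ V, ∀ t : ℂ, t ≠ 0 → t • v ∈ V) : HomI (vI V) := by
  rw [homI_iff]
  intro p hp k v hv
  set P : Polynomial ℂ := ∑ k ∈ Finset.range (p.totalDegree + 1),
    Polynomial.C (eval v (homogeneousComponent k p)) * Polynomial.X ^ k with hP
  have hP0 : P = 0 := by
    apply Polynomial.eq_zero_of_infinite_isRoot
    refine Set.Infinite.mono (s := {0}ᶜ) ?_ (Set.finite_singleton (0 : ℂ)).infinite_compl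
    intro t ht
    have := hp _ (hV v hv t ht)
    rw [eval_smul_eq] at this
    simp only [Set.mem_setOf_eq, Polynomial.IsRoot.def, hP, Polynomial.eval_finset_sum]
    rw [← this]
    refine Finset.sum_congr rfl fun k _ => ?_
    rw [Polynomial.eval_mul, Polynomial.eval_C, Polynomial.eval_pow, Polynomial.eval_X, mul_comm]
  by_cases hk : k < p.totalDegree + 1
  · have h2 : P.coeff k = eval v (homogeneousComponent k p) := by
      rw [hP, Polynomial.finset_sum_coeff]
      simp only [Polynomial.coeff_C_mul_X_pow]
      rw [Finset.sum_ite_eq]; simp; intro h; omega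
    rw [← h2, hP0]; simp
  · rw [homogeneousComponent_eq_zero _ _ (by omega)]; simp

theorem isHomogeneous_mem_ptIdeal_zero {p : MvPolynomial ι ℂ} {k : ℕ} (hk : k ≠ 0)
    (hp : p.IsHomogeneous k) : p ∈ ptIdeal (0 : ι → ℂ) := by
  rw [mem_ptIdeal]
  have := aeval_smul_of_isHomogeneous hp 0 (0 : ι → ℂ)
  simpa [aeval_eq_eval, hk, ← Pi.zero_def] using this

theorem homI_le_ptIdeal_zero [Finite ι] {J : Ideal (MvPolynomial ι ℂ)} (hJ : HomI J) (h : J ≠ ⊤) :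
    J ≤ ptIdeal 0 := by
  obtain ⟨x, hx⟩ := Zs_nonempty h
  have := Zs_smul hJ hx 0
  rw [zero_smul] at this
  exact mem_Zs_iff_le.1 this

theorem homI_ptIdeal_zero : HomI (ptIdeal (0 : ι → ℂ)) := by
  have : ptIdeal (0 : ι → ℂ) = vI {0} := by ext p; simp [mem_ptIdeal, mem_vI]
  rw [this]
  apply homI_vI
  rintro v rfl t ht; simp

theorem HomI.sup {I J : Ideal (MvPolynomial ι ℂ)} (hI : HomI I) (hJ : HomI J) : HomI (I ⊔ J) :=
  Ideal.IsHomogeneous.sup hI hJ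

theorem homI_span {S : Set (MvPolynomial ι ℂ)} (h : ∀ p ∈ S, ∃ k, p.IsHomogeneous k) :
    HomI (Ideal.span S) :=
  Ideal.homogeneous_span _ _ (fun p hp => h p hp)

theorem homI_span_singleton {p : MvPolynomial ι ℂ} {k} (h : p.IsHomogeneous k) :
    HomI (Ideal.span {p}) := homI_span (by rintro _ rfl; exact ⟨k, h⟩)

end Homog

section Lin
variable {ι : Type} [Fintype ι]

/-- The linear form `η` as a polynomial. -/
noncomputable def lf (η : Module.Dual ℂ (ι → ℂ)) : MvPolynomial ι ℂ := affForm 0 η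

theorem lf_eq (η : Module.Dual ℂ (ι → ℂ)) [DecidableEq ι] :
    lf η = ∑ i, C (η (Pi.single i 1)) * X i := by
  simp only [lf, affForm]
  refine Finset.sum_congr rfl fun i _ => ?_
  simp
  congr!

theorem eval_lf (η : Module.Dual ℂ (ι → ℂ)) (x : ι → ℂ) : eval x (lf η) = η x := by
  classical
  rw [lf_eq, LinearMap.pi_apply_eq_sum_univ η x, map_sum]
  refine Finset.sum_congr rfl fun i _ => ?_
  rw [map_mul, eval_C, eval_X, smul_eq_mul, mul_comm]
  congr 2
  ext j
  simp [Pi.single_apply, eq_comm]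

theorem lf_isHomogeneous (η : Module.Dual ℂ (ι → ℂ)) : (lf η).IsHomogeneous 1 := by
  classical
  rw [lf_eq]
  refine IsHomogeneous.sum _ _ _ fun i _ => ?_
  simpa using (isHomogeneous_C ι _).mul (isHomogeneous_X ℂ i)

theorem exists_lf {h : MvPolynomial ι ℂ} (hh : h.IsHomogeneous 1) : ∃ η, h = lf η := by
  classical
  have h1 : h ∈ homogeneousSubmodule ι ℂ 1 := hh
  rw [homogeneousSubmodule_one_eq_span_X] at h1
  refine Submodule.span_induction ?_ ?_ ?_ ?_ h1
  · rintro _ ⟨i, rfl⟩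
    refine ⟨LinearMap.proj i, MvPolynomial.funext fun x => ?_⟩
    rw [eval_lf]; simp
  · exact ⟨0, MvPolynomial.funext fun x => by rw [eval_lf]; simp⟩
  · rintro _ _ _ _ ⟨a, rfl⟩ ⟨b, rfl⟩
    exact ⟨a + b, MvPolynomial.funext fun x => by simp [eval_lf]⟩
  · rintro c _ _ ⟨a, rfl⟩
    exact ⟨c • a, MvPolynomial.funext fun x => by simp [eval_lf, smul_eval]⟩

end Lin

section Chain
variable {R : Type} [CommRing R]

theorem length_le_dim_quot {J : Ideal R} (p : LTSeries (PrimeSpectrum R)) (h : J ≤ p.head.asIdeal) :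
    (p.length : WithBot ℕ∞) ≤ ringKrullDim (R ⧸ J) := by
  rw [ringKrullDim_quotient]
  let q : LTSeries (PrimeSpectrum.zeroLocus (J : Set R)) :=
    LTSeries.mk p.length (fun i => ⟨p i, by
      have : p.head ≤ p i := LTSeries.head_le _ i
      exact fun x hx => this (h hx)⟩) (fun i j hij => p.strictMono hij)
  exact Order.LTSeries.length_le_krullDim q

theorem exists_chain_of_le_dim_quot {J : Ideal R} {k : ℕ} (h : (k : WithBot ℕ∞) ≤ ringKrullDim (R ⧸ J)) :
    ∃ p : LTSeries (PrimeSpectrum R), p.length = k ∧ J ≤ p.head.asIdeal := by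
  rw [ringKrullDim_quotient] at h
  obtain ⟨p, hp⟩ := Order.le_krullDim_iff.1 h
  exact ⟨p.map Subtype.val (fun _ _ h => h), hp, p.head.2⟩

end Chain
end HypSec

/-! ### Chains of primes and parameters for cones -/

namespace HypSec

theorem dim_quot_le_of_length_le {R : Type} [CommRing R] {J : Ideal R} {k : WithBot ℕ∞}
    (h : ∀ p : LTSeries (PrimeSpectrum R), J ≤ p.head.asIdeal → (p.length : WithBot ℕ∞) ≤ k) :
    ringKrullDim (R ⧸ J) ≤ k := by
  rw [ringKrullDim_quotient]
  refine iSup_le fun p => ?_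
  exact h (p.map Subtype.val (fun _ _ h => h)) p.head.2

theorem chain_cons {α : Type} [Preorder α] (p : LTSeries α) {a : α} (h : a < p.head) :
    ∃ q : LTSeries α, q.length = p.length + 1 ∧ q.head = a :=
  ⟨RelSeries.cons p a h, by rw [RelSeries.cons_length], RelSeries.head_cons _ _ _⟩

theorem chain_two {α : Type} [Preorder α] {a b : α} (h : a < b) :
    ∃ q : LTSeries α, q.length = 1 ∧ q.head = a :=
  chain_cons (RelSeries.singleton _ b) h

theorem exists_chain_of_height {A : Type} [CommRing A] (M : Ideal A) [hM : M.IsPrime] {j : ℕ}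
    (h : (j : ℕ∞) ≤ M.height) :
    ∃ p : LTSeries (PrimeSpectrum A), p.length = j ∧ p.last.asIdeal = M := by
  rw [show M.height = Order.height (⟨M, hM⟩ : PrimeSpectrum A) from
    PrimeSpectrum.height_eq_orderHeight ⟨M, hM⟩] at h
  obtain ⟨p, hp, hlen⟩ := Order.exists_series_of_le_height _ h
  exact ⟨p, hlen, by rw [hp]⟩

theorem pull_chain {A B : Type} [CommRing A] [CommRing B] (f : A →+* B)
    (hf : Function.Surjective f) (p : LTSeries (PrimeSpectrum B)) :
    ∃ q : LTSeries (PrimeSpectrum A), q.length = p.length ∧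
      q.head.asIdeal = p.head.asIdeal.comap f ∧ q.last.asIdeal = p.last.asIdeal.comap f := by
  have hinj := PrimeSpectrum.comap_injective_of_surjective f hf
  have hmono : StrictMono (PrimeSpectrum.comap f) :=
    Monotone.strictMono_of_injective (fun a b hab => Ideal.comap_mono hab) hinj
  exact ⟨p.map _ hmono, rfl, by rw [LTSeries.head_map]; rfl, by rw [LTSeries.last_map]; rfl⟩

section
variable {ι : Type} [Fintype ι]

theorem exists_nonzero_mem_Zs {P : Ideal (MvPolynomial ι ℂ)} [P.IsPrime] (hP : HomI P)
    (hne : P ≠ ptIdeal 0) : ∃ x ∈ Zs P, x ≠ 0 := by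
  by_contra! hcon
  apply hne
  refine le_antisymm (homI_le_ptIdeal_zero hP (Ideal.IsPrime.ne_top inferInstance)) fun q hq => ?_
  apply mem_prime_of_vanish
  intro x hx
  rw [hcon x hx]; exact hq

/-- For `x ≠ 0` the ideal `core (ptIdeal x)`, which is the ideal of the line through `x`, is
strictly smaller than the ideal of the origin. -/
theorem core_ptIdeal_lt {x : ι → ℂ} (hx : x ≠ 0) : core (ptIdeal x) < ptIdeal 0 := by
  haveI := core_isPrime (ptIdeal x)
  refine lt_of_le_of_ne (homI_le_ptIdeal_zero (homI_core _) (Ideal.IsPrime.ne_top inferInstance)) ?_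
  intro h
  obtain ⟨i, hi⟩ := Function.ne_iff.1 hx
  have h1 : (X i : MvPolynomial ι ℂ) ∈ ptIdeal (0 : ι → ℂ) := by simp [mem_ptIdeal]
  rw [← h] at h1
  have := core_le _ h1
  rw [mem_ptIdeal] at this
  simp at this
  exact hi this

/-- A cone of dimension at most `k` is cut down to the origin by `k` linear forms. -/
theorem exists_sop (k : ℕ) : ∀ (J : Ideal (MvPolynomial ι ℂ)), HomI J →
    ringKrullDim (MvPolynomial ι ℂ ⧸ J) ≤ (k : ℕ∞) →
    ∃ l : Fin k → Module.Dual ℂ (ι → ℂ), ∀ x ∈ Zs J, (∀ i, l i x = 0) → x = 0 := by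
  induction k with
  | zero =>
    intro J hJ hdim
    refine ⟨Fin.elim0, fun x hx _ => ?_⟩
    by_contra hx0
    haveI := core_isPrime (ptIdeal x)
    obtain ⟨p, h2, hph⟩ := chain_two (show (⟨core (ptIdeal x), inferInstance⟩ :
      PrimeSpectrum (MvPolynomial ι ℂ)) < ⟨ptIdeal 0, inferInstance⟩ from core_ptIdeal_lt hx0)
    have h1 := length_le_dim_quot (J := J) p (by
      rw [hph]; exact le_core hJ (mem_Zs_iff_le.1 hx))
    rw [h2] at h1
    have := h1.trans hdim
    norm_num at this
  | succ k ih =>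
    intro J hJ hdim
    have hfin : (J.minimalPrimes \ {ptIdeal 0}).Finite :=
      (Ideal.finite_minimalPrimes_of_isNoetherianRing _ J).subset Set.diff_subset
    let W : Ideal (MvPolynomial ι ℂ) → Submodule ℂ (Module.Dual ℂ (ι → ℂ)) := fun P =>
      { carrier := {η | lf η ∈ P}
        add_mem' := by
          intro a b ha hb
          have : lf (a + b) = lf a + lf b := MvPolynomial.funext fun x => by simp [eval_lf]
          simp only [Set.mem_setOf_eq] at *; rw [this]; exact P.add_mem ha hb
        zero_mem' := by
          have : lf (0 : Module.Dual ℂ (ι → ℂ)) = 0 := MvPolynomial.funext fun x => by simp [eval_lf]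
          simp only [Set.mem_setOf_eq]; rw [this]; exact P.zero_mem
        smul_mem' := by
          intro c a ha
          have : lf (c • a) = C c * lf a := MvPolynomial.funext fun x => by simp [eval_lf]
          simp only [Set.mem_setOf_eq] at *; rw [this]; exact P.mul_mem_left _ ha }
    classical
    have hne : ∃ η : Module.Dual ℂ (ι → ℂ), ∀ P ∈ J.minimalPrimes, P ≠ ptIdeal 0 → lf η ∉ P := by
      have h1 := Subspace.biUnion_ne_univ_of_top_notMem (k := ℂ) (s := hfin.toFinset.image W) (by
        intro hmem
        rw [Finset.mem_image] at hmem
        obtain ⟨P, hP, hW⟩ := hmem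
        rw [Set.Finite.mem_toFinset] at hP
        haveI := hP.1.1.1
        have hPh : HomI P := by
          have h3 : core P = P := by
            haveI := core_isPrime P
            exact le_antisymm (core_le P) (hP.1.2 ⟨inferInstance, le_core hJ hP.1.1.2⟩ (core_le P))
          rw [← h3]; exact homI_core P
        obtain ⟨x, hx, hx0⟩ := exists_nonzero_mem_Zs hPh hP.2
        obtain ⟨i, hi⟩ := Function.ne_iff.1 hx0
        have h4 : (LinearMap.proj i : Module.Dual ℂ (ι → ℂ)) ∈ W P := by rw [hW]; trivial
        have h5 := hx _ h4
        rw [eval_lf] at h5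
        exact hi h5)
      obtain ⟨η, hη⟩ := (Set.ne_univ_iff_exists_notMem _).1 h1
      refine ⟨η, fun P hP hP0 hmem => hη ?_⟩
      simp only [Set.mem_iUnion, Finset.mem_image, Set.Finite.mem_toFinset]
      exact ⟨W P, ⟨P, ⟨hP, hP0⟩, rfl⟩, hmem⟩
    obtain ⟨η, hη⟩ := hne
    obtain ⟨l, hl⟩ := ih (J ⊔ Ideal.span {lf η}) (hJ.sup (homI_span_singleton (lf_isHomogeneous η))) (by
      refine dim_quot_le_of_length_le fun p hp => ?_
      obtain ⟨P, hP, hPle⟩ := Ideal.exists_minimalPrimes_le (le_sup_left.trans hp)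
      haveI := hP.1.1
      by_cases hP0 : P = ptIdeal 0
      · have h0 : p.length = 0 := by
          by_contra hlen
          have h1 : p 0 < p (Fin.last _) := p.strictMono (by
            rw [Fin.lt_def]; simp; omega)
          have h2 : (ptIdeal (0 : ι → ℂ)) < (p (Fin.last _)).asIdeal := by
            rw [← hP0]; exact lt_of_le_of_lt hPle h1
          exact (p (Fin.last _)).2.ne_top ((ptIdeal_isMaximal (0 : ι → ℂ)).1.2 _ h2)
        rw [h0]; simp
      · have hlt : (⟨P, inferInstance⟩ : PrimeSpectrum (MvPolynomial ι ℂ)) < p.head := by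
          refine lt_of_le_of_ne hPle ?_
          intro h
          refine hη P hP hP0 ?_
          have : P = p.head.asIdeal := congrArg PrimeSpectrum.asIdeal h
          rw [this]
          exact hp (Ideal.mem_sup_right (Ideal.subset_span rfl))
        have h1 := length_le_dim_quot (J := J) (RelSeries.cons p _ hlt) (by
          rw [RelSeries.head_cons]; exact hP.1.2)
        have h2 := h1.trans hdim
        rw [RelSeries.cons_length] at h2
        norm_cast at h2 ⊢
        omega)
    refine ⟨Fin.cons η l, fun x hx hx2 => hl x ?_ fun i => by simpa using hx2 i.succ⟩
    rw [mem_Zs_iff_le, sup_le_iff, Ideal.span_singleton_le_iff_mem, mem_ptIdeal, eval_lf]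
    exact ⟨mem_Zs_iff_le.1 hx, by simpa using hx2 0⟩

/-- An irreducible cone containing `p` and meeting the hyperplane `η = 0` only at the origin is
contained in the line through `p`: by Krull's principal ideal theorem its dimension is at most `1`.
-/
theorem core_le_of_section {P : Ideal (MvPolynomial ι ℂ)} [P.IsPrime] (hP : HomI P) {p : ι → ℂ}
    (hp : p ≠ 0) (hpP : P ≤ ptIdeal p) (η : Module.Dual ℂ (ι → ℂ))
    (h : ∀ x ∈ Zs P, η x = 0 → x = 0) : core (ptIdeal p) ≤ P := by
  haveI := core_isPrime (ptIdeal p)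
  have hle : P ≤ core (ptIdeal p) := le_core hP hpP
  by_contra hcon
  have hlt : P < core (ptIdeal p) := lt_of_le_not_ge hle hcon
  have hP0 : P ≤ ptIdeal 0 := homI_le_ptIdeal_zero hP (Ideal.IsPrime.ne_top inferInstance)
  have hmin : (ptIdeal (0 : ι → ℂ)) ∈ (P ⊔ Ideal.span {lf η}).minimalPrimes := by
    refine ⟨⟨inferInstance, ?_⟩, ?_⟩
    · rw [sup_le_iff, Ideal.span_singleton_le_iff_mem, mem_ptIdeal, eval_lf]
      exact ⟨hP0, by simp⟩
    · rintro Q ⟨hQ, hQ2⟩ hQ3 q hq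
      haveI := hQ
      apply mem_prime_of_vanish
      intro x hx
      have h1 := mem_Zs_iff_le.1 (Zs_anti hQ2 hx)
      rw [sup_le_iff, Ideal.span_singleton_le_iff_mem, mem_ptIdeal, eval_lf] at h1
      rw [h x (mem_Zs_iff_le.2 h1.1) h1.2]; exact hq
  have h1 := Ideal.map_height_le_one_of_mem_minimalPrimes hmin
  have h2 := height_pt_quot P (mem_Zs_iff_le.2 hP0)
  obtain ⟨c1, hc1, hch1⟩ := chain_two (show (⟨core (ptIdeal p), inferInstance⟩ :
      PrimeSpectrum (MvPolynomial ι ℂ)) < ⟨ptIdeal 0, inferInstance⟩ from core_ptIdeal_lt hp)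
  obtain ⟨c, h4, hch⟩ := chain_cons c1 (a := (⟨P, inferInstance⟩ :
      PrimeSpectrum (MvPolynomial ι ℂ))) (by rw [hch1]; exact hlt)
  rw [hc1] at h4
  have h3 := length_le_dim_quot (J := P) c (by rw [hch])
  rw [h4, ← h2] at h3
  have h5 := h3.trans (WithBot.coe_le_coe.2 h1)
  norm_num at h5

/-- Krull's height theorem: a variety of dimension at least `m + j` through `v`, cut by `m`
equations vanishing at `v`, contains a subvariety of dimension at least `j` through `v`. The
dimension is witnessed by a chain of primes ending at `v`. -/
theorem exists_chain_over (P : Ideal (MvPolynomial ι ℂ)) [P.IsPrime] {v : ι → ℂ} (hv : v ∈ Zs P)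
    {m j : ℕ} (hdim : ((m + j : ℕ) : WithBot ℕ∞) ≤ ringKrullDim (MvPolynomial ι ℂ ⧸ P))
    (F : Fin m → MvPolynomial ι ℂ) (hF : ∀ i, eval v (F i) = 0) :
    ∃ p : LTSeries (PrimeSpectrum (MvPolynomial ι ℂ)), p.length = j ∧ P ≤ p.head.asIdeal ∧
      (∀ i, F i ∈ p.head.asIdeal) ∧ p.last.asIdeal = ptIdeal v := by
  set R := MvPolynomial ι ℂ ⧸ P with hR
  let π : MvPolynomial ι ℂ →+* R := Ideal.Quotient.mk P
  have hPv := mem_Zs_iff_le.1 hv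
  have hs : Function.Surjective π := Ideal.Quotient.mk_surjective
  have hker : RingHom.ker π = P := Ideal.mk_ker
  haveI hM1 : ((ptIdeal v).map π).IsPrime :=
    Ideal.map_isPrime_of_surjective hs (by rw [hker]; exact hPv)
  let I : Ideal R := Ideal.span (Set.range fun i => π (F i))
  have hI : I ≤ (ptIdeal v).map π := by
    rw [Ideal.span_le]; rintro _ ⟨i, rfl⟩
    exact Ideal.mem_map_of_mem _ (hF i)
  have h1 := Ideal.height_le_height_add_spanFinrank_of_le hI
  have h2 : I.spanFinrank ≤ m := by
    refine (Submodule.spanFinrank_span_le_ncard_of_finite (Set.finite_range _)).trans ?_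
    rw [← Set.image_univ]
    refine (Set.ncard_image_le).trans ?_
    simp [Set.ncard_univ]
  have h3 := height_pt_quot P hv
  rw [← h3] at hdim
  have hdim' : ((m + j : ℕ) : ℕ∞) ≤ ((ptIdeal v).map π).height := by exact_mod_cast hdim
  let ρ : R →+* R ⧸ I := Ideal.Quotient.mk I
  have hs2 : Function.Surjective ρ := Ideal.Quotient.mk_surjective
  have h4 : (j : ℕ∞) ≤ (((ptIdeal v).map π).map ρ).height := by
    have h5 : ((m + j : ℕ) : ℕ∞) ≤ (((ptIdeal v).map π).map ρ).height + (m : ℕ∞) :=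
      hdim'.trans (h1.trans (by gcongr))
    push_cast at h5
    rw [add_comm] at h5
    exact (ENat.add_le_add_iff_right (ENat.coe_ne_top m)).1 h5
  have hker2 : RingHom.ker ρ = I := Ideal.mk_ker
  haveI hM2 : (((ptIdeal v).map π).map ρ).IsPrime :=
    Ideal.map_isPrime_of_surjective hs2 (by rw [hker2]; exact hI)
  obtain ⟨p, hlen, hp⟩ := exists_chain_of_height _ h4
  obtain ⟨p1, hl1, hh1, ht1⟩ := pull_chain ρ hs2 p
  obtain ⟨p2, hl2, hh2, ht2⟩ := pull_chain π hs p1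
  refine ⟨p2, by rw [hl2, hl1, hlen], ?_, ?_, ?_⟩
  · rw [hh2, hh1]
    intro x hx
    rw [Ideal.mem_comap, Ideal.mem_comap]
    have : π x = 0 := Ideal.Quotient.eq_zero_iff_mem.2 hx
    rw [this, map_zero]; exact Ideal.zero_mem _
  · intro i
    rw [hh2, hh1]
    rw [Ideal.mem_comap, Ideal.mem_comap]
    have : ρ (π (F i)) = 0 := Ideal.Quotient.eq_zero_iff_mem.2 (Ideal.subset_span ⟨i, rfl⟩)
    rw [this]; exact Ideal.zero_mem _
  · rw [ht2, ht1, hp]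
    show Ideal.comap π (Ideal.comap ρ (((ptIdeal v).map π).map ρ)) = _
    rw [Ideal.comap_map_of_surjective' _ hs2, hker2, sup_eq_left.2 hI,
      Ideal.comap_map_of_surjective' _ hs, hker, sup_eq_left.2 hPv]

end
end HypSec

/-! ### Products and the difference map -/

namespace HypSec

section Prod
variable {ι κ : Type} [Fintype ι] [Fintype κ]

/-- Vanishing ideal of the product of two zero loci. -/
def prodI (P : Ideal (MvPolynomial ι ℂ)) (Q : Ideal (MvPolynomial κ ℂ)) :
    Ideal (MvPolynomial (ι ⊕ κ) ℂ) :=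
  vI {z | (∃ y ∈ Zs P, ∃ x ∈ Zs Q, z = Sum.elim y x)}

theorem mem_prodI {P : Ideal (MvPolynomial ι ℂ)} {Q : Ideal (MvPolynomial κ ℂ)}
    {f : MvPolynomial (ι ⊕ κ) ℂ} :
    f ∈ prodI P Q ↔ ∀ y ∈ Zs P, ∀ x ∈ Zs Q, eval (Sum.elim y x) f = 0 := by
  constructor
  · intro h y hy x hx; exact h _ ⟨y, hy, x, hx, rfl⟩
  · rintro h _ ⟨y, hy, x, hx, rfl⟩; exact h y hy x hx

theorem prodI_mono {P P' : Ideal (MvPolynomial ι ℂ)} {Q Q' : Ideal (MvPolynomial κ ℂ)}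
    (h : P ≤ P') (h' : Q ≤ Q') : prodI P Q ≤ prodI P' Q' := by
  intro f hf
  rw [mem_prodI] at hf ⊢
  exact fun y hy x hx => hf y (Zs_anti h hy) x (Zs_anti h' hx)

theorem rename_inl_mem {P : Ideal (MvPolynomial ι ℂ)} {Q : Ideal (MvPolynomial κ ℂ)}
    {p : MvPolynomial ι ℂ} (hp : p ∈ P) : rename Sum.inl p ∈ prodI P Q := by
  rw [mem_prodI]
  intro y hy x hx
  rw [eval_rename]; exact hy p hp

theorem rename_inr_mem {P : Ideal (MvPolynomial ι ℂ)} {Q : Ideal (MvPolynomial κ ℂ)}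
    {p : MvPolynomial κ ℂ} (hp : p ∈ Q) : rename Sum.inr p ∈ prodI P Q := by
  rw [mem_prodI]
  intro y hy x hx
  rw [eval_rename]; exact hx p hp

theorem elim_mem_Zs_prodI {P : Ideal (MvPolynomial ι ℂ)} {Q : Ideal (MvPolynomial κ ℂ)}
    {y : ι → ℂ} {x : κ → ℂ} : Sum.elim y x ∈ Zs (prodI P Q) ↔ y ∈ Zs P ∧ x ∈ Zs Q := by
  constructor
  · intro h
    refine ⟨fun p hp => ?_, fun p hp => ?_⟩
    · have := h _ (rename_inl_mem (Q := Q) hp)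
      rwa [eval_rename] at this
    · have := h _ (rename_inr_mem (P := P) hp)
      rwa [eval_rename] at this
  · rintro ⟨hy, hx⟩ f hf
    exact mem_prodI.1 hf y hy x hx

theorem mem_Zs_prodI {P : Ideal (MvPolynomial ι ℂ)} {Q : Ideal (MvPolynomial κ ℂ)}
    {z : ι ⊕ κ → ℂ} : z ∈ Zs (prodI P Q) ↔ z ∘ Sum.inl ∈ Zs P ∧ z ∘ Sum.inr ∈ Zs Q := by
  rw [← elim_mem_Zs_prodI, Sum.elim_comp_inl_inr]

/-- Partial evaluation in the first block of variables. -/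
noncomputable def evL (y : ι → ℂ) : MvPolynomial (ι ⊕ κ) ℂ →ₐ[ℂ] MvPolynomial κ ℂ :=
  aeval (Sum.elim (fun i => C (y i)) X)

/-- Partial evaluation in the second block of variables. -/
noncomputable def evR (x : κ → ℂ) : MvPolynomial (ι ⊕ κ) ℂ →ₐ[ℂ] MvPolynomial ι ℂ :=
  aeval (Sum.elim X (fun i => C (x i)))

theorem eval_evL (y : ι → ℂ) (x : κ → ℂ) (f : MvPolynomial (ι ⊕ κ) ℂ) :
    eval x (evL y f) = eval (Sum.elim y x) f := by
  induction f using MvPolynomial.induction_on with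
  | C a => simp [evL, algebraMap_eq]
  | add p q hp hq => simp [hp, hq]
  | mul_X p i hp => rcases i with i | i <;> simp [hp] <;> left <;> simp [evL]

theorem eval_evR (y : ι → ℂ) (x : κ → ℂ) (f : MvPolynomial (ι ⊕ κ) ℂ) :
    eval y (evR x f) = eval (Sum.elim y x) f := by
  induction f using MvPolynomial.induction_on with
  | C a => simp [evR, algebraMap_eq]
  | add p q hp hq => simp [hp, hq]
  | mul_X p i hp => rcases i with i | i <;> simp [hp] <;> left <;> simp [evR]

/-- The product of two irreducible varieties over `ℂ` is irreducible. -/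
theorem prodI_isPrime (P : Ideal (MvPolynomial ι ℂ)) (Q : Ideal (MvPolynomial κ ℂ))
    [hP : P.IsPrime] [hQ : Q.IsPrime] : (prodI P Q).IsPrime := by
  refine ⟨?_, ?_⟩
  · obtain ⟨y, hy⟩ := Zs_nonempty hP.ne_top
    obtain ⟨x, hx⟩ := Zs_nonempty hQ.ne_top
    intro h
    have : (1 : MvPolynomial (ι ⊕ κ) ℂ) ∈ prodI P Q := by rw [h]; trivial
    simpa using mem_prodI.1 this y hy x hx
  · intro f g hfg
    by_contra! hcon
    simp only [mem_prodI] at hcon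
    push Not at hcon
    obtain ⟨⟨y0, hy0, x0, hx0, hf⟩, ⟨y1, hy1, x1, hx1, hg⟩⟩ := hcon
    have h1 : evR x0 f ∉ P := fun h => hf (by rw [← eval_evR]; exact hy0 _ h)
    have h2 : evR x1 g ∉ P := fun h => hg (by rw [← eval_evR]; exact hy1 _ h)
    have h3 : evR x0 f * evR x1 g ∉ P := fun h => (hP.mem_or_mem h).elim h1 h2
    obtain ⟨y, hy, hyv⟩ : ∃ y ∈ Zs P, eval y (evR x0 f * evR x1 g) ≠ 0 := by
      by_contra! hc
      exact h3 (mem_prime_of_vanish hc)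
    rw [map_mul, eval_evR, eval_evR] at hyv
    have h4 : evL y f ∉ Q := fun h => (left_ne_zero_of_mul hyv) (by rw [← eval_evL]; exact hx0 _ h)
    have h5 : evL y g ∉ Q := fun h => (right_ne_zero_of_mul hyv) (by rw [← eval_evL]; exact hx1 _ h)
    refine (hQ.mem_or_mem (x := evL y f) (y := evL y g) ?_).elim h4 h5
    apply mem_prime_of_vanish
    intro x hx
    rw [← map_mul, eval_evL]
    exact mem_prodI.1 hfg y hy x hx

theorem prodI_lt_left {P P' : Ideal (MvPolynomial ι ℂ)} {Q : Ideal (MvPolynomial κ ℂ)}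
    [P.IsPrime] [hQ : Q.IsPrime] (h : P < P') : prodI P Q < prodI P' Q := by
  refine lt_of_le_not_ge (prodI_mono h.le le_rfl) fun hle => ?_
  obtain ⟨p, hp, hp'⟩ := Set.exists_of_ssubset h
  apply hp'
  apply mem_prime_of_vanish
  intro y hy
  obtain ⟨x, hx⟩ := Zs_nonempty hQ.ne_top
  have := mem_prodI.1 (hle (rename_inl_mem hp)) y hy x hx
  rwa [eval_rename] at this

theorem prodI_lt_right {P : Ideal (MvPolynomial ι ℂ)} {Q Q' : Ideal (MvPolynomial κ ℂ)}
    [hP : P.IsPrime] [hQ : Q.IsPrime] (h : Q < Q') : prodI P Q < prodI P Q' := by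
  refine lt_of_le_not_ge (prodI_mono le_rfl h.le) fun hle => ?_
  obtain ⟨p, hp, hp'⟩ := Set.exists_of_ssubset h
  apply hp'
  apply mem_prime_of_vanish
  intro x hx
  obtain ⟨y, hy⟩ := Zs_nonempty hP.ne_top
  have := mem_prodI.1 (hle (rename_inr_mem hp)) y hy x hx
  rwa [eval_rename] at this

/-- Dimensions add in products: chains of primes in the two factors are concatenated. -/
theorem dim_prodI {P : Ideal (MvPolynomial ι ℂ)} {Q : Ideal (MvPolynomial κ ℂ)} {a b : ℕ}
    (ha : (a : WithBot ℕ∞) ≤ ringKrullDim (MvPolynomial ι ℂ ⧸ P))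
    (hb : (b : WithBot ℕ∞) ≤ ringKrullDim (MvPolynomial κ ℂ ⧸ Q)) :
    ((a + b : ℕ) : WithBot ℕ∞) ≤ ringKrullDim (MvPolynomial (ι ⊕ κ) ℂ ⧸ prodI P Q) := by
  obtain ⟨p, hp, hp'⟩ := exists_chain_of_le_dim_quot ha
  obtain ⟨q, hq, hq'⟩ := exists_chain_of_le_dim_quot hb
  let c1 : LTSeries (PrimeSpectrum (MvPolynomial (ι ⊕ κ) ℂ)) :=
    p.map (fun P => ⟨prodI P.asIdeal q.head.asIdeal, prodI_isPrime _ _⟩)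
      (fun P P' h => prodI_lt_left h)
  let c2 : LTSeries (PrimeSpectrum (MvPolynomial (ι ⊕ κ) ℂ)) :=
    q.map (fun Q => ⟨prodI p.last.asIdeal Q.asIdeal, prodI_isPrime _ _⟩)
      (fun P P' h => prodI_lt_right h)
  have hc : c1.last = c2.head := rfl
  have h1 : (c1.smash c2 hc).length = a + b := by rw [RelSeries.smash_length, ← hp, ← hq]; rfl
  rw [← h1]
  apply length_le_dim_quot
  rw [RelSeries.head_smash]
  exact prodI_mono hp' hq'

theorem homI_prodI {P : Ideal (MvPolynomial ι ℂ)} {Q : Ideal (MvPolynomial κ ℂ)} (hP : HomI P)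
    (hQ : HomI Q) : HomI (prodI P Q) := by
  apply homI_vI
  rintro _ ⟨y, hy, x, hx, rfl⟩ t _
  refine ⟨t • y, Zs_smul hP hy t, t • x, Zs_smul hQ hx t, ?_⟩
  ext (i | i) <;> simp

end Prod

section Diff
variable {ι : Type} [Fintype ι]

/-- The substitution `F ↦ F(x - y)`, where `y` is the first and `x` the second block of variables.
-/
noncomputable def dif : MvPolynomial ι ℂ →ₐ[ℂ] MvPolynomial (ι ⊕ ι) ℂ :=
  aeval (fun i => X (Sum.inr i) - X (Sum.inl i))

theorem eval_dif (z : ι ⊕ ι → ℂ) (f : MvPolynomial ι ℂ) :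
    eval z (dif f) = eval (z ∘ Sum.inr - z ∘ Sum.inl) f := by
  induction f using MvPolynomial.induction_on with
  | C a => simp [dif, algebraMap_eq]
  | add p q hp hq => simp [hp, hq]
  | mul_X p i hp => simp [hp]; left; simp [dif]

theorem dif_isHomogeneous {f : MvPolynomial ι ℂ} {k : ℕ} (hf : f.IsHomogeneous k) :
    (dif f).IsHomogeneous k := by
  have := hf.aeval (fun i => (X (Sum.inr i) - X (Sum.inl i) : MvPolynomial (ι ⊕ ι) ℂ)) (n := 1)
    (fun i => (isHomogeneous_X _ _).sub (isHomogeneous_X _ _))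
  rwa [one_mul] at this

theorem homI_comap_dif {P : Ideal (MvPolynomial (ι ⊕ ι) ℂ)} (hP : HomI P) : HomI (P.comap dif) := by
  rw [homI_iff] at hP ⊢
  intro p hp k
  rw [Ideal.mem_comap] at hp ⊢
  have h1 : homogeneousComponent k (dif p) = dif (homogeneousComponent k p) := by
    conv_lhs => rw [← sum_homogeneousComponent p, map_sum, map_sum]
    have : ∀ j, homogeneousComponent k (dif (homogeneousComponent j p)) =
        if j = k then dif (homogeneousComponent j p) else 0 := by
      intro j
      rw [homogeneousComponent_of_mem (dif_isHomogeneous (homogeneousComponent_isHomogeneous j p))]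
      simp only [eq_comm]
    simp only [this]
    rw [Finset.sum_ite_eq']
    split_ifs with h
    · rfl
    · rw [Finset.mem_range] at h
      rw [homogeneousComponent_eq_zero _ _ (by omega), map_zero]
  rw [← h1]; exact hP _ hp k

/-- First-order Taylor expansion. -/
theorem taylor {D : Type} [CommRing D] [Algebra ℂ D] (a : ι → D) (s : D) (p : ι → D)
    (f : MvPolynomial ι ℂ) : ∃ R : D, aeval (fun i => a i + s * p i) f =
      aeval a f + s * ∑ i, p i * aeval a (pderiv i f) + s ^ 2 * R := by
  classical
  induction f using MvPolynomial.induction_on with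
  | C c => exact ⟨0, by simp⟩
  | add f g hf hg =>
    obtain ⟨R, hR⟩ := hf
    obtain ⟨R', hR'⟩ := hg
    refine ⟨R + R', ?_⟩
    simp only [map_add, hR, hR', mul_add, Finset.sum_add_distrib]
    ring
  | mul_X f j hf =>
    obtain ⟨R, hR⟩ := hf
    refine ⟨R * (a j + s * p j) + (∑ i, p i * aeval a (pderiv i f)) * p j, ?_⟩
    have h1 : ∑ i, p i * aeval a (pderiv i (f * X j)) =
        (∑ i, p i * aeval a (pderiv i f)) * a j + p j * aeval a f := by
      have : ∀ i, p i * aeval a (pderiv i (f * X j)) =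
          p i * aeval a (pderiv i f) * a j + if i = j then p i * aeval a f else 0 := by
        intro i
        rw [pderiv_mul, pderiv_X]
        by_cases h : i = j
        · subst h; simp; ring
        · simp [h, Pi.single_apply]; try ring
      simp only [this, Finset.sum_add_distrib, Finset.sum_mul]
      simp
    rw [h1, map_mul, map_mul, hR, aeval_X, aeval_X]
    ring

end Diff
end HypSec

/-! ### Cones over projective sets and the secant variety -/

namespace HypSec

section Secant
variable {N : ℕ}

theorem mem_submodule_mk {v : Aff N} (hv : v ≠ 0) : v ∈ (Projectivization.mk ℂ v hv).submodule := by
  rw [Projectivization.submodule_mk]; exact Submodule.mem_span_singleton_self v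

theorem cone_smul {X : Set (Proj N)} {v : Aff N} (hv : v ∈ cone X) (t : ℂ) (ht : t ≠ 0) :
    t • v ∈ cone X := by
  rcases hv with ⟨h0, hv⟩ | h0
  · left
    refine ⟨smul_ne_zero ht h0, ?_⟩
    rwa [(Projectivization.mk_eq_mk_iff' ℂ _ _ (smul_ne_zero ht h0) h0).2 ⟨t, rfl⟩]
  · right
    rw [Set.mem_singleton_iff] at h0 ⊢; rw [h0, smul_zero]

theorem mem_of_mem_cone {X : Set (Proj N)} {v : Aff N} (hv : v ∈ cone X) (h : v ≠ 0) :
    Projectivization.mk ℂ v h ∈ X := by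
  rcases hv with ⟨h0, hv⟩ | h0
  · exact hv
  · exact absurd h0 h

theorem zero_mem_cone (X : Set (Proj N)) : (0 : Aff N) ∈ cone X := Or.inr rfl

theorem vanishIdeal_eq_vI (V : Set (Aff N)) : vanishIdeal V = vI V := by
  ext p; exact Iff.rfl

theorem homI_vanishIdeal_cone (X : Set (Proj N)) : HomI (vanishIdeal (cone X)) := by
  rw [vanishIdeal_eq_vI]
  exact homI_vI fun v hv t ht => cone_smul hv t ht

/-- The union of the secant lines of `X`, before taking the closure. -/
def secSet (X : Set (Proj N)) : Set (Proj N) := {z | ∃ y ∈ X, ∃ x ∈ X, y ≠ x ∧ z ∈ pline y x}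

theorem mem_cone_secSet {X : Set (Proj N)} {a b : Proj N} (ha : a ∈ X) (hb : b ∈ X) (hab : a ≠ b)
    {v : Aff N} (hv : v ∈ a.submodule ⊔ b.submodule) : v ∈ cone (secSet X) := by
  by_cases h : v = 0
  · rw [h]; exact zero_mem_cone _
  · left
    refine ⟨h, a, ha, b, hb, hab, ?_⟩
    show Projectivization.submodule _ ≤ _
    rw [Projectivization.submodule_mk, Submodule.span_singleton_le_iff_mem]
    exact hv

/-- The two distinct points `a`, `b` of `X` ensure that `x - y` lies on a secant line also when `x`
and `y` are proportional or zero. -/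
theorem sub_mem_cone_secSet {X : Set (Proj N)} {a b : Proj N} (ha : a ∈ X) (hb : b ∈ X)
    (hab : a ≠ b) {x y : Aff N} (hx : x ∈ cone X) (hy : y ∈ cone X) :
    x - y ∈ cone (secSet X) := by
  have key : ∀ c ∈ X, x ∈ c.submodule → y ∈ c.submodule → x - y ∈ cone (secSet X) := by
    intro c hc hxc hyc
    by_cases hca : c = a
    · exact mem_cone_secSet hc hb (by rw [hca]; exact hab)
        (Submodule.mem_sup_left (Submodule.sub_mem _ hxc hyc))
    · exact mem_cone_secSet hc ha hca
        (Submodule.mem_sup_left (Submodule.sub_mem _ hxc hyc))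
  by_cases hx0 : x = 0
  · by_cases hy0 : y = 0
    · rw [hx0, hy0, sub_zero]; exact zero_mem_cone _
    · exact key _ (mem_of_mem_cone hy hy0) (by rw [hx0]; exact Submodule.zero_mem _)
        (mem_submodule_mk hy0)
  · by_cases hy0 : y = 0
    · exact key _ (mem_of_mem_cone hx hx0) (mem_submodule_mk hx0)
        (by rw [hy0]; exact Submodule.zero_mem _)
    · by_cases hxy : Projectivization.mk ℂ x hx0 = Projectivization.mk ℂ y hy0
      · exact key _ (mem_of_mem_cone hx hx0) (mem_submodule_mk hx0)
          (by rw [hxy]; exact mem_submodule_mk hy0)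
      · exact mem_cone_secSet (mem_of_mem_cone hx hx0) (mem_of_mem_cone hy hy0) hxy
          (Submodule.sub_mem _ (Submodule.mem_sup_left (mem_submodule_mk hx0))
            (Submodule.mem_sup_right (mem_submodule_mk hy0)))

/-- A homogeneous ideal containing all polynomials that vanish on the secant lines cuts out a subset
of the cone over the secant variety. -/
theorem Zs_subset_secant {X : Set (Proj N)} {J : Ideal (MvPolynomial (Fin (N+1)) ℂ)} (hJ : HomI J)
    (h : ∀ f, (∀ v ∈ cone (secSet X), eval v f = 0) → f ∈ J) : Zs J ⊆ cone (secantVar X) := by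
  intro v hv
  by_cases h0 : v = 0
  · rw [h0]; exact zero_mem_cone _
  · left
    refine ⟨h0, ?_⟩
    show Projectivization.rep _ ∈ zClosure (cone (secSet X))
    obtain ⟨t, ht⟩ := Projectivization.exists_smul_eq_mk_rep ℂ v h0
    rw [← ht]
    rintro C ⟨⟨S, rfl⟩, hC⟩ f hf
    exact Zs_smul hJ hv (t : ℂ) f (h f fun w hw => hC hw f hf)

end Secant

/-- Euler's relation: a point of a cone is tangent to the cone at that point. -/
theorem euler_mem_tanSp {ι : Type} [Fintype ι] {I : Ideal (MvPolynomial ι ℂ)} (hI : HomI I)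
    {y : ι → ℂ} (hy : y ∈ Zs I) : y ∈ tanSp I y := by
  rw [mem_tanSp]
  intro f hf
  rw [← sum_homogeneousComponent f, map_sum, LinearMap.sum_apply]
  refine Finset.sum_eq_zero fun k _ => ?_
  rw [Dl_apply]
  have h1 := (homogeneousComponent_isHomogeneous k f).sum_X_mul_pderiv
  have h2 := congrArg (eval y) h1
  rw [map_sum] at h2
  simp only [map_mul, eval_X, map_nsmul, hy _ (homI_iff.1 hI f hf k), smul_zero] at h2
  rw [← h2]
  exact Finset.sum_congr rfl fun i _ => mul_comm _ _

end HypSec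

/-! ### The tangency bound -/

namespace HypSec

/-- Let `Q` be a variety of pairs `(y, x)` of points of the variety of `I` satisfying `x = y + η(x -
y) p`, with `η(x - y)` not identically zero. Dividing the Taylor expansion of `f (y + η(x - y) p) =
0` by `η(x - y)` shows that `p` is tangent at `y` wherever `η(x - y) = 0`. -/
theorem taylor_tangent {ι : Type} [Fintype ι] {I : Ideal (MvPolynomial ι ℂ)}
    {Q Q0 : Ideal (MvPolynomial (ι ⊕ ι) ℂ)} [hQ : Q.IsPrime] (hQQ : Q ≤ Q0)
    (hl : ∀ f ∈ I, rename Sum.inl f ∈ Q) (hr : ∀ f ∈ I, rename Sum.inr f ∈ Q)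
    (η : Module.Dual ℂ (ι → ℂ)) (hη : dif (lf η) ∉ Q) (hη0 : dif (lf η) ∈ Q0) (p : ι → ℂ)
    (hp : ∀ i, X (Sum.inr i) - (X (Sum.inl i) + dif (lf η) * C (p i)) ∈ Q)
    {y : ι ⊕ ι → ℂ} (hy : y ∈ Zs Q0) : p ∈ tanSp I (y ∘ Sum.inl) := by
  rw [mem_tanSp]
  intro f hf
  obtain ⟨R, hR⟩ := taylor (D := MvPolynomial (ι ⊕ ι) ℂ) (fun i => X (Sum.inl i)) (dif (lf η))
    (fun i => C (p i)) f
  have e1 : aeval (fun i => (X (Sum.inl i) : MvPolynomial (ι ⊕ ι) ℂ)) = rename Sum.inl := by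
    apply MvPolynomial.algHom_ext; intro i; simp
  rw [e1] at hR
  have h1 : aeval (fun i => (X (Sum.inl i) + dif (lf η) * C (p i) : MvPolynomial (ι ⊕ ι) ℂ)) f ∈ Q := by
    have h2 : Ideal.Quotient.mk Q (aeval (fun i => (X (Sum.inl i) + dif (lf η) * C (p i) :
        MvPolynomial (ι ⊕ ι) ℂ)) f) = Ideal.Quotient.mk Q (rename Sum.inr f) := by
      have : ((Ideal.Quotient.mkₐ ℂ Q).comp (aeval (fun i => (X (Sum.inl i) + dif (lf η) * C (p i) :
        MvPolynomial (ι ⊕ ι) ℂ)))) = (Ideal.Quotient.mkₐ ℂ Q).comp (rename Sum.inr) := by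
        apply MvPolynomial.algHom_ext
        intro i
        simp only [AlgHom.comp_apply, aeval_X, rename_X, Ideal.Quotient.mkₐ_eq_mk]
        exact (Ideal.Quotient.eq.2 (hp i)).symm
      exact DFunLike.congr_fun this f
    rw [← Ideal.Quotient.eq_zero_iff_mem, h2, Ideal.Quotient.eq_zero_iff_mem]
    exact hr f hf
  rw [hR] at h1
  have h3 : dif (lf η) * (∑ i, C (p i) * rename Sum.inl (pderiv i f) + dif (lf η) * R) ∈ Q := by
    have := Q.sub_mem h1 (hl f hf)
    convert this using 1; ring
  have h4 := hQQ ((hQ.mem_or_mem h3).resolve_left hη)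
  have h5 := hy _ h4
  have h6 := hy _ hη0
  rw [map_add, map_mul, h6, zero_mul, add_zero, map_sum] at h5
  rw [Dl_apply, ← h5]
  refine Finset.sum_congr rfl fun i _ => ?_
  rw [map_mul, eval_C, eval_rename, mul_comm]

/-- The tangency bound, for cones: if `η` vanishes on the tangent spaces of the cone over `X` at all
non-zero points of a conical subvariety `q` of dimension at least `k`, then `k + n + 1 ≤ e`, where
`e` bounds the dimension of the cone over the secant variety. -/
theorem propT {N n k e : ℕ} (X : Set (Proj N)) (hcl : pClosed X)
    [hI : (vanishIdeal (cone X)).IsPrime]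
    (hdim : ((n + 1 : ℕ) : WithBot ℕ∞) ≤
      ringKrullDim (MvPolynomial (Fin (N+1)) ℂ ⧸ vanishIdeal (cone X)))
    (hnd : Nondeg X) (he : adim (cone (secantVar X)) ≤ ((e : ℕ∞) : WithBot ℕ∞))
    (η : Module.Dual ℂ (Aff N)) (hη : η ≠ 0)
    (q : Ideal (MvPolynomial (Fin (N+1)) ℂ)) [hqp : q.IsPrime] (hq : HomI q) (hq0 : q ≠ ptIdeal 0)
    (hqX : ∀ y ∈ Zs q, y ∈ cone X)
    (hqT : ∀ y ∈ Zs q, y ≠ 0 → ∀ t ∈ tanSp (vanishIdeal (cone X)) y, η t = 0)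
    (hk : (k : WithBot ℕ∞) ≤ ringKrullDim (MvPolynomial (Fin (N+1)) ℂ ⧸ q)) :
    k + n + 1 ≤ e := by
  by_contra! hcon
  set I := vanishIdeal (cone X) with hIdef
  have hIh : HomI I := homI_vanishIdeal_cone X
  have hZI : Zs I = cone X := Zs_vanishIdeal hcl
  obtain ⟨y0, hy0, hy0ne⟩ := exists_nonzero_mem_Zs hq hq0
  have hηy0 : η y0 = 0 := by
    refine hqT y0 hy0 hy0ne y0 (euler_mem_tanSp hIh ?_)
    rw [hZI]; exact hqX _ hy0
  obtain ⟨x1, hx1, hηx1⟩ : ∃ x ∈ cone X, η x ≠ 0 := by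
    by_contra! hc
    apply hη
    have : Submodule.span ℂ (cone X) ≤ LinearMap.ker η := Submodule.span_le.2 hc
    rw [show Submodule.span ℂ (cone X) = ⊤ from hnd, top_le_iff, LinearMap.ker_eq_top] at this
    exact this
  have hx1ne : x1 ≠ 0 := by rintro rfl; simp at hηx1
  have hab : Projectivization.mk ℂ y0 hy0ne ≠ Projectivization.mk ℂ x1 hx1ne := by
    intro h
    obtain ⟨a, ha⟩ := (Projectivization.mk_eq_mk_iff' ℂ _ _ _ _).1 h
    rw [← ha, map_smul, smul_eq_mul] at hηy0
    rcases mul_eq_zero.1 hηy0 with h | h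
    · rw [h, zero_smul] at ha; exact hy0ne ha.symm
    · exact hηx1 h
  have haX := mem_of_mem_cone (hqX _ hy0) hy0ne
  have hbX := mem_of_mem_cone hx1 hx1ne
  have hq00 : (0 : Aff N) ∈ Zs q :=
    mem_Zs_iff_le.2 (homI_le_ptIdeal_zero hq (Ideal.IsPrime.ne_top inferInstance))
  -- the product of the variety of `q` and the cone over `X`
  let P := prodI q I
  haveI hPp : P.IsPrime := prodI_isPrime q I
  have hPh : HomI P := homI_prodI hq hIh
  have hPdim : ((k + (n + 1) : ℕ) : WithBot ℕ∞) ≤ ringKrullDim (MvPolynomial (Fin (N+1) ⊕ Fin (N+1)) ℂ ⧸ P) :=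
    dim_prodI hk hdim
  -- the ideal of the closure of the set of differences `x - y`, which lies in the cone over `SX`
  let D := P.comap (dif (ι := Fin (N+1)))
  haveI hDp : D.IsPrime := Ideal.IsPrime.comap _
  have hDh : HomI D := homI_comap_dif hPh
  have hDdim : ringKrullDim (MvPolynomial (Fin (N+1)) ℂ ⧸ D) ≤ ((e : ℕ∞) : WithBot ℕ∞) := by
    refine (dim_quot_le_adim (Zs_subset_secant hDh fun f hf => ?_)).trans he
    show dif f ∈ P
    rw [mem_prodI]
    intro y hy x hx
    rw [eval_dif]
    apply hf
    rw [hZI] at hx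
    simpa using sub_mem_cone_secSet haX hbX hab hx (hqX _ hy)
  -- the form `η` does not vanish at the difference `x1 - 0`, so the section by `η = 0` of the
  -- difference variety has smaller dimension
  have hsc : ∀ p : LTSeries (PrimeSpectrum (MvPolynomial (Fin (N+1)) ℂ)),
      D ⊔ Ideal.span {lf η} ≤ p.head.asIdeal → p.length + 1 ≤ e := by
    intro p hp
    have hlt : (⟨D, inferInstance⟩ : PrimeSpectrum (MvPolynomial (Fin (N+1)) ℂ)) < p.head := by
      refine lt_of_le_of_ne (le_sup_left.trans hp) ?_
      intro h
      have h1 : D = p.head.asIdeal := congrArg PrimeSpectrum.asIdeal h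
      have h2 : lf η ∈ D := by
        rw [h1]; exact hp (Ideal.mem_sup_right (Ideal.subset_span rfl))
      have h3 : dif (lf η) ∈ P := h2
      have h4 := mem_prodI.1 h3 0 hq00 x1 (by rw [hZI]; exact hx1)
      rw [eval_dif, eval_lf] at h4
      simp at h4
      exact hηx1 h4
    obtain ⟨c, hc, hch⟩ := chain_cons p hlt
    have h1 := length_le_dim_quot (J := D) c (by rw [hch])
    have h2 := h1.trans hDdim
    rw [hc] at h2
    exact_mod_cast h2
  obtain ⟨e', rfl⟩ : ∃ e', e = e' + 1 := by
    have := hsc (RelSeries.singleton _ ⟨ptIdeal 0, inferInstance⟩) (by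
      show _ ≤ ptIdeal 0
      rw [sup_le_iff, Ideal.span_singleton_le_iff_mem, mem_ptIdeal, eval_lf]
      exact ⟨homI_le_ptIdeal_zero hDh (Ideal.IsPrime.ne_top inferInstance), by simp⟩)
    exact ⟨e - 1, by omega⟩
  obtain ⟨l, hl⟩ := exists_sop e' (D ⊔ Ideal.span {lf η})
    (hDh.sup (homI_span_singleton (lf_isHomogeneous η)))
    (dim_quot_le_of_length_le fun p hp => by
      have := hsc p hp
      exact_mod_cast (by omega : p.length ≤ e'))
  let p : Aff N := (η x1)⁻¹ • x1
  have hηp : η p = 1 := by simp [p, hηx1]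
  have hpne : p ≠ 0 := by intro h; rw [h] at hηp; simp at hηp
  have hpI : p ∈ Zs I := by
    rw [hZI]; exact cone_smul hx1 _ (inv_ne_zero hηx1)
  -- subtracting multiples of `η` changes nothing on `η = 0` and makes the forms vanish at `p`
  let l' : Fin e' → Module.Dual ℂ (Aff N) := fun i => l i - l i p • η
  have hl'p : ∀ i, l' i p = 0 := by intro i; simp [l', hηp]
  let v0 : Fin (N+1) ⊕ Fin (N+1) → ℂ := Sum.elim 0 p
  have hv0 : v0 ∈ Zs P := elim_mem_Zs_prodI.2 ⟨hq00, hpI⟩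
  have hev : ∀ f : MvPolynomial (Fin (N+1)) ℂ, eval v0 (dif f) = eval p f := by
    intro f; rw [eval_dif]; simp [v0]
  -- a cone of dimension at least `2` in the product, through `(0, p)`, on which the modified forms
  -- vanish at `x - y`
  obtain ⟨c, hc, hcP, hcF, hcl⟩ := exists_chain_over P hv0 (m := e') (j := 2)
    (le_trans (by exact_mod_cast (by omega : e' + 2 ≤ k + (n + 1))) hPdim)
    (fun i => dif (lf (l' i))) (fun i => by rw [hev, eval_lf]; exact hl'p i)
  haveI := c.head.2
  have hcv : c.head.asIdeal ≤ ptIdeal v0 := by rw [← hcl]; exact LTSeries.head_le_last c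
  let Q := core c.head.asIdeal
  haveI hQp : Q.IsPrime := core_isPrime _
  have hQh : HomI Q := homI_core _
  have hPQ : P ≤ Q := le_core hPh hcP
  have hQv : Q ≤ ptIdeal v0 := (core_le _).trans hcv
  have hlQ : ∀ i, dif (lf (l' i)) ∈ Q := fun i =>
    mem_core_of_homog (dif_isHomogeneous (lf_isHomogeneous _)) (hcF i)
  have hηQ : dif (lf η) ∉ Q := by
    intro h
    have h1 := hQv h
    rw [mem_ptIdeal, hev, eval_lf, hηp] at h1
    exact one_ne_zero h1
  have hQdim := length_le_dim_quot (J := Q) c (core_le _)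
  rw [hc] at hQdim
  let 𝔫 := Q.comap (dif (ι := Fin (N+1)))
  haveI h𝔫p : 𝔫.IsPrime := Ideal.IsPrime.comap _
  have h𝔫h : HomI 𝔫 := homI_comap_dif hQh
  -- the differences on `Q` lie on the line through `p`
  have hcore : core (ptIdeal p) ≤ 𝔫 := by
    refine core_le_of_section h𝔫h hpne ?_ η ?_
    · intro f hf
      have := hQv (show dif f ∈ Q from hf)
      rwa [mem_ptIdeal, hev] at this
    · intro x hx hηx
      apply hl
      · rw [mem_Zs_iff_le, sup_le_iff, Ideal.span_singleton_le_iff_mem, mem_ptIdeal, eval_lf]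
        exact ⟨(Ideal.comap_mono hPQ).trans (mem_Zs_iff_le.1 hx), hηx⟩
      · intro i
        have h1 := hx _ (show lf (l' i) ∈ 𝔫 from hlQ i)
        rw [eval_lf] at h1
        simpa [l', hηx] using h1
  -- on `Q` we have `x = y + η(x - y) p`
  have hG : ∀ i, MvPolynomial.X (Sum.inr i) - (MvPolynomial.X (Sum.inl i) + dif (lf η) * C (p i)) ∈ Q := by
    intro i
    have h1 : lf ((LinearMap.proj i : Module.Dual ℂ (Aff N)) - p i • η) ∈ core (ptIdeal p) := by
      refine mem_core_of_homog (lf_isHomogeneous _) ?_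
      rw [mem_ptIdeal, eval_lf]; simp [hηp]
    have h2 : dif (lf ((LinearMap.proj i : Module.Dual ℂ (Aff N)) - p i • η)) ∈ Q := hcore h1
    convert h2 using 1
    apply MvPolynomial.funext
    intro z
    simp only [map_sub, map_add, map_mul, eval_X, eval_C, eval_dif, eval_lf]
    simp
    ring
  -- cutting `Q` by `η(x - y) = 0` leaves a subvariety through the origin of positive dimension, and
  -- the equations of `Q` force `x = y` on it
  obtain ⟨c', hc', hcQ, hcη, hcl'⟩ := exists_chain_over Q
    (mem_Zs_iff_le.2 (homI_le_ptIdeal_zero hQh (Ideal.IsPrime.ne_top inferInstance))) (m := 1) (j := 1)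
    hQdim (fun _ => dif (lf η)) (fun i => by rw [eval_dif, eval_lf]; simp)
  haveI := c'.head.2
  have hclt : c'.head.asIdeal < ptIdeal 0 := by
    rw [← hcl']
    exact c'.strictMono (show (0 : Fin (c'.length+1)) < Fin.last _ by rw [Fin.lt_def]; simp; omega)
  obtain ⟨z, hz, hz0⟩ : ∃ z ∈ Zs c'.head.asIdeal, z ≠ 0 := by
    by_contra! hc0
    refine hclt.not_ge fun f hf => mem_prime_of_vanish fun x hx => ?_
    rw [hc0 x hx]; exact hf
  have hzP := mem_Zs_prodI.1 (Zs_anti (hPQ.trans hcQ) hz)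
  have hη0 := hz _ (hcη 0)
  have hzeq : z ∘ Sum.inr = z ∘ Sum.inl := by
    ext i
    have := hz _ (hcQ (hG i))
    rw [map_sub, map_add, map_mul, hη0, zero_mul, add_zero, eval_X, eval_X] at this
    exact sub_eq_zero.1 this
  have hy1 : z ∘ Sum.inl ≠ 0 := by
    intro h
    apply hz0
    ext (i | i)
    · exact congrFun h i
    · have := congrFun hzeq i
      simp only [Function.comp] at this
      rw [this]; exact congrFun h i
  have hpT := taylor_tangent (I := I) hcQ
    (fun f hf => hPQ (by
      rw [mem_prodI]; intro y hy x hx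
      rw [eval_rename]
      have : y ∈ Zs I := by rw [hZI]; exact hqX _ hy
      exact this f hf))
    (fun f hf => hPQ (rename_inr_mem hf)) η hηQ (hcη 0) p hG hz
  have := hqT _ hzP.1 hy1 p hpT
  rw [hηp] at this
  exact one_ne_zero this

end HypSec

/-! ### Points where the hyperplane is not tangent -/

namespace HypSec

section Tangency
variable {ι : Type} [Fintype ι]

theorem eval_smul_homog {p : MvPolynomial ι ℂ} {k : ℕ} (hp : p.IsHomogeneous k) (t : ℂ)
    (v : ι → ℂ) : eval (t • v) p = t ^ k * eval v p := by
  have := aeval_smul_of_isHomogeneous hp t v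
  rwa [aeval_eq_eval, aeval_eq_eval] at this

theorem tanSp_smul_le {I : Ideal (MvPolynomial ι ℂ)} (hI : HomI I) (v : ι → ℂ) (t : ℂ) :
    tanSp I v ≤ tanSp I (t • v) := by
  intro u hu
  rw [mem_tanSp] at hu ⊢
  intro f hf
  rw [← sum_homogeneousComponent f]
  rw [map_sum]
  rw [LinearMap.sum_apply]
  refine Finset.sum_eq_zero fun k _ => ?_
  have h1 := hu _ (homI_iff.1 hI f hf k)
  rw [Dl_apply] at h1 ⊢
  generalize hp : homogeneousComponent k f = p at h1 ⊢
  have hph : p.IsHomogeneous k := hp ▸ homogeneousComponent_isHomogeneous k f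
  have h2 : ∀ i, eval (t • v) (pderiv i p) * u i =
      t ^ (k - 1) * (eval v (pderiv i p) * u i) := fun i => by
    rw [eval_smul_homog (hph.pderiv (i := i)), mul_assoc]
  rw [Finset.sum_congr rfl fun i _ => h2 i, ← Finset.mul_sum, h1, mul_zero]

theorem tanSp_smul {I : Ideal (MvPolynomial ι ℂ)} (hI : HomI I) (v : ι → ℂ) {t : ℂ} (ht : t ≠ 0) :
    tanSp I (t • v) = tanSp I v := by
  refine le_antisymm ?_ (tanSp_smul_le hI v t)
  have := tanSp_smul_le hI (t • v) t⁻¹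
  rwa [smul_smul, inv_mul_cancel₀ ht, one_smul] at this

theorem pi_surjective_of_linearIndependent {V : Type} [AddCommGroup V] [Module ℂ V] {m : ℕ}
    {φ : Fin m → Module.Dual ℂ V} (h : LinearIndependent ℂ φ) :
    Function.Surjective (LinearMap.pi φ) := by
  rw [← LinearMap.range_eq_top]
  by_contra hne
  obtain ⟨a, ha0, ha⟩ := Submodule.exists_le_ker_of_lt_top _ (lt_top_iff_ne_top.2 hne)
  apply ha0
  have h1 : ∑ i, a (Pi.single i 1) • φ i = 0 := by
    ext v
    have h2 : a (LinearMap.pi φ v) = 0 := ha ⟨v, rfl⟩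
    rw [← LinearMap.sum_single_apply (LinearMap.pi φ v) (φ := fun _ : Fin m => ℂ) , map_sum] at h2
    rw [LinearMap.sum_apply, LinearMap.zero_apply, ← h2]
    refine Finset.sum_congr rfl fun i _ => ?_
    have : (Pi.single i (LinearMap.pi φ v i) : Fin m → ℂ) = φ i v • Pi.single i 1 := by
      rw [← Pi.single_smul]; simp
    rw [this, map_smul, LinearMap.smul_apply, smul_eq_mul, smul_eq_mul, mul_comm]
  have h3 := Fintype.linearIndependent_iff.1 h _ h1
  refine LinearMap.pi_ext fun i x => ?_
  have : Pi.single i x = x • (Pi.single i 1 : Fin m → ℂ) := by rw [← Pi.single_smul]; simp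
  rw [this, map_smul, h3 i]; simp

/-- Among the points whose tangent space has a fixed dimension, non-tangency to `η` is an open
condition: with `d` the dimension at `w`, it is expressed by the non-vanishing of a determinant in
the differentials of equations and `η`. -/
theorem exists_det_poly (I : Ideal (MvPolynomial ι ℂ)) (η : Module.Dual ℂ (ι → ℂ)) {d : ℕ}
    {w : ι → ℂ} (hw : Module.finrank ℂ (tanSp I w) = d)
    (hη : ¬ tanSp I w ≤ LinearMap.ker η) :
    ∃ g : MvPolynomial ι ℂ, eval w g ≠ 0 ∧
      ∀ y, Module.finrank ℂ (tanSp I y) = d → tanSp I y ≤ LinearMap.ker η → eval y g = 0 := by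
  set G : Submodule ℂ (Module.Dual ℂ (ι → ℂ)) := (I.restrictScalars ℂ).map (Dl w) with hG
  have hcoan : G.dualCoannihilator = tanSp I w := by
    ext t
    rw [Submodule.mem_dualCoannihilator, mem_tanSp]
    constructor
    · intro h f hf; exact h _ ⟨f, hf, rfl⟩
    · rintro h _ ⟨f, hf, rfl⟩; exact h f hf
  have hfr := Subspace.finrank_add_finrank_dualCoannihilator_eq G
  rw [hcoan, hw] at hfr
  have hηG : η ∉ G := fun h => hη fun t ht => by
    rw [← hcoan, Submodule.mem_dualCoannihilator] at ht
    exact ht η h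
  let b := Module.finBasis ℂ G
  set c := Module.finrank ℂ G with hc
  have hb : ∀ j, ∃ f ∈ I, Dl w f = (b j : Module.Dual ℂ (ι → ℂ)) := fun j => (b j).2
  choose f hfI hfb using hb
  have hspan : Submodule.span ℂ (Set.range fun j => Dl w (f j)) ≤ G := by
    rw [Submodule.span_le]; rintro _ ⟨j, rfl⟩; exact ⟨f j, hfI j, rfl⟩
  have hli : LinearIndependent ℂ (Fin.cons η (fun j => Dl w (f j)) : Fin (c + 1) → _) := by
    rw [linearIndependent_finCons]
    refine ⟨?_, fun h => hηG (hspan h)⟩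
    have := b.linearIndependent.map' G.subtype (Submodule.ker_subtype G)
    have e : (G.subtype ∘ b : Fin c → Module.Dual ℂ (ι → ℂ)) = fun j => Dl w (f j) :=
      funext fun j => (hfb j).symm
    rw [e] at this; exact this
  have hsurj := pi_surjective_of_linearIndependent hli
  choose p hp using fun j : Fin (c + 1) => hsurj (Pi.single j 1)
  -- the rows of `A` are `η` and the differentials of the `f j`, evaluated at the fixed vectors `p
  -- j`, which form a dual family at `w`
  let A : Matrix (Fin (c+1)) (Fin (c+1)) (MvPolynomial ι ℂ) := fun a j =>
    (Fin.cons (C (η (p j))) (fun a => ∑ i, pderiv i (f a) * C (p j i)) : Fin (c+1) → _) a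
  have hA : ∀ y a j, eval y (A a j) = (Fin.cons η (fun j => Dl y (f j)) : Fin (c + 1) → Module.Dual ℂ (ι → ℂ)) a (p j) := by
    intro y a j
    refine Fin.cases ?_ (fun a => ?_) a
    · simp [A]
    · simp [A, Dl_apply]
  refine ⟨A.det, ?_, ?_⟩
  · rw [RingHom.map_det]
    have : (eval w).mapMatrix A = 1 := by
      ext a j
      rw [RingHom.mapMatrix_apply, Matrix.map_apply, hA]
      have := congrFun (hp j) a
      rw [LinearMap.pi_apply] at this
      rw [this, Matrix.one_apply, Pi.single_apply]
    rw [this, Matrix.det_one]; exact one_ne_zero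
  · intro y hy hyη
    by_contra hne
    rw [RingHom.map_det] at hne
    set L : (ι → ℂ) →ₗ[ℂ] (Fin (c+1) → ℂ) := LinearMap.pi (Fin.cons η (fun j => Dl y (f j)) : Fin (c + 1) → Module.Dual ℂ (ι → ℂ)) with hL
    have hker : tanSp I y ≤ LinearMap.ker L := by
      intro t ht
      rw [LinearMap.mem_ker]
      funext a
      rw [hL, LinearMap.pi_apply]
      refine Fin.cases ?_ (fun a => ?_) a
      · exact hyη ht
      · exact mem_tanSp.1 ht _ (hfI a)
    have hcols : LinearIndependent ℂ (fun j => L (p j)) := by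
      have h := Matrix.linearIndependent_cols_of_det_ne_zero hne
      have e : ((eval y).mapMatrix A).col = fun j => L (p j) := by
        funext j a
        rw [Matrix.col_apply, RingHom.mapMatrix_apply, Matrix.map_apply, hA]
        rfl
      rw [e] at h; exact h
    have h1 : LinearIndependent ℂ (fun j => (⟨L (p j), ⟨p j, rfl⟩⟩ : LinearMap.range L)) :=
      LinearIndependent.of_comp (LinearMap.range L).subtype hcols
    have h2 := h1.fintype_card_le_finrank
    have h3 := LinearMap.finrank_range_add_finrank_ker L
    have h4 := Submodule.finrank_mono hker
    rw [Fintype.card_fin] at h2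
    omega
end Tangency

theorem tangentAt_eq {N : ℕ} (X : Set (Proj N)) (v : Aff N) :
    tangentAt (cone X) v = tanSp (vanishIdeal (cone X)) v := rfl

theorem finrank_tanSp {N n : ℕ} {X : Set (Proj N)} (hX : SmoothVariety X n) {v : Aff N}
    (hv : v ∈ cone X) (h0 : v ≠ 0) :
    Module.finrank ℂ (tanSp (vanishIdeal (cone X)) v) = n + 1 := by
  obtain ⟨t, ht⟩ := Projectivization.exists_smul_eq_mk_rep ℂ v h0
  have h := hX.2.2.2 _ (mem_of_mem_cone hv h0)
  rw [projTangent, tangentAt_eq, ← ht] at h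
  have e : t • v = (t : ℂ) • v := rfl
  rwa [e, tanSp_smul (homI_vanishIdeal_cone X) v t.ne_zero] at h

/-- On a subvariety `Q` that is too large for the tangency bound, the hyperplane is not tangent at a
general point. Here `Q` need not be a cone; the bound is applied to its homogeneous core, whose
variety is the closed cone generated by that of `Q`. -/
theorem exists_not_tangent {N n k e : ℕ} {X : Set (Proj N)} (hX : SmoothVariety X n) (hnd : Nondeg X)
    (he : adim (cone (secantVar X)) ≤ ((e : ℕ∞) : WithBot ℕ∞)) (hek : e ≤ k + n)
    {η : Module.Dual ℂ (Aff N)} (hη : η ≠ 0) (Q : Ideal (MvPolynomial (Fin (N+1)) ℂ)) [Q.IsPrime]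
    (hIQ : vanishIdeal (cone X) ≤ Q) {v : Aff N} (hv : v ∈ Zs Q) (hv0 : v ≠ 0)
    (hk : (k : WithBot ℕ∞) ≤ ringKrullDim (MvPolynomial (Fin (N+1)) ℂ ⧸ Q)) :
    ∃ g ∉ Q, ∀ y ∈ cone X, y ≠ 0 → eval y g ≠ 0 →
      ¬ tanSp (vanishIdeal (cone X)) y ≤ LinearMap.ker η := by
  by_contra! hcon
  haveI := vanishIdeal_isPrime hX.2.1
  have hIh := homI_vanishIdeal_cone X
  set T : Set (Aff N) := {y | y ∈ cone X ∧ y ≠ 0 ∧ tanSp (vanishIdeal (cone X)) y ≤ LinearMap.ker η} with hT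
  have hTh : HomI (vI T) := homI_vI fun y hy t ht =>
    ⟨cone_smul hy.1 t ht, smul_ne_zero ht hy.2.1, by rw [tanSp_smul hIh y ht]; exact hy.2.2⟩
  have hTQ : vI T ≤ Q := by
    intro g hg
    by_contra hgQ
    obtain ⟨y, hy, hy0, hyg, hyT⟩ := hcon g hgQ
    exact hyg (mem_vI.1 hg y ⟨hy, hy0, hyT⟩)
  have hIc : vanishIdeal (cone X) ≤ core Q := le_core hIh hIQ
  have hTc : vI T ≤ core Q := le_core hTh hTQ
  have hqX : ∀ y ∈ Zs (core Q), y ∈ cone X := fun y hy => by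
    have := Zs_anti hIc hy
    rwa [Zs_vanishIdeal hX.1] at this
  haveI := core_isPrime Q
  have hmain := propT (k := k) X hX.1 (by rw [dim_quot_eq_adim hX.1, hX.2.2.1]) hnd he η hη (core Q) (homI_core Q) ?_ hqX ?_ ?_
  · omega
  · intro h
    apply hv0
    funext i
    have : (MvPolynomial.X i : MvPolynomial (Fin (N+1)) ℂ) ∈ core Q := by
      rw [h, mem_ptIdeal]; simp
    have := hv _ (core_le Q this)
    simpa using this
  · intro y hy hy0 t ht
    by_contra hne
    obtain ⟨g, hg, hg'⟩ := exists_det_poly (vanishIdeal (cone X)) η (finrank_tanSp hX (hqX y hy) hy0)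
      (fun hle => hne (hle ht))
    apply hg
    refine hy g (hTc (mem_vI.2 fun z hz => hg' z (finrank_tanSp hX hz.1 hz.2.1) hz.2.2))
  · exact hk.trans (ringKrullDim_le_of_surjective (Ideal.Quotient.factor (core_le Q)) (Ideal.Quotient.factor_surjective _))
end HypSec

/-! ### Integral closedness in the total ring of fractions -/

namespace HypSec

/-- `B` is integrally closed in its total ring of fractions: a fraction `p / q` satisfying a monic
equation over `B` (written with denominators cleared) lies in `B`. -/
def INormal (B : Type) [CommRing B] : Prop :=
  ∀ (m : ℕ) (a : ℕ → B) (p q : B), q ∈ nonZeroDivisors B →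
    p ^ m + ∑ j ∈ Finset.range m, a j * p ^ j * q ^ (m - j) = 0 → q ∣ p

/-- For a fraction `p / q` integral of degree `m`, the element `q ^ m` is a denominator of all
powers of `p / q`. -/
theorem AINormal.iNormal {B : Type} [CommRing B] (h : AINormal B) : INormal B := by
  intro m a p q hq heq
  refine h (q ^ m) p q (pow_mem hq m) hq fun i => ?_
  induction i using Nat.strong_induction_on with
  | _ i ih =>
    by_cases hi : i ≤ m
    · exact (pow_dvd_pow q hi).mul_right _
    · obtain ⟨k, rfl⟩ := Nat.exists_eq_add_of_lt (not_le.1 hi)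
      have h1 : q ^ m * p ^ (m + k + 1) =
          - ∑ j ∈ Finset.range m, a j * q ^ (m - j) * (q ^ m * p ^ (j + k + 1)) := by
        rw [show m + k + 1 = m + (k + 1) by ring, pow_add p, eq_neg_of_add_eq_zero_left heq,
          neg_mul, mul_neg, Finset.sum_mul, Finset.mul_sum]
        congr 1
        refine Finset.sum_congr rfl fun j _ => ?_
        ring
      rw [h1, dvd_neg]
      refine Finset.dvd_sum fun j hj => ?_
      have hj := Finset.mem_range.1 hj
      rw [mul_assoc]
      refine Dvd.dvd.mul_left ?_ _
      have := mul_dvd_mul_left (q ^ (m - j)) (ih (j + k + 1) (by omega))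
      rwa [← pow_add, show m - j + (j + k + 1) = m + k + 1 by omega] at this

theorem INormal.isIntegrallyClosed {B : Type} [CommRing B] [IsDomain B] (h : INormal B) :
    IsIntegrallyClosed B := by
  rw [isIntegrallyClosed_iff (FractionRing B)]
  rintro x ⟨f, hf, hfx⟩
  obtain ⟨p, q, rfl⟩ := IsLocalization.exists_mk'_eq (nonZeroDivisors B) x
  have h1 := scaleRoots_aeval_eq_zero_of_aeval_mk'_eq_zero hfx
  have h2 : (f.scaleRoots (q : B)).eval p = 0 := by
    rw [Polynomial.aeval_algebraMap_apply] at h1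
    exact (map_eq_zero_iff _ (IsFractionRing.injective B (FractionRing B))).1 h1
  rw [Polynomial.eval_eq_sum_range, Finset.sum_range_succ, Polynomial.natDegree_scaleRoots,
    Polynomial.coeff_scaleRoots_natDegree, hf.leadingCoeff, one_mul, add_comm] at h2
  obtain ⟨y, rfl⟩ := h f.natDegree f.coeff p q q.2 (by
    rw [← h2]
    congr 1
    refine Finset.sum_congr rfl fun j _ => ?_
    rw [Polynomial.coeff_scaleRoots]
    ring)
  exact ⟨y, by rw [IsLocalization.eq_mk'_iff_mul_eq, ← map_mul, mul_comm]⟩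

/-- A reduced local ring that is integrally closed in its total ring of fractions is a domain: its
total ring of fractions would otherwise contain a non-trivial idempotent, which is integral. -/
theorem INormal.isDomain {B : Type} [CommRing B] [IsLocalRing B] [IsNoetherianRing B] [IsReduced B]
    (h : INormal B) : IsDomain B := by
  haveI : NoZeroDivisors B := by
    refine ⟨fun {a b} hab => ?_⟩
    by_contra! hne
    let I₁ : Ideal B := Submodule.colon ⊥ {a}
    let I₂ : Ideal B := Submodule.colon ⊥ (I₁ : Set B)
    have m1 : ∀ r, r ∈ I₁ ↔ r * a = 0 := fun r => by
      rw [Submodule.mem_colon_singleton, smul_eq_mul, Submodule.mem_bot]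
    have m2 : ∀ r, r ∈ I₂ ↔ ∀ x ∈ I₁, r * x = 0 := fun r => by
      rw [Submodule.mem_colon]; rfl
    have hnzd : ∃ s ∈ I₁ ⊔ I₂, s ∈ nonZeroDivisors B := by
      by_contra! hcon
      have hsub : ((I₁ ⊔ I₂ : Ideal B) : Set B) ⊆
          ⋃ p ∈ ((associatedPrimes.finite B B).toFinset : Set (Ideal B)), (p : Set B) := by
        intro s hs
        have : s ∈ (↑(nonZeroDivisors B) : Set B)ᶜ := hcon s hs
        rw [← biUnion_associatedPrimes_eq_compl_nonZeroDivisors] at this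
        simpa using this
      obtain ⟨P, hP, hle⟩ := (Ideal.subset_union_prime (f := fun p : Ideal B => p) ⊥ ⊥
        (fun p hp _ _ => by
          have : p ∈ associatedPrimes B B := by simpa using hp
          exact this.isPrime)).1 hsub
      have hP : IsAssociatedPrime P B := (associatedPrimes.finite B B).mem_toFinset.1 hP
      obtain ⟨hPp, z, hz⟩ := isAssociatedPrime_iff.1 hP
      have mP : ∀ r, r ∈ P ↔ r * z = 0 := fun r => by
        rw [hz, Submodule.mem_colon_singleton, smul_eq_mul, Submodule.mem_bot]
      have hz2 : z ∈ P := hle (Ideal.mem_sup_right ((m2 z).2 fun x hx => by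
        rw [mul_comm]; exact (mP x).1 (hle (Ideal.mem_sup_left hx))))
      have hz0 : z = 0 := IsReduced.eq_zero z ⟨2, by rw [pow_two]; exact (mP z).1 hz2⟩
      exact hPp.ne_top ((Ideal.eq_top_iff_one _).2 ((mP 1).2 (by rw [hz0, mul_zero])))
    obtain ⟨s, hs, hsn⟩ := hnzd
    obtain ⟨x, hx, y, hy, rfl⟩ := Submodule.mem_sup.1 hs
    have hyx := (m2 y).1 hy x hx
    obtain ⟨c, hc⟩ := h 2 (fun j => if j = 1 then -1 else 0) x (x + y) hsn (by
      simp [Finset.sum_range_succ]; linear_combination - hyx)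
    have hcc : c * (1 - c) = 0 := by
      have h1 : (x + y) * ((x + y) * (c * (1 - c))) = 0 := by
        have : (x + y) * ((x + y) * (c * (1 - c))) = ((x+y) * c) * ((x + y) - (x + y) * c) := by ring
        rw [this, ← hc]; linear_combination hyx
      exact (mem_nonZeroDivisors_iff.1 hsn).1 _ ((mem_nonZeroDivisors_iff.1 hsn).1 _ h1)
    rcases IsLocalRing.isUnit_or_isUnit_one_sub_self c with hu | hu
    · have : 1 - c = 0 := hu.mul_right_eq_zero.1 hcc
      have hc1 : c = 1 := (sub_eq_zero.1 this).symm
      rw [hc1, mul_one] at hc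
      rw [← hc] at hsn
      exact hne.1 ((mem_nonZeroDivisors_iff.1 hsn).1 _ ((m1 x).1 hx))
    · have hc0 : c = 0 := hu.mul_left_eq_zero.1 hcc
      rw [hc0, mul_zero] at hc
      rw [hc, zero_add] at hsn
      exact hne.2 ((mem_nonZeroDivisors_iff.1 hsn).1 _
        ((m2 y).1 hy b ((m1 b).2 (by rw [mul_comm]; exact hab))))
  exact NoZeroDivisors.to_isDomain B
end HypSec

/-! ### Reducedness -/

namespace HypSec
open IsLocalRing

section Sections
variable {N n : ℕ} {X : Set (Proj N)}

theorem Dl_lf (w : Aff N) (η : Module.Dual ℂ (Aff N)) : Dl w (lf η) = η := by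
  ext t
  rw [LinearMap.comp_apply, LinearMap.comp_apply, LinearMap.coe_single, Dl_single, lf_eq, map_sum,
    map_sum, Finset.sum_eq_single t]
  · simp
  · intro i _ hi
    rw [pderiv_C_mul, pderiv_X_of_ne hi]; simp
  · simp

theorem lf_notMem (hnd : Nondeg X) {η : Module.Dual ℂ (Aff N)} (hη : η ≠ 0) :
    lf η ∉ vanishIdeal (cone X) := by
  intro h
  apply hη
  have h1 : Submodule.span ℂ (cone X) ≤ LinearMap.ker η := by
    rw [Submodule.span_le]
    intro x hx
    have := h x hx
    rwa [eval_lf] at this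
  rw [hnd] at h1
  exact LinearMap.ker_eq_top.1 (top_le_iff.1 h1)

/-- The hyperplane section is smooth at a general point of each subvariety that is large
compared with the dimension of the secant variety. -/
theorem exists_smooth_point {k e : ℕ} (hX : SmoothVariety X n) (hnd : Nondeg X)
    (he : adim (cone (secantVar X)) ≤ ((e : ℕ∞) : WithBot ℕ∞)) (hek : e ≤ k + n)
    {η : Module.Dual ℂ (Aff N)} (hη : η ≠ 0) (Q : Ideal (MvPolynomial (Fin (N+1)) ℂ)) [Q.IsPrime]
    (hKQ : vanishIdeal (cone X) ⊔ Ideal.span {lf η} ≤ Q) {v : Aff N} (hv : v ∈ Zs Q) (hv0 : v ≠ 0)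
    (hk : (k : WithBot ℕ∞) ≤ ringKrullDim (MvPolynomial (Fin (N+1)) ℂ ⧸ Q))
    {d : MvPolynomial (Fin (N+1)) ℂ} (hd : d ∉ Q) :
    ∃ w ∈ Zs Q, eval w d ≠ 0 ∧ w ≠ 0 ∧
      ∃ (B : Type) (_ : CommRing B) (_ : Algebra ℂ B) (_ : IsLocalRing B)
      (φ : MvPolynomial (Fin (N+1)) ℂ →ₐ[ℂ] B) (u : Fin n → B),
      LocAt (vanishIdeal (cone X) ⊔ Ideal.span {lf η}) w φ ∧ RegSys B u := by
  have hIQ := le_sup_left.trans hKQ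
  obtain ⟨g, hgQ, hg⟩ := exists_not_tangent hX hnd he hek hη Q hIQ hv hv0 hk
  obtain ⟨i, hi⟩ := Function.ne_iff.1 hv0
  have hXi : (MvPolynomial.X i : MvPolynomial (Fin (N+1)) ℂ) ∉ Q := fun h => hi (by
    have := hv _ h
    simpa using this)
  have hprod : g * MvPolynomial.X i * d ∉ Q := fun h => by
    rcases Ideal.IsPrime.mem_or_mem inferInstance h with h | h
    · rcases Ideal.IsPrime.mem_or_mem inferInstance h with h | h
      · exact hgQ h
      · exact hXi h
    · exact hd h
  obtain ⟨w, hw, hwe⟩ := exists_mem_Zs_of_notMem hprod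
  rw [map_mul, map_mul] at hwe
  have hw0 : w ≠ 0 := by
    rintro rfl
    apply hwe; simp
  have hwI : w ∈ Zs (vanishIdeal (cone X)) := Zs_anti hIQ hw
  have hwX : w ∈ cone X := by rwa [Zs_vanishIdeal hX.1] at hwI
  have hwh : eval w (lf η) = 0 := hw _ (hKQ (Ideal.mem_sup_right (Ideal.mem_span_singleton_self _)))
  refine ⟨w, hw, right_ne_zero_of_mul hwe, hw0, ?_⟩
  haveI := vanishIdeal_isPrime hX.2.1
  refine exists_regular_local_section _ hwI ?_ (finrank_tanSp hX hwX hw0) hwh ?_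
  · rw [dim_quot_eq_adim hX.1, hX.2.2.1]; rfl
  · rw [Dl_lf]
    exact hg w hwX hw0 (left_ne_zero_of_mul (left_ne_zero_of_mul hwe))

/-- Membership in the saturation is a local condition away from the origin. -/
theorem mem_satIdeal_of_local {K : Ideal (MvPolynomial (Fin (N+1)) ℂ)} {c : MvPolynomial (Fin (N+1)) ℂ}
    (h : ∀ v ∈ Zs K, v ≠ 0 → ∃ b, eval v b ≠ 0 ∧ b * c ∈ K) : c ∈ satIdeal K := by
  let D : Ideal (MvPolynomial (Fin (N+1)) ℂ) := Submodule.colon K {c}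
  have mD : ∀ b, b ∈ D ↔ b * c ∈ K := fun b => by
    rw [Submodule.mem_colon_singleton, smul_eq_mul]
  have hrad : ∀ i, (MvPolynomial.X i : MvPolynomial (Fin (N+1)) ℂ) ∈ D.radical := fun i =>
    mem_radical_of_vanish fun v hv => by
      by_cases h0 : v = 0
      · rw [h0]; simp
      · exfalso
        obtain ⟨b, hb, hbc⟩ := h v (Zs_anti (fun x hx => (mD x).2 (K.mul_mem_right _ hx)) hv) h0
        exact hb (hv b ((mD b).2 hbc))
  choose k hk using hrad
  refine ⟨∑ i, k i, fun i => ?_⟩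
  rw [← mD]
  exact Ideal.mem_of_dvd _ (pow_dvd_pow _ (Finset.single_le_sum (fun _ _ => Nat.zero_le _) (Finset.mem_univ i))) (hk i)

/-- Converse of `mem_satIdeal_of_local`. -/
theorem exists_ne_zero_of_mem_sat {K : Ideal (MvPolynomial (Fin (N+1)) ℂ)} {c : MvPolynomial (Fin (N+1)) ℂ}
    (h : c ∈ satIdeal K) {w : Aff N} (hw : w ≠ 0) : ∃ b, eval w b ≠ 0 ∧ b * c ∈ K := by
  obtain ⟨k, hk⟩ := h
  obtain ⟨i, hi⟩ := Function.ne_iff.1 hw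
  exact ⟨_, by rw [map_pow, eval_X]; exact pow_ne_zero _ hi, hk i⟩

/-- Every hyperplane section is reduced if the cone over the secant variety has dimension at most `2
* n`. -/
theorem satIdeal_isRadical (hX : SmoothVariety X n) (hnd : Nondeg X)
    (he : adim (cone (secantVar X)) ≤ (((2 * n : ℕ) : ℕ∞) : WithBot ℕ∞))
    {η : Module.Dual ℂ (Aff N)} (hη : η ≠ 0) :
    (satIdeal (vanishIdeal (cone X) ⊔ Ideal.span {lf η})).IsRadical := by
  rintro c ⟨m, hm⟩
  refine mem_satIdeal_of_local fun v hv hv0 => ?_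
  by_contra! hcon
  haveI := vanishIdeal_isPrime hX.2.1
  have hvI : v ∈ Zs (vanishIdeal (cone X)) := Zs_anti le_sup_left hv
  have hvX : v ∈ cone X := by rwa [Zs_vanishIdeal hX.1] at hvI
  obtain ⟨A, _, _, _, φ, u, hL, hu, -⟩ := exists_regular_local (vanishIdeal (cone X)) (d := n + 1) hvI
    (by rw [dim_quot_eq_adim hX.1, hX.2.2.1]; rfl) (finrank_tanSp hX hvX hv0)
  haveI := hL.isNoetherianRing
  have hmem : ∀ s, φ s ∈ Ideal.span {φ (lf η)} ↔
      ∃ a, eval v a ≠ 0 ∧ a * s ∈ vanishIdeal (cone X) ⊔ Ideal.span {lf η} := fun s => by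
    rw [sup_comm, ← hL.mem_map_iff, Ideal.map_span, Set.image_singleton]
  have hh : φ (lf η) ≠ 0 := by
    intro h
    obtain ⟨a, ha, haI⟩ := (hL.ker _).1 h
    rcases Ideal.IsPrime.mem_or_mem inferInstance haI with h | h
    · exact ha (hvI a h)
    · exact lf_notMem hnd hη h
  obtain ⟨p, hp, hpr⟩ := hu.exists_prime_one hh (c := φ c) (fun h => by
    obtain ⟨a, ha, hac⟩ := (hmem c).1 h
    exact hcon a ha hac)
  haveI := p.head.2
  -- `Q` defines a subvariety through `v` of dimension at least `n` and contains the annihilator of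
  -- the class of `c` modulo `η` in the local ring at `v`
  set Q := p.head.asIdeal.comap φ with hQ
  haveI : Q.IsPrime := Ideal.IsPrime.comap φ
  have hKQ : vanishIdeal (cone X) ⊔ Ideal.span {lf η} ≤ Q := by
    refine sup_le (hL.le_comap _) ?_
    rw [Ideal.span_singleton_le_iff_mem]
    exact hpr _ (Ideal.mul_mem_right _ _ (Ideal.mem_span_singleton_self _))
  have hvQ : v ∈ Zs Q := mem_Zs_iff_le.2 (hL.comap_le p.head.2.ne_top)
  obtain ⟨w, hw, -, hw0, B, _, _, _, χ, u', hL', hu'⟩ := exists_smooth_point (k := n) hX hnd he (by omega) hη Q hKQ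
    hvQ hv0 (by have := hL.length_le p; rwa [hp] at this) (d := 1)
    (fun h => Ideal.IsPrime.ne_top (I := Q) inferInstance ((Ideal.eq_top_iff_one _).2 h))
  haveI := hL'.isNoetherianRing
  haveI := hu'.isDomain
  have h1 : χ (c ^ m) = 0 := (hL'.ker _).2 (exists_ne_zero_of_mem_sat hm hw0)
  rw [map_pow] at h1
  obtain ⟨b, hb, hbK⟩ := (hL'.ker c).1 (eq_zero_of_pow_eq_zero h1)
  -- `c` vanishes on the section near the smooth point `w`, so some `b` with `b w ≠ 0` annihilates
  -- it and hence lies in `Q`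
  refine hb (hw b (hpr _ ?_))
  rw [← map_mul, hmem]
  exact ⟨1, by simp, by rwa [one_mul]⟩

end Sections
end HypSec

/-! ### Normality -/

namespace HypSec
open IsLocalRing

/-- Finitely many elements of a local ring have a common denominator. -/
theorem LocAt.common_den {ι : Type} {K : Ideal (MvPolynomial ι ℂ)} {w : ι → ℂ} {B : Type} [CommRing B]
    [Algebra ℂ B] {φ : MvPolynomial ι ℂ →ₐ[ℂ] B} (hL : LocAt K w φ) {κ : Type} [Fintype κ] (b : κ → B) :
    ∃ (x : MvPolynomial ι ℂ) (s : κ → MvPolynomial ι ℂ), eval w x ≠ 0 ∧ ∀ j, b j * φ x = φ (s j) := by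
  classical
  choose s a ha hs using fun j => hL.surj (b j)
  refine ⟨∏ j, a j, fun j => s j * ∏ i ∈ Finset.univ.erase j, a i, ?_, fun j => ?_⟩
  · rw [map_prod]; exact Finset.prod_ne_zero_iff.2 fun j _ => ha j
  · rw [← Finset.mul_prod_erase _ _ (Finset.mem_univ j), map_mul, map_mul, ← hs j, mul_assoc]

section Sections
variable {N n : ℕ} {X : Set (Proj N)}

/-- The local rings of a hyperplane section away from the origin are integrally closed in their
total rings of fractions if the cone over the secant variety has dimension at most `2 * n - 1`,
where `n = n' + 1`. -/
theorem iNormal_section {n' : ℕ} (hn : n = n' + 1) (hX : SmoothVariety X n) (hnd : Nondeg X)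
    (he : adim (cone (secantVar X)) ≤ (((n' + n : ℕ) : ℕ∞) : WithBot ℕ∞))
    {η : Module.Dual ℂ (Aff N)} (hη : η ≠ 0) {v : Aff N} (hv0 : v ≠ 0) {B : Type} [CommRing B]
    [Algebra ℂ B] {ψ : MvPolynomial (Fin (N+1)) ℂ →ₐ[ℂ] B}
    (hB : LocAt (vanishIdeal (cone X) ⊔ Ideal.span {lf η}) v ψ) : INormal B := by
  intro m α P R hR heq
  have hv := hB.pt
  haveI := vanishIdeal_isPrime hX.2.1
  have hvI : v ∈ Zs (vanishIdeal (cone X)) := Zs_anti le_sup_left hv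
  have hvX : v ∈ cone X := by rwa [Zs_vanishIdeal hX.1] at hvI
  -- clear denominators
  obtain ⟨x, s, hx, hs⟩ := hB.common_den (κ := Option (Option (Fin m)))
    (fun o => o.elim P fun o => o.elim R fun j => α j)
  set p := s none with hp
  set q := s (some none) with hq
  have hP : P * ψ x = ψ p := hs none
  have hRq : R * ψ x = ψ q := hs (some none)
  have hα : ∀ j : Fin m, α j * ψ x = ψ (s (some (some j))) := fun j => hs (some (some j))
  have hxu := hB.unit x hx
  have hqn : ψ q ∈ nonZeroDivisors B := by
    rw [← hRq]; exact mul_mem hR hxu.mem_nonZeroDivisors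
  have heq2 : ψ (x * p ^ m + ∑ j : Fin m, s (some (some j)) * p ^ (j : ℕ) * q ^ (m - j)) = 0 := by
    rw [map_add, map_mul, map_pow, map_sum]
    have h1 : ∀ j : Fin m, ψ (s (some (some j)) * p ^ (j : ℕ) * q ^ (m - j)) =
        ψ x ^ (m + 1) * (α j * P ^ (j : ℕ) * R ^ (m - j)) := fun j => by
      rw [map_mul, map_mul, map_pow, map_pow, ← hα, ← hP, ← hRq, mul_pow, mul_pow]
      have : ψ x ^ (m + 1) = ψ x ^ (j : ℕ) * ψ x ^ (m - j) * ψ x := by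
        rw [← pow_add, ← pow_succ]; congr 1; omega
      rw [this]; ring
    rw [Finset.sum_congr rfl fun j _ => h1 j, ← Finset.mul_sum,
      Fin.sum_univ_eq_sum_range (fun j => α j * P ^ j * R ^ (m - j)), ← hP,
      show ψ x * (P * ψ x) ^ m = ψ x ^ (m + 1) * P ^ m by ring, ← mul_add, heq, mul_zero]
  obtain ⟨y, hy, hyK⟩ := (hB.ker _).1 heq2
  by_contra hdvd
  obtain ⟨A, _, _, _, φ, u, hL, hu, -⟩ := exists_regular_local (vanishIdeal (cone X)) (d := n' + 2) hvI
    (by rw [dim_quot_eq_adim hX.1, hX.2.2.1, hn]; rfl) (by rw [finrank_tanSp hX hvX hv0, hn])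
  haveI := hL.isNoetherianRing
  have hmem : ∀ s, φ s ∈ Ideal.span {φ (lf η)} ↔ ψ s = 0 := fun s => by
    rw [hB.ker, sup_comm, ← hL.mem_map_iff, Ideal.map_span, Set.image_singleton]
  have hmem2 : ∀ s, φ s ∈ Ideal.span {φ (lf η), φ q} ↔ ψ q ∣ ψ s := fun s => by
    have e : Ideal.span {φ (lf η), φ q} = (Ideal.span {lf η, q}).map φ := by
      rw [Ideal.map_span, Set.image_pair]
    have e2 : Ideal.span {ψ q} = (Ideal.span {q}).map ψ := by
      rw [Ideal.map_span, Set.image_singleton]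
    rw [e, hL.mem_map_iff, ← Ideal.mem_span_singleton, e2, hB.mem_map_iff, Ideal.span_insert]
    rw [sup_comm (vanishIdeal _), ← sup_assoc, sup_comm (Ideal.span {q})]
  have hh : φ (lf η) ≠ 0 := by
    intro h
    obtain ⟨a, ha, haI⟩ := (hL.ker _).1 h
    rcases Ideal.IsPrime.mem_or_mem inferInstance haI with h | h
    · exact ha (hvI a h)
    · exact lf_notMem hnd hη h
  obtain ⟨c, hc, hcr⟩ := hu.exists_prime_two hh (q := φ q) (c := φ p) (fun a ha => by
    obtain ⟨t, d, hd, htd⟩ := hL.surj a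
    refine hL.mem_of_mul hd ?_
    have h1 : φ (q * t) ∈ Ideal.span {φ (lf η)} := by
      rw [map_mul, ← htd, ← mul_assoc]; exact Ideal.mul_mem_right _ _ ha
    rw [htd, hmem]
    rw [hmem, map_mul] at h1
    exact (mem_nonZeroDivisors_iff.1 hqn).1 _ h1) (fun h => by
    rw [hmem2, ← hP, ← hRq] at h
    exact hdvd (by
      obtain ⟨z, hz⟩ := h
      exact ⟨z, hxu.mul_right_cancel (by rw [hz]; ring)⟩))
  haveI := c.head.2
  -- `Q` defines a subvariety through `v` of dimension at least `n'` and contains each `b` for which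
  -- `q` divides `b * p` in the local ring at `v`
  set Q := c.head.asIdeal.comap φ with hQ
  haveI : Q.IsPrime := Ideal.IsPrime.comap φ
  have hQm : ∀ b, ψ q ∣ ψ b * ψ p → b ∈ Q := fun b hb => hcr _ (by
    rw [← map_mul, hmem2, map_mul]; exact hb)
  have hKQ : vanishIdeal (cone X) ⊔ Ideal.span {lf η} ≤ Q := fun f hf => hQm f (by
    rw [(hB.ker f).2 ⟨1, by simp, by rwa [one_mul]⟩, zero_mul]; exact dvd_zero _)
  have hvQ : v ∈ Zs Q := mem_Zs_iff_le.2 (hL.comap_le c.head.2.ne_top)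
  have hxy : x * y ∉ Q := fun h => by
    have := hvQ _ h
    rw [map_mul] at this
    exact mul_ne_zero hx hy this
  obtain ⟨w, hw, hwxy, hw0, Bw, _, _, _, χ, u', hL', hu'⟩ := exists_smooth_point (k := n') hX hnd he le_rfl hη Q hKQ
    hvQ hv0 (by have := hL.length_le c; rwa [hc] at this) hxy
  rw [map_mul] at hwxy
  haveI := hL'.isNoetherianRing
  haveI := hu'.isDomain
  have hχq : χ q ≠ 0 := by
    intro h
    obtain ⟨b, hb, hbK⟩ := (hL'.ker q).1 h
    have h1 : ψ q * ψ b = 0 := by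
      rw [← map_mul, mul_comm]; exact (hB.ker _).2 ⟨1, by simp, by rwa [one_mul]⟩
    have h2 := (mem_nonZeroDivisors_iff.1 hqn).1 _ h1
    exact hb (hw b (hQm b (by rw [h2, zero_mul]; exact dvd_zero _)))
  obtain ⟨z, hz⟩ := (hL'.unit x (left_ne_zero_of_mul hwxy)).exists_left_inv
  -- the local ring at the smooth point `w` is normal, and the integral equation still holds there
  have hdiv : χ q ∣ χ p := by
    let γ : ℕ → Bw := fun j => if h : j < m then z * χ (s (some (some ⟨j, h⟩))) else 0
    have hγ : ∀ j : Fin m, γ j = z * χ (s (some (some j))) := fun j => dif_pos j.2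
    refine hu'.aiNormal.iNormal m γ _ _ (mem_nonZeroDivisors_of_ne_zero hχq) ?_
    have h1 := (hL'.ker _).2 ⟨y, right_ne_zero_of_mul hwxy, hyK⟩
    have h2 := congrArg (z * ·) h1
    simp only [mul_zero, map_add, map_mul, map_pow, map_sum, mul_add, Finset.mul_sum] at h2
    rw [← mul_assoc, hz, one_mul] at h2
    rw [← Fin.sum_univ_eq_sum_range (fun j => γ j * χ p ^ j * χ q ^ (m - j))]
    refine Eq.trans ?_ h2
    congr 1
    refine Finset.sum_congr rfl fun j _ => ?_
    rw [hγ]; ring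
  obtain ⟨r, hr⟩ := hdiv
  obtain ⟨t, d, hd, htd⟩ := hL'.surj r
  have h3 : χ (d * p - q * t) = 0 := by
    rw [map_sub, map_mul, map_mul, ← htd, hr]; ring
  obtain ⟨b, hb, hbK⟩ := (hL'.ker _).1 h3
  have h4 : ψ (b * (d * p - q * t)) = 0 := (hB.ker _).2 ⟨1, by simp, by rwa [one_mul]⟩
  -- `d * p` is a multiple of `q` up to the factor `b`, although `b * d` does not vanish at `w`
  have h5 : b * d ∈ Q := hQm _ ⟨ψ b * ψ t, by
    simp only [map_mul, map_sub] at h4 ⊢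
    linear_combination h4⟩
  have h6 := hw _ h5
  rw [map_mul] at h6
  exact mul_ne_zero hb hd h6

/-- Every hyperplane section is normal. A prime of the coordinate ring not containing the irrelevant
ideal lies under the maximal ideal of a point `v ≠ 0`, so the local ring at this prime is a
localization of the one at `v`. -/
theorem projNormal_section {n' : ℕ} (hn : n = n' + 1) (hX : SmoothVariety X n) (hnd : Nondeg X)
    (he : adim (cone (secantVar X)) ≤ (((n' + n : ℕ) : ℕ∞) : WithBot ℕ∞))
    {η : Module.Dual ℂ (Aff N)} (hη : η ≠ 0) :
    ProjNormal (satIdeal (vanishIdeal (cone X) ⊔ Ideal.span {lf η})) := by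
  have hrad := satIdeal_isRadical hX hnd (he.trans (by
    have h : n' + n ≤ 2 * n := by omega
    exact_mod_cast h)) hη
  generalize hJ : satIdeal (vanishIdeal (cone X) ⊔ Ideal.span {lf η}) = J at hrad
  intro P hP hirr
  obtain ⟨i, hi⟩ : ∃ i, Ideal.Quotient.mk J (MvPolynomial.X i) ∉ P := by
    by_contra! hc
    apply hirr
    rw [Ideal.map_span, Ideal.span_le]
    rintro _ ⟨_, ⟨i, rfl⟩, rfl⟩
    exact hc i
  haveI : (P.comap (Ideal.Quotient.mk J)).IsPrime := Ideal.IsPrime.comap _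
  obtain ⟨v, hv, hvi⟩ := exists_mem_Zs_of_notMem (J := P.comap (Ideal.Quotient.mk J)) hi
  have hv0 : v ≠ 0 := by
    rintro rfl
    apply hvi; simp
  have hJP : J ≤ P.comap (Ideal.Quotient.mk J) := fun s hs => by
    rw [Ideal.mem_comap, Ideal.Quotient.eq_zero_iff_mem.2 hs]; exact zero_mem _
  have hJv : J ≤ ptIdeal v := hJP.trans (mem_Zs_iff_le.1 hv)
  set M := (ptIdeal v).map (Ideal.Quotient.mk J) with hM
  have hMc : M.comap (Ideal.Quotient.mk J) = ptIdeal v := by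
    rw [hM, Ideal.comap_map_of_surjective _ Ideal.Quotient.mk_surjective, ← RingHom.ker_eq_comap_bot,
      Ideal.mk_ker, sup_eq_left]
    exact hJv
  haveI : M.IsPrime := Ideal.map_isPrime_of_surjective Ideal.Quotient.mk_surjective (by rwa [Ideal.mk_ker])
  have hPM : P ≤ M := by
    intro b hb
    obtain ⟨s, rfl⟩ := Ideal.Quotient.mk_surjective b
    exact Ideal.mem_map_of_mem _ (mem_Zs_iff_le.1 hv hb)
  have hL := locAt_localization (K := vanishIdeal (cone X) ⊔ Ideal.span {lf η}) (v := v)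
    (by rw [← hJ]; exact fun s hs => ⟨0, fun i => by simpa using hs⟩) hJv
    (fun s hs => exists_ne_zero_of_mem_sat (by rwa [hJ]) hv0) M hMc
  have hN := iNormal_section hn hX hnd he hη hv0 hL
  haveI := hL.isNoetherianRing
  haveI : IsReduced (MvPolynomial (Fin (N+1)) ℂ ⧸ J) := (Ideal.isRadical_iff_quotient_reduced J).1 hrad
  haveI : IsReduced (Localization.AtPrime M) := inferInstanceAs (IsReduced (Localization M.primeCompl))
  haveI := hN.isDomain
  haveI := hN.isIntegrallyClosed
  have hle : M.primeCompl ≤ P.primeCompl := fun b hb h => hb (hPM h)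
  letI := IsLocalization.localizationAlgebraOfSubmonoidLe (Localization.AtPrime M) (Localization.AtPrime P) _ _ hle
  haveI := IsLocalization.localization_isScalarTower_of_submonoid_le (Localization.AtPrime M) (Localization.AtPrime P) _ _ hle
  haveI := IsLocalization.isLocalization_of_submonoid_le (Localization.AtPrime M) (Localization.AtPrime P) _ _ hle
  have hnz : P.primeCompl.map (algebraMap _ (Localization.AtPrime M)) ≤ nonZeroDivisors (Localization.AtPrime M) := by
    rintro _ ⟨b, hb, rfl⟩
    refine mem_nonZeroDivisors_of_ne_zero fun h => ?_
    obtain ⟨c, hc⟩ := (IsLocalization.map_eq_zero_iff M.primeCompl _ b).1 h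
    have : (c : _) * b ∈ P := by rw [hc]; exact zero_mem _
    rcases hP.mem_or_mem this with h | h
    · exact hle c.2 h
    · exact hb h
  exact ⟨IsLocalization.isDomain_of_le_nonZeroDivisors (Localization.AtPrime P) hnz,
    isIntegrallyClosed_of_isLocalization (R := Localization.AtPrime M) (S := Localization.AtPrime P) _ hnz⟩

theorem adim_cone_nonneg (Y : Set (Proj N)) : 0 ≤ adim (cone Y) := by
  have h := dim_quot_le_adim (J := ptIdeal (0 : Aff N)) (V := cone Y) (by
    intro x hx
    have : x = 0 := by
      funext i
      have := hx (MvPolynomial.X i) (by rw [mem_ptIdeal]; simp)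
      simpa using this
    rw [this]; exact zero_mem_cone _)
  exact ringKrullDim_nonneg_of_nontrivial.trans h

theorem sections_reduced_normal {n : ℕ} (X : Set (Proj N))
    (hX : SmoothVariety X n) (hnd : Nondeg X) :
    (adim (cone (secantVar X)) ≤ ((2 * n : ℕ) : WithBot ℕ∞) →
      ∀ h : MvPolynomial (Fin (N + 1)) ℂ, h ∈ MvPolynomial.homogeneousSubmodule (Fin (N + 1)) ℂ 1 → h ≠ 0 →
        (satIdeal (vanishIdeal (cone X) ⊔ Ideal.span {h})).IsRadical) ∧
    (adim (cone (secantVar X)) + 1 ≤ ((2 * n : ℕ) : WithBot ℕ∞) →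
      ∀ h : MvPolynomial (Fin (N + 1)) ℂ, h ∈ MvPolynomial.homogeneousSubmodule (Fin (N + 1)) ℂ 1 → h ≠ 0 →
         ProjNormal (satIdeal (vanishIdeal (cone X) ⊔ Ideal.span {h}))) := by
  have hlf : ∀ h : MvPolynomial (Fin (N + 1)) ℂ, h ∈ homogeneousSubmodule (Fin (N + 1)) ℂ 1 → h ≠ 0 →
      ∃ η : Module.Dual ℂ (Aff N), η ≠ 0 ∧ h = lf η := by
    intro h h1 h0
    obtain ⟨η, rfl⟩ := exists_lf h1
    refine ⟨η, ?_, rfl⟩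
    rintro rfl
    exact h0 (MvPolynomial.funext fun x => by rw [eval_lf]; simp)
  refine ⟨fun he h h1 h0 => ?_, fun he h h1 h0 => ?_⟩
  · obtain ⟨η, hη, rfl⟩ := hlf h h1 h0
    exact satIdeal_isRadical hX hnd he hη
  · obtain ⟨η, hη, rfl⟩ := hlf h h1 h0
    have h0 := adim_cone_nonneg (secantVar X)
    -- the cone over `SX` is non-empty, so its dimension is non-negative and `n ≥ 1`
    obtain ⟨n', hn, he'⟩ : ∃ n', n = n' + 1 ∧
        adim (cone (secantVar X)) ≤ (((n' + n : ℕ) : ℕ∞) : WithBot ℕ∞) := by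
      generalize adim (cone (secantVar X)) = a at he h0
      induction a with
      | bot => simp at h0
      | coe a =>
        induction a with
        | top =>
          have h2 : (⊤ : ℕ∞) + 1 ≤ ((2 * n : ℕ) : ℕ∞) := WithBot.coe_le_coe.1 he
          rw [top_add, top_le_iff] at h2
          exact absurd h2 (ENat.coe_ne_top _)
        | coe a =>
          have h1 : (a : ℕ∞) + 1 ≤ ((2 * n : ℕ) : ℕ∞) := WithBot.coe_le_coe.1 he
          have h2 : a + 1 ≤ 2 * n := by exact_mod_cast h1
          refine ⟨n - 1, by omega, ?_⟩
          have h3 : a ≤ n - 1 + n := by omega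
          exact_mod_cast h3
    exact projNormal_section hn hX hnd he' hη

end Sections
end HypSec

/-- If `dim SX ≤ 2n - 1` then every hyperplane section of `X` is reduced;
if moreover `dim SX ≤ 2n - 2` then every hyperplane section is normal
(secant-variety dimensions are expressed via the cone: `dim SX ≤ 2n - 1` iff
`adim (cone SX) ≤ 2n`, and `dim SX ≤ 2n - 2` iff `adim (cone SX) + 1 ≤ 2n`). -/
theorem hyperplane_sections_reduced_normal {N n : ℕ} (X : Set (Proj N))
    (hX : SmoothVariety X n) (hnd : Nondeg X) :
    (adim (cone (secantVar X)) ≤ ((2 * n : ℕ) : WithBot ℕ∞) →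
      ∀ h : MvPolynomial (Fin (N + 1)) ℂ,
        h ∈ MvPolynomial.homogeneousSubmodule (Fin (N + 1)) ℂ 1 → h ≠ 0 →
        (satIdeal (vanishIdeal (cone X) ⊔ Ideal.span {h})).IsRadical) ∧
    (adim (cone (secantVar X)) + 1 ≤ ((2 * n : ℕ) : WithBot ℕ∞) →
      ∀ h : MvPolynomial (Fin (N + 1)) ℂ,
        h ∈ MvPolynomial.homogeneousSubmodule (Fin (N + 1)) ℂ 1 → h ≠ 0 →
        ProjNormal (satIdeal (vanishIdeal (cone X) ⊔ Ideal.span {h}))) :=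
  HypSec.sections_reduced_normal X hX hnd
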